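/- arXiv:1404.0999 — 6 statements merged into one kernel-verified Lean document; each statement's English description precedes it below -/
import Mathlib

section
/- Let (Ω, A, P) be a probability space, X, Y : Ω → ℝ^d integrable random vectors, and Z : Ω → S a random element in a measurable space S. Then X | Z ≤icx Y | Z if and only if X and Y admit a Z-conditional coupling (X̂, Ŷ, Ẑ) such that X̂ ≤ E(Ŷ | σ(X̂, Ẑ)) coordinatewise almost surely. -/
open MeasureTheory ProbabilityTheory Filter

noncomputable section

abbrev Euc (d : ℕ) : Type := EuclideanSpace ℝ (Fin d)

def FiniteFirstMoment {d : ℕ} (μ : Measure (Euc d)) : Prop :=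
  Integrable (fun x => x) μ

def ConvexOrder {d : ℕ} (μ ν : Measure (Euc d)) : Prop :=
  ∀ φ : Euc d → ℝ, ConvexOn ℝ Set.univ φ → Integrable φ μ → Integrable φ ν →
    ∫ x, φ x ∂μ ≤ ∫ x, φ x ∂ν

def CoordMono {d : ℕ} (φ : Euc d → ℝ) : Prop :=
  ∀ x y : Euc d, (∀ i, x i ≤ y i) → φ x ≤ φ y

def IncConvexOrder {d : ℕ} (μ ν : Measure (Euc d)) : Prop :=
  ∀ φ : Euc d → ℝ, ConvexOn ℝ Set.univ φ → CoordMono φ → Integrable φ μ → Integrable φ ν →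
    ∫ x, φ x ∂μ ≤ ∫ x, φ x ∂ν

def IsCoupling {d : ℕ} (lam : Measure (Euc d × Euc d)) (μ ν : Measure (Euc d)) : Prop :=
  lam.map Prod.fst = μ ∧ lam.map Prod.snd = ν

def fstSigma (d : ℕ) : MeasurableSpace (Euc d × Euc d) :=
  MeasurableSpace.comap Prod.fst inferInstance

def IsMartingaleCoupling {d : ℕ} (lam : Measure (Euc d × Euc d)) : Prop :=
  lam[(fun p : Euc d × Euc d => p.2) | fstSigma d] =ᵐ[lam] (fun p => p.1)

def IsSubmartingaleCoupling {d : ℕ} (lam : Measure (Euc d × Euc d)) : Prop :=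
  ∀ᵐ p ∂lam, ∀ i, p.1 i ≤ (lam[(fun q : Euc d × Euc d => q.2) | fstSigma d]) p i
def CondCXLe {d : ℕ} {Ω : Type} {mΩ : MeasurableSpace Ω} (P : Measure Ω)
    (m : MeasurableSpace Ω) (X Y : Ω → Euc d) : Prop :=
  ∀ φ : Euc d → ℝ, ConvexOn ℝ Set.univ φ →
    Integrable (fun ω => φ (X ω)) P → Integrable (fun ω => φ (Y ω)) P →
    P[(fun ω => φ (X ω)) | m] ≤ᵐ[P] P[(fun ω => φ (Y ω)) | m]

def CondICXLe {d : ℕ} {Ω : Type} {mΩ : MeasurableSpace Ω} (P : Measure Ω)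
    (m : MeasurableSpace Ω) (X Y : Ω → Euc d) : Prop :=
  ∀ φ : Euc d → ℝ, ConvexOn ℝ Set.univ φ → CoordMono φ →
    Integrable (fun ω => φ (X ω)) P → Integrable (fun ω => φ (Y ω)) P →
    P[(fun ω => φ (X ω)) | m] ≤ᵐ[P] P[(fun ω => φ (Y ω)) | m]


lemma dom_measure {α : Type*} [MeasurableSpace α] (ν : Measure α) [IsFiniteMeasure ν]
    (N : Set α → ℝ) (nonneg : ∀ s, 0 ≤ N s)
    (hadd : ∀ s t, Disjoint s t → N (s ∪ t) = N s + N t)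
    (dom : ∀ s, MeasurableSet s → N s ≤ ν.real s) :
    ∃ m : Measure α, ∀ s, MeasurableSet s → m s = ENNReal.ofReal (N s) := by
  have N0 : N ∅ = 0 := by
    have := hadd ∅ ∅ (by simp)
    simp at this; exact this
  refine ⟨Measure.ofMeasurable (fun s _ => ENNReal.ofReal (N s)) (by simp [N0]) ?_, ?_⟩
  · intro f hf hd
    have part : ∀ n : ℕ, N (⋃ i ∈ Finset.range n, f i) = ∑ i ∈ Finset.range n, N (f i) := by
      intro n
      induction n with
      | zero => simp [N0]
      | succ n ih =>
        rw [Finset.sum_range_succ, ← ih, ← hadd]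
        · congr 1
          rw [Finset.range_add_one, Finset.set_biUnion_insert, Set.union_comm]
        · rw [Set.disjoint_iUnion₂_left]
          intro i hi
          exact hd (by simp at hi; omega)
    have partν : ∀ n : ℕ, ν.real (⋃ i ∈ Finset.range n, f i)
        = ∑ i ∈ Finset.range n, ν.real (f i) := by
      intro n
      exact measureReal_biUnion_finset (fun i _ j _ hij => hd hij) (fun i _ => hf i)
    have sumν : Tendsto (fun n => ∑ i ∈ Finset.range n, ν.real (f i)) atTop
        (nhds (ν.real (⋃ i, f i))) := by
      have h := measure_iUnion (μ := ν) hd hf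
      have h' : ∑' i, ν (f i) ≠ ⊤ := by rw [← h]; exact measure_ne_top _ _
      have h2 := (ENNReal.hasSum_toReal h').tendsto_sum_nat
      rw [← ENNReal.tsum_toReal_eq (fun i => measure_ne_top _ _), ← h] at h2
      exact h2
    have key : HasSum (fun i => N (f i)) (N (⋃ i, f i)) := by
      rw [hasSum_iff_tendsto_nat_of_nonneg (fun i => nonneg _)]
      have h1 : ∀ n, N (⋃ i, f i) - ∑ i ∈ Finset.range n, N (f i) =
          N ((⋃ i, f i) \ ⋃ i ∈ Finset.range n, f i) := by
        intro n
        rw [← part, sub_eq_iff_eq_add, ← hadd _ _ Set.disjoint_sdiff_left, Set.sdiff_union_of_subset]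
        exact Set.iUnion₂_subset fun i _ => Set.subset_iUnion f i
      have h2 : ∀ n, N ((⋃ i, f i) \ ⋃ i ∈ Finset.range n, f i) ≤
          ν.real (⋃ i, f i) - ∑ i ∈ Finset.range n, ν.real (f i) := by
        intro n
        have hm : MeasurableSet (⋃ i ∈ Finset.range n, f i) :=
          Finset.measurableSet_biUnion _ fun i _ => hf i
        refine (dom _ ((MeasurableSet.iUnion hf).diff hm)).trans ?_
        rw [← partν, measureReal_sdiff (Set.iUnion₂_subset fun i _ => Set.subset_iUnion f i) hm]
      have h3 : Tendsto (fun n => N (⋃ i, f i) - ∑ i ∈ Finset.range n, N (f i)) atTop (nhds 0) := by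
        refine squeeze_zero (fun n => ?_) (fun n => (h1 n).le.trans (h2 n)) ?_
        · rw [h1]; exact nonneg _
        · simpa using (tendsto_const_nhds (x := ν.real (⋃ i, f i))).sub sumν
      simpa using (tendsto_const_nhds (x := N (⋃ i, f i))).sub h3
    rw [← key.tsum_eq, ENNReal.ofReal_tsum_of_nonneg (fun i => nonneg _) key.summable]
  · intro s hs
    rw [Measure.ofMeasurable_apply s hs]

lemma bimeasure_real {W : Type*} [MeasurableSpace W] (Q : Measure W) [IsProbabilityMeasure Q]
    (μ : Measure ℝ) [IsProbabilityMeasure μ] (M : Set ℝ → Set W → ℝ)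
    (nonneg : ∀ A D, 0 ≤ M A D)
    (addL : ∀ A A' D, Disjoint A A' → M (A ∪ A') D = M A D + M A' D)
    (addR : ∀ A D D', Disjoint D D' → M A (D ∪ D') = M A D + M A D')
    (univL : ∀ D, MeasurableSet D → M Set.univ D = Q.real D)
    (univR : ∀ A, MeasurableSet A → M A Set.univ = μ.real A) :
    ∃ π : Measure (ℝ × W), ∀ A D, MeasurableSet A → MeasurableSet D →
      π (A ×ˢ D) = ENNReal.ofReal (M A D) := by
  have monoL : ∀ A A' D, A ⊆ A' → M A D ≤ M A' D := by
    intro A A' D h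
    have := addL A (A' \ A) D Set.disjoint_sdiff_right
    rw [Set.union_sdiff_cancel h] at this
    linarith [nonneg (A' \ A) D]
  have monoR : ∀ A D D', D ⊆ D' → M A D ≤ M A D' := by
    intro A D D' h
    have := addR A D (D' \ D) Set.disjoint_sdiff_right
    rw [Set.union_sdiff_cancel h] at this
    linarith [nonneg A (D' \ D)]
  have hL : ∀ q : ℚ, ∃ m : Measure W, ∀ D, MeasurableSet D →
      m D = ENNReal.ofReal (M (Set.Iic (q : ℝ)) D) := fun q =>
    dom_measure Q (fun D => M (Set.Iic (q : ℝ)) D) (fun _ => nonneg _ _)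
      (fun _ _ h => addR _ _ _ h)
      (fun D hD => (monoL _ _ _ (Set.subset_univ _)).trans (univL D hD).le)
  have hR : ∀ D : Set W, ∃ m : Measure ℝ, ∀ A, MeasurableSet A →
      m A = ENNReal.ofReal (M A D) := fun D =>
    dom_measure μ (fun A => M A D) (fun _ => nonneg _ _)
      (fun _ _ h => addL _ _ _ h)
      (fun A hA => (monoR _ _ _ (Set.subset_univ _)).trans (univR A hA).le)
  choose m hm using hL
  choose n hn using hR
  have mQ : ∀ q, m q ≤ Q := by
    intro q
    refine Measure.le_iff.2 fun D hD => ?_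
    rw [hm q D hD, ← ofReal_measureReal]
    exact ENNReal.ofReal_le_ofReal ((monoL _ _ _ (Set.subset_univ _)).trans (univL D hD).le)
  have finm : ∀ q, IsFiniteMeasure (m q) := fun q => isFiniteMeasure_of_le Q (mQ q)
  let F : ℚ → W → ENNReal := fun q => (m q).rnDeriv Q
  have Fm : ∀ q, Measurable (F q) := fun q => Measure.measurable_rnDeriv _ _
  have Fint : ∀ q D, MeasurableSet D → ∫⁻ w in D, F q w ∂Q = m q D := by
    intro q D hD
    exact Measure.setLIntegral_rnDeriv (Measure.absolutelyContinuous_of_le (mQ q)) D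
  have Ftot : ∀ q : ℚ, ∫⁻ w, F q w ∂Q = μ (Set.Iic (q : ℝ)) := by
    intro q
    have := Fint q Set.univ MeasurableSet.univ
    rw [Measure.restrict_univ] at this
    rw [this, hm q _ MeasurableSet.univ, univR _ measurableSet_Iic, ofReal_measureReal]
  have Fmono : ∀ᵐ w ∂Q, Monotone fun q => F q w := by
    simp_rw [Monotone, ae_all_iff]
    refine fun r r' hrr' ↦ ae_le_of_forall_setLIntegral_le_of_sigmaFinite (Fm r)
      fun s hs _ ↦ ?_
    rw [Fint r s hs, Fint r' s hs, hm r s hs, hm r' s hs]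
    exact ENNReal.ofReal_le_ofReal (monoL _ _ _ (Set.Iic_subset_Iic.2 (by exact_mod_cast hrr')))
  have Fle : ∀ᵐ w ∂Q, ∀ q, F q w ≤ 1 := by
    rw [ae_all_iff]
    refine fun r ↦ ae_le_of_forall_setLIntegral_le_of_sigmaFinite (Fm r) fun s hs _ ↦ ?_
    rw [Fint r s hs]
    simpa using mQ r s
  have Finf : ∀ᵐ w ∂Q, ∀ t : ℚ, ⨅ r : Set.Ioi t, F r w = F t w := by
    rw [ae_all_iff]
    intro t
    have hle : F t ≤ᵐ[Q] fun w => ⨅ r : Set.Ioi t, F r w := by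
      filter_upwards [Fmono] with w hw
      exact le_iInf fun r => hw (le_of_lt r.2)
    refine (ae_eq_of_ae_le_of_lintegral_le hle ?_ ?_ ?_).symm
    · rw [Ftot]; exact measure_ne_top _ _
    · exact (Measurable.iInf fun r : Set.Ioi t => Fm r).aemeasurable
    · rw [Ftot]
      refine ENNReal.le_of_forall_pos_le_add fun ε hε _ => ?_
      have h1 := (cdf μ).iInf_rat_gt_eq (t : ℝ)
      have h2 : ⨅ r : { r' : ℚ // (t : ℝ) < r' }, cdf μ r < cdf μ t + ε := by
        rw [h1]; have : (0 : ℝ) < ε := hε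
        linarith
      have : Nonempty { r' : ℚ // (t : ℝ) < r' } := by
        obtain ⟨r, hr⟩ := exists_rat_gt (t : ℝ)
        exact ⟨⟨r, hr⟩⟩
      obtain ⟨r, hr⟩ := exists_lt_of_ciInf_lt h2
      have hr' : t < r.1 := by exact_mod_cast r.2
      calc ∫⁻ w, ⨅ r : Set.Ioi t, F r w ∂Q ≤ ∫⁻ w, F r w ∂Q :=
            lintegral_mono fun w => iInf_le (fun r : Set.Ioi t => F r w) ⟨r.1, hr'⟩
        _ = μ (Set.Iic (r : ℝ)) := Ftot _
        _ ≤ μ (Set.Iic (t : ℝ)) + ε := by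
            rw [← ofReal_cdf, ← ofReal_cdf]
            refine (ENNReal.ofReal_le_ofReal hr.le).trans (ENNReal.ofReal_add_le.trans ?_)
            simp
  have Fbot : ∀ᵐ w ∂Q, ⨅ r : ℚ, F r w = 0 := by
    have : ∫⁻ w, ⨅ r : ℚ, F r w ∂Q = 0 := by
      refine le_antisymm (ENNReal.le_of_forall_pos_le_add fun ε hε _ => ?_) bot_le
      have h1 := (tendsto_cdf_atBot μ).eventually_lt_const (show (0 : ℝ) < ε from hε)
      obtain ⟨x, hx⟩ := h1.exists
      obtain ⟨q, hq⟩ := exists_rat_lt x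
      calc ∫⁻ w, ⨅ r : ℚ, F r w ∂Q ≤ ∫⁻ w, F q w ∂Q :=
            lintegral_mono fun w => iInf_le (fun r : ℚ => F r w) q
        _ = μ (Set.Iic (q : ℝ)) := Ftot _
        _ ≤ 0 + ε := by
            rw [← ofReal_cdf]
            refine (ENNReal.ofReal_le_ofReal ((monotone_cdf μ hq.le).trans hx.le)).trans ?_
            simp
    rw [lintegral_eq_zero_iff (Measurable.iInf fun r => Fm r)] at this
    exact this
  have Ftop : ∀ᵐ w ∂Q, ⨆ r : ℚ, F r w = 1 := by
    have hle : (fun w => ⨆ r : ℚ, F r w) ≤ᵐ[Q] fun _ => 1 := by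
      filter_upwards [Fle] with w hw
      exact iSup_le hw
    refine ae_eq_of_ae_le_of_lintegral_le hle ?_ aemeasurable_const ?_
    · exact ((lintegral_mono_ae hle).trans_lt (by simp)).ne
    · simp only [lintegral_const, measure_univ, mul_one]
      refine ENNReal.le_of_forall_pos_le_add fun ε hε _ => ?_
      have h1 := (tendsto_cdf_atTop μ).eventually_const_lt
        (show (1 : ℝ) - ε < 1 by have : (0 : ℝ) < ε := hε
                                 linarith)
      obtain ⟨x, hx⟩ := h1.exists
      obtain ⟨q, hq⟩ := exists_rat_gt x
      have h2 : 1 ≤ cdf μ q + ε := by linarith [monotone_cdf μ hq.le]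
      calc (1 : ENNReal) = ENNReal.ofReal 1 := by simp
        _ ≤ μ (Set.Iic (q : ℝ)) + ε := by
            rw [← ofReal_cdf]
            refine (ENNReal.ofReal_le_ofReal h2).trans (ENNReal.ofReal_add_le.trans ?_)
            simp
        _ = ∫⁻ w, F q w ∂Q + ε := by rw [Ftot]
        _ ≤ _ := by
            gcongr with w
            exact le_iSup (fun r : ℚ => F r w) q
  let f : W → ℚ → ℝ := fun w q => (F q w).toReal
  have fm : Measurable f := measurable_pi_iff.2 fun q => (Fm q).ennreal_toReal
  have fpt : ∀ᵐ w ∂Q, IsRatStieltjesPoint f w := by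
    filter_upwards [Fmono, Fle, Finf, Fbot, Ftop] with w h1 h2 h3 h4 h5
    have hne : ∀ q, F q w ≠ ⊤ := fun q => ((h2 q).trans_lt ENNReal.one_lt_top).ne
    refine ⟨fun q q' hq => ENNReal.toReal_mono (hne _) (h1 hq), ?_, ?_, fun t => ?_⟩
    · have := tendsto_atTop_iSup h1
      rw [h5] at this
      exact (ENNReal.tendsto_toReal ENNReal.one_ne_top).comp this
    · have := tendsto_atBot_iInf h1
      rw [h4] at this
      exact (ENNReal.tendsto_toReal ENNReal.zero_ne_top).comp this
    · change ⨅ r : Set.Ioi t, (F r w).toReal = (F t w).toReal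
      rw [← h3 t, ENNReal.toReal_iInf (fun i => hne _)]
  let K : Kernel W ℝ := ⟨fun w => (stieltjesOfMeasurableRat f fm w).measure,
    measurable_measure_stieltjesOfMeasurableRat fm⟩
  have hK : IsMarkovKernel K := ⟨fun w => instIsProbabilityMeasure_stieltjesOfMeasurableRat fm w⟩
  have KIic : ∀ q : ℚ, ∀ᵐ w ∂Q, K w (Set.Iic (q : ℝ)) = F q w := by
    intro q
    filter_upwards [fpt, Fle] with w hw h2
    change (stieltjesOfMeasurableRat f fm w).measure _ = _
    rw [measure_stieltjesOfMeasurableRat_Iic, stieltjesOfMeasurableRat_eq,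
      toRatCDF_of_isRatStieltjesPoint hw]
    exact ENNReal.ofReal_toReal ((h2 q).trans_lt ENNReal.one_lt_top).ne
  refine ⟨(Q ⊗ₘ K).map Prod.swap, fun A D hA hD => ?_⟩
  rw [Measure.map_apply measurable_swap (hA.prod hD), Set.preimage_swap_prod,
    Measure.compProd_apply_prod hD hA, ← hn D A hA]
  rw [← Measure.bind_apply hA K.measurable.aemeasurable]
  congr 1
  have : IsFiniteMeasure ((Q.restrict D).bind K) := by
    infer_instance
  refine ext_of_generate_finite _ Real.borel_eq_generateFrom_Iic_rat Real.isPiSystem_Iic_rat ?_ ?_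
  · intro s hs
    simp only [Set.mem_iUnion, Set.mem_singleton_iff] at hs
    obtain ⟨q, rfl⟩ := hs
    rw [Measure.bind_apply measurableSet_Iic K.measurable.aemeasurable, hn D _ measurableSet_Iic,
      ← hm q D hD, ← Fint q D hD]
    exact lintegral_congr_ae (ae_restrict_of_ae (KIic q))
  · rw [Measure.bind_apply MeasurableSet.univ K.measurable.aemeasurable, hn D _ MeasurableSet.univ,
      univL D hD, ofReal_measureReal]
    simp

lemma bimeasure_exists {W : Type*} [MeasurableSpace W] (Q : Measure W) [IsProbabilityMeasure Q]
    {E : Type*} [MeasurableSpace E] [StandardBorelSpace E] [Nonempty E]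
    (μ : Measure E) [IsProbabilityMeasure μ] (M : Set E → Set W → ℝ)
    (nonneg : ∀ A D, 0 ≤ M A D)
    (addL : ∀ A A' D, Disjoint A A' → M (A ∪ A') D = M A D + M A' D)
    (addR : ∀ A D D', Disjoint D D' → M A (D ∪ D') = M A D + M A D')
    (univL : ∀ D, MeasurableSet D → M Set.univ D = Q.real D)
    (univR : ∀ A, MeasurableSet A → M A Set.univ = μ.real A) :
    ∃ π : Measure (E × W), ∀ A D, MeasurableSet A → MeasurableSet D →
      π (A ×ˢ D) = ENNReal.ofReal (M A D) := by
  have he := measurableEmbedding_embeddingReal E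
  obtain ⟨g, hg, hge⟩ := he.exists_measurable_extend measurable_id (fun _ => inferInstance)
  have hpm : IsProbabilityMeasure (μ.map (embeddingReal E)) :=
    Measure.isProbabilityMeasure_map he.measurable.aemeasurable
  obtain ⟨π, hπ⟩ := bimeasure_real Q (μ.map (embeddingReal E))
    (fun A D => M (embeddingReal E ⁻¹' A) D) (fun _ _ => nonneg _ _)
    (fun A A' D h => by rw [Set.preimage_union]; exact addL _ _ _ (h.preimage _))
    (fun A D D' h => addR _ _ _ h) (fun D hD => by simpa using univL D hD)
    (fun A hA => by
      rw [univR _ (he.measurable hA), map_measureReal_apply he.measurable hA])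
  refine ⟨π.map (Prod.map g id), fun A D hA hD => ?_⟩
  rw [Measure.map_apply (hg.prodMap measurable_id) (hA.prod hD)]
  have : Prod.map g (id : W → W) ⁻¹' (A ×ˢ D) = (g ⁻¹' A) ×ˢ D := by ext; simp
  rw [this, hπ _ _ (hg hA) hD, ← Set.preimage_comp, hge, Set.preimage_id]


lemma measure_le_of_rect {E S : Type*} [MeasurableSpace E] [MeasurableSpace S]
    (a b : Measure (E × S)) [IsFiniteMeasure a] [IsFiniteMeasure b]
    (h : ∀ A B, MeasurableSet A → MeasurableSet B → b (A ×ˢ B) ≤ a (A ×ˢ B)) : b ≤ a := by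
  let 𝒜 : Set (Set (E × S)) := {C | ∃ σ : SimpleFunc E (Set S),
    (∀ x, MeasurableSet (σ x)) ∧ C = {p | p.2 ∈ σ p.1}}
  have alg : IsSetAlgebra 𝒜 := by
    refine ⟨⟨SimpleFunc.const E ∅, fun x => by simp, by simp⟩, ?_, ?_⟩
    · rintro _ ⟨σ, hσ, rfl⟩
      exact ⟨σ.map compl, fun x => by simpa using (hσ x), by ext; simp⟩
    · rintro _ _ ⟨σ, hσ, rfl⟩ ⟨τ, hτ, rfl⟩
      exact ⟨(σ.pair τ).map (fun q => q.1 ∪ q.2), fun x => by simpa using (hσ x).union (hτ x),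
        by ext; simp⟩
  have rep : ∀ σ : SimpleFunc E (Set S), {p : E × S | p.2 ∈ σ p.1} =
      ⋃ v ∈ σ.range, (σ ⁻¹' {v}) ×ˢ v := by
    intro σ
    ext p
    simp
    exact ⟨fun h => ⟨p.1, rfl, h⟩, fun ⟨i, h1, h2⟩ => h1 ▸ h2⟩
  have meas : ∀ C ∈ 𝒜, MeasurableSet C := by
    rintro _ ⟨σ, hσ, rfl⟩
    rw [rep]
    refine Finset.measurableSet_biUnion _ fun v hv => ?_
    obtain ⟨x, rfl⟩ := SimpleFunc.mem_range.1 hv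
    exact (σ.measurableSet_fiber _).prod (hσ x)
  have gen : (inferInstance : MeasurableSpace (E × S)) = MeasurableSpace.generateFrom 𝒜 := by
    refine le_antisymm ?_ (MeasurableSpace.generateFrom_le meas)
    change Prod.instMeasurableSpace ≤ _
    rw [← generateFrom_prod]
    refine MeasurableSpace.generateFrom_mono ?_
    rintro _ ⟨A, hA, B, hB, rfl⟩
    classical
    refine ⟨SimpleFunc.piecewise A hA (SimpleFunc.const E B) (SimpleFunc.const E ∅), ?_, ?_⟩
    · intro x
      by_cases hx : x ∈ A <;> simp [hx]
      exact hB
    · ext p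
      by_cases hx : p.1 ∈ A <;> simp [hx]
  have le𝒜 : ∀ C ∈ 𝒜, b C ≤ a C := by
    rintro _ ⟨σ, hσ, rfl⟩
    have hd : (σ.range : Set (Set S)).PairwiseDisjoint (fun v => (σ ⁻¹' {v}) ×ˢ v) := by
      intro v _ w _ hvw
      refine Set.disjoint_left.2 ?_
      rintro p ⟨h1, _⟩ ⟨h2, _⟩
      exact hvw (by simp at h1 h2; rw [← h1, ← h2])
    have hm : ∀ v ∈ σ.range, MeasurableSet ((σ ⁻¹' {v}) ×ˢ v) := fun v hv => by
      obtain ⟨x, rfl⟩ := SimpleFunc.mem_range.1 hv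
      exact (σ.measurableSet_fiber _).prod (hσ x)
    rw [rep, measure_biUnion_finset hd hm, measure_biUnion_finset hd hm]
    refine Finset.sum_le_sum fun v hv => ?_
    obtain ⟨x, rfl⟩ := SimpleFunc.mem_range.1 hv
    exact h _ _ (σ.measurableSet_fiber _) (hσ x)
  refine Measure.le_iff.2 fun C hC => ?_
  refine ENNReal.le_of_forall_pos_le_add fun ε hε _ => ?_
  have hε' : (0:ℝ) < ε := hε
  obtain ⟨t, ht, hCt⟩ := (Measure.MeasureDense.of_generateFrom_isSetAlgebra_finite (μ := a + b)
    alg gen).approx C hC (measure_ne_top _ _) (ε / 2) (by linarith)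
  have e1 : a (symmDiff C t) + b (symmDiff C t) ≤ ENNReal.ofReal (ε / 2) := hCt.le
  have e3 : ENNReal.ofReal ((ε : ℝ) / 2) ≤ ε := by
    rw [← ENNReal.ofReal_coe_nnreal]
    exact ENNReal.ofReal_le_ofReal (by linarith)
  calc b C ≤ b t + b (symmDiff C t) := by
        refine (measure_mono ?_).trans (measure_union_le _ _)
        intro x hx
        by_cases hxt : x ∈ t
        · exact Or.inl hxt
        · exact Or.inr (Or.inl ⟨hx, hxt⟩)
    _ ≤ a t + b (symmDiff C t) := add_le_add (le𝒜 t ht) le_rfl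
    _ ≤ (a C + a (symmDiff C t)) + b (symmDiff C t) := by
        gcongr
        refine (measure_mono ?_).trans (measure_union_le _ _)
        intro x hx
        by_cases hxt : x ∈ C
        · exact Or.inl hxt
        · exact Or.inr (Or.inr ⟨hx, hxt⟩)
    _ ≤ a C + ε := by rw [add_assoc]; gcongr; exact e1.trans e3

lemma hahn_banach_adm {V : Type*} [AddCommGroup V] [Module ℝ V] (U : Submodule ℝ V)
    (Adm : V → ℝ → Prop)
    (hadd : ∀ h h' r r', Adm h r → Adm h' r' → Adm (h + h') (r + r'))
    (smul : ∀ c : ℝ, 0 < c → ∀ h r, Adm h r → Adm (c • h) (c * r))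
    (zero : ∀ r, Adm 0 r → 0 ≤ r)
    (ne : ∀ h ∈ U, ∃ r, Adm h r) :
    ∃ l : V →ₗ[ℝ] ℝ, ∀ h ∈ U, ∀ r, Adm h r → l h ≤ r := by
  have bdd : ∀ h ∈ U, BddBelow {r | Adm h r} := by
    intro h hh
    obtain ⟨r0, h0⟩ := ne (-h) (U.neg_mem hh)
    refine ⟨-r0, fun r hr => ?_⟩
    have := hadd _ _ _ _ hr h0
    rw [add_neg_cancel] at this
    linarith [zero _ this]
  let N : U → ℝ := fun h => sInf {r | Adm h r}
  have H1 : ∀ c : ℝ, 0 < c → ∀ x, N (c • x) = c * N x := by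
    have key : ∀ c : ℝ, 0 < c → ∀ x : U, N (c • x) ≤ c * N x := by
      intro c hc x
      have : N (c • x) / c ≤ N x := by
        refine le_csInf (ne x x.2) fun r hr => ?_
        rw [div_le_iff₀' hc]
        exact csInf_le (bdd _ (c • x).2) (smul c hc _ _ hr)
      rwa [div_le_iff₀' hc] at this
    intro c hc x
    refine le_antisymm (key c hc x) ?_
    have := key c⁻¹ (inv_pos.2 hc) (c • x)
    rw [smul_smul, inv_mul_cancel₀ hc.ne', one_smul] at this
    rwa [← div_eq_inv_mul, le_div_iff₀' hc] at this
  have H2 : ∀ x y, N (x + y) ≤ N x + N y := by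
    intro x y
    have h1 : ∀ r, Adm x r → ∀ r', Adm y r' → N (x + y) ≤ r + r' := fun r hr r' hr' =>
      csInf_le (bdd _ (x + y).2) (hadd _ _ _ _ hr hr')
    have h2 : ∀ r, Adm x r → N (x + y) - r ≤ N y := fun r hr =>
      le_csInf (ne y y.2) fun r' hr' => by linarith [h1 r hr r' hr']
    have h3 : N (x + y) - N y ≤ N x := le_csInf (ne x x.2) fun r hr => by linarith [h2 r hr]
    linarith
  have H3 : ∀ x : (⟨⊥, 0⟩ : U →ₗ.[ℝ] ℝ).domain, (⟨⊥, 0⟩ : U →ₗ.[ℝ] ℝ) x ≤ N x := by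
    rintro ⟨x, hx⟩
    have : x = 0 := hx
    subst this
    exact le_csInf (ne _ (0 : U).2) fun r hr => zero r hr
  obtain ⟨g, -, hg⟩ := exists_extension_of_le_sublinear (E := U) ⟨⊥, 0⟩ N H1 H2 H3
  obtain ⟨l, hl⟩ := LinearMap.exists_extend g
  refine ⟨l, fun h hh r hr => ?_⟩
  have : l h = g ⟨h, hh⟩ := by rw [← hl]; rfl
  rw [this]
  exact (hg _).trans (csInf_le (bdd h hh) hr)

/-- affine functionals -/
def affL {d : ℕ} (v : ℝ × (Fin d → ℝ)) (y : Euc d) : ℝ := ∑ j, v.2 j * y j - v.1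

lemma affL_add {d : ℕ} (v w : ℝ × (Fin d → ℝ)) (y : Euc d) :
    affL (v + w) y = affL v y + affL w y := by
  simp only [affL, Prod.fst_add, Prod.snd_add, Pi.add_apply, add_mul, Finset.sum_add_distrib]
  ring

lemma affL_smul {d : ℕ} (c : ℝ) (v : ℝ × (Fin d → ℝ)) (y : Euc d) :
    affL (c • v) y = c * affL v y := by
  simp only [affL, Prod.smul_fst, Prod.smul_snd, Pi.smul_apply, smul_eq_mul, mul_sub,
    Finset.mul_sum, mul_assoc]

lemma affL_zero {d : ℕ} (y : Euc d) : affL (0 : ℝ × (Fin d → ℝ)) y = 0 := by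
  simp [affL]

lemma affL_mono {d : ℕ} (v : ℝ × (Fin d → ℝ)) (hv : ∀ j, 0 ≤ v.2 j) : CoordMono (affL v) := by
  intro x y h
  simp only [affL]
  gcongr with j
  · exact hv j
  · exact h j

lemma affL_convex {d : ℕ} (v : ℝ × (Fin d → ℝ)) : ConvexOn ℝ Set.univ (affL v) := by
  refine ⟨convex_univ, fun x _ y _ a b _ _ hab => le_of_eq ?_⟩
  simp only [affL, smul_eq_mul, PiLp.add_apply, PiLp.smul_apply, mul_sub, Finset.mul_sum]
  have : v.1 = a * v.1 + b * v.1 := by rw [← add_mul, hab, one_mul]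
  have h2 : ∑ j, v.2 j * (a * x j + b * y j) = ∑ j, a * (v.2 j * x j) + ∑ j, b * (v.2 j * y j) := by
    rw [← Finset.sum_add_distrib]
    exact Finset.sum_congr rfl fun j _ => by ring
  rw [h2]
  linarith

lemma affL_measurable {d : ℕ} (v : ℝ × (Fin d → ℝ)) : Measurable (affL v) := by
  unfold affL
  fun_prop

lemma coord_integrable {d : ℕ} {Ω : Type*} [MeasurableSpace Ω] {P : Measure Ω}
    {X : Ω → Euc d} (hX : Integrable X P) (j : Fin d) : Integrable (fun ω => X ω j) P :=
  (EuclideanSpace.proj (𝕜 := ℝ) j : Euc d →L[ℝ] ℝ).integrable_comp hX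

lemma affL_integrable {d : ℕ} {Ω : Type*} [MeasurableSpace Ω] {P : Measure Ω}
    [IsFiniteMeasure P] {X : Ω → Euc d} (hX : Integrable X P) (v : ℝ × (Fin d → ℝ)) :
    Integrable (fun ω => affL v (X ω)) P := by
  unfold affL
  refine Integrable.sub (integrable_finsetSum _ fun j _ => ?_) (integrable_const _)
  exact (coord_integrable hX j).const_mul _

lemma affL_simple_integrable {d : ℕ} {Ω S : Type*} [MeasurableSpace Ω] [MeasurableSpace S]
    {P : Measure Ω} [IsFiniteMeasure P] {X : Ω → Euc d} {Z : Ω → S}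
    (hXm : Measurable X) (hZ : Measurable Z)
    (hX : Integrable X P) (α : SimpleFunc (Euc d) (SimpleFunc S (ℝ × (Fin d → ℝ)))) :
    Integrable (fun ω => affL (α (X ω) (Z ω)) (X ω)) P := by
  have : (fun ω => affL (α (X ω) (Z ω)) (X ω)) = fun ω => ∑ β ∈ α.range, ∑ v ∈ β.range,
      (X ⁻¹' (α ⁻¹' {β}) ∩ Z ⁻¹' (β ⁻¹' {v})).indicator (fun ω => affL v (X ω)) ω := by
    ext ω
    rw [Finset.sum_eq_single (α (X ω)), Finset.sum_eq_single (α (X ω) (Z ω))]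
    · simp
    · intro v _ hv
      rw [Set.indicator_of_notMem]
      simp [hv.symm]
    · simp
    · intro β _ hβ
      refine Finset.sum_eq_zero fun v _ => ?_
      rw [Set.indicator_of_notMem]
      simp [hβ.symm]
    · simp
  rw [this]
  refine integrable_finsetSum _ fun β _ => integrable_finsetSum _ fun v _ => ?_
  exact (affL_integrable hX v).indicator
    ((hXm (α.measurableSet_fiber _)).inter (hZ (β.measurableSet_fiber _)))

lemma sum_fiber {Ω T : Type*} [MeasurableSpace Ω] (P : Measure Ω) (τ : SimpleFunc Ω T)
    (f : Ω → ℝ) (hf : Integrable f P) :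
    ∫ ω, f ω ∂P = ∑ t ∈ τ.range, ∫ ω in τ ⁻¹' {t}, f ω ∂P := by
  rw [← integral_biUnion_finset]
  · rw [← setIntegral_univ]
    congr 2
    ext ω
    simp
  · exact fun t _ => τ.measurableSet_fiber _
  · intro t _ t' _ htt
    exact Disjoint.preimage _ (by simpa using htt)
  · exact fun t _ => hf.integrableOn

lemma icx_set {d : ℕ} {Ω S : Type} [MeasurableSpace Ω] (P : Measure Ω)
    [IsProbabilityMeasure P] [MeasurableSpace S]
    (X Y : Ω → Euc d) (Z : Ω → S) (hZ : Measurable Z)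
    (h : CondICXLe P (MeasurableSpace.comap Z inferInstance) X Y)
    (φ : Euc d → ℝ) (hc : ConvexOn ℝ Set.univ φ) (hm : CoordMono φ)
    (h1 : Integrable (fun ω => φ (X ω)) P) (h2 : Integrable (fun ω => φ (Y ω)) P)
    (B : Set S) (hB : MeasurableSet B) :
    ∫ ω in Z ⁻¹' B, φ (X ω) ∂P ≤ ∫ ω in Z ⁻¹' B, φ (Y ω) ∂P := by
  have hs : MeasurableSet[MeasurableSpace.comap Z inferInstance] (Z ⁻¹' B) := ⟨B, hB, rfl⟩
  rw [← setIntegral_condExp hZ.comap_le h1 hs, ← setIntegral_condExp hZ.comap_le h2 hs]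
  exact setIntegral_mono_ae integrable_condExp.integrableOn integrable_condExp.integrableOn
    (h φ hc hm h1 h2)

lemma key_ineq {d : ℕ} {Ω S : Type} [MeasurableSpace Ω] (P : Measure Ω)
    [IsProbabilityMeasure P] [MeasurableSpace S]
    (X Y : Ω → Euc d) (Z : Ω → S)
    (hX : Measurable X) (hY : Measurable Y) (hZ : Measurable Z)
    (hXi : Integrable X P) (hYi : Integrable Y P)
    (hicx : CondICXLe P (MeasurableSpace.comap Z inferInstance) X Y)
    (α : SimpleFunc (Euc d) (SimpleFunc S (ℝ × (Fin d → ℝ))))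
    (hα : ∀ x z j, 0 ≤ (α x z).2 j) (H : Euc d × S → ℝ)
    (hH : Integrable H (P.map (fun ω => (Y ω, Z ω))))
    (hle : ∀ x y z, affL (α x z) y ≤ H (y, z)) :
    ∫ ω, affL (α (X ω) (Z ω)) (X ω) ∂P ≤ ∫ w, H w ∂(P.map (fun ω => (Y ω, Z ω))) := by
  classical
  have hne : (Finset.univ : Finset α.range).Nonempty :=
    ⟨⟨α 0, SimpleFunc.mem_range_self α 0⟩, Finset.mem_univ _⟩
  let Ψ : (α.range → ℝ × (Fin d → ℝ)) → Euc d → ℝ := fun t y =>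
    Finset.univ.sup' hne (fun β => affL (t β) y)
  let T : SimpleFunc S (α.range → ℝ × (Fin d → ℝ)) :=
    { toFun := fun z β => β.1 z
      measurableSet_fiber' := fun t => by
        have : (fun (z : S) (β : α.range) => β.1 z) ⁻¹' {t} = ⋂ β : α.range, β.1 ⁻¹' {t β} := by
          ext z
          simp [funext_iff]
        rw [this]
        exact MeasurableSet.iInter fun β => β.1.measurableSet_fiber _
      finite_range' := by
        refine (Set.Finite.pi' (fun β : α.range => β.1.finite_range)).subset ?_
        rintro _ ⟨z, rfl⟩ β
        exact ⟨z, rfl⟩ }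
  have hconv : ∀ t, ConvexOn ℝ Set.univ (Ψ t) := by
    intro t
    refine ⟨convex_univ, fun x _ y _ a b ha hb hab => ?_⟩
    refine Finset.sup'_le _ _ fun β hβ => ?_
    refine ((affL_convex (t β)).2 (Set.mem_univ x) (Set.mem_univ y) ha hb hab).trans ?_
    simp only [smul_eq_mul]
    gcongr
    · exact Finset.le_sup' (fun β => affL (t β) x) hβ
    · exact Finset.le_sup' (fun β => affL (t β) y) hβ
  have hmono : ∀ t ∈ T.range, CoordMono (Ψ t) := by
    intro t ht x y hxy
    obtain ⟨z, rfl⟩ := SimpleFunc.mem_range.1 ht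
    refine Finset.sup'_le _ _ fun β hβ => ?_
    refine (affL_mono (T z β) ?_ x y hxy).trans (Finset.le_sup' (fun β => affL (T z β) y) hβ)
    intro j
    obtain ⟨x', hx'⟩ := SimpleFunc.mem_range.1 β.2
    change 0 ≤ (β.1 z).2 j
    rw [← hx']
    exact hα x' z j
  have hint : ∀ t (W : Ω → Euc d), Measurable W → Integrable W P →
      Integrable (fun ω => Ψ t (W ω)) P := by
    intro t W hW hWi
    have hm : Measurable (Ψ t) := by
      have : Ψ t = Finset.univ.sup' hne (fun β => affL (t β)) := by
        ext y
        exact (Finset.sup'_apply hne (fun β => affL (t β)) y).symm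
      rw [this]
      exact Finset.measurable_sup' hne fun β _ => affL_measurable _
    refine Integrable.mono' (g := fun ω => ∑ β, |affL (t β) (W ω)|)
      (integrable_finsetSum _ fun β _ => (affL_integrable hWi _).abs)
      (hm.comp hW).aestronglyMeasurable (Eventually.of_forall fun ω => ?_)
    obtain ⟨β, hβ, e⟩ := Finset.exists_mem_eq_sup' hne (fun β => affL (t β) (W ω))
    change |Finset.univ.sup' hne (fun β => affL (t β) (W ω))| ≤ _
    rw [e]
    exact Finset.single_le_sum (f := fun β => |affL (t β) (W ω)|) (fun _ _ => abs_nonneg _) hβ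
  have hHm : Integrable (fun ω => H (Y ω, Z ω)) P := hH.comp_measurable (hY.prodMk hZ)
  rw [integral_map (hY.prodMk hZ).aemeasurable hH.1, sum_fiber P (T.comp Z hZ) _ hHm,
    sum_fiber P (T.comp Z hZ) _ (affL_simple_integrable hX hZ hXi α)]
  refine Finset.sum_le_sum fun t ht => ?_
  have ht' : t ∈ T.range := by
    obtain ⟨ω, rfl⟩ := SimpleFunc.mem_range.1 ht
    exact SimpleFunc.mem_range_self T (Z ω)
  have hmeas : MeasurableSet ((T.comp Z hZ) ⁻¹' {t}) := SimpleFunc.measurableSet_fiber _ _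
  calc _ ≤ ∫ ω in (T.comp Z hZ) ⁻¹' {t}, Ψ t (X ω) ∂P := by
        refine setIntegral_mono_on (affL_simple_integrable hX hZ hXi α).integrableOn
          (hint t X hX hXi).integrableOn hmeas ?_
        intro ω hω
        have : T (Z ω) = t := hω
        rw [← this]
        exact Finset.le_sup' (fun β => affL (T (Z ω) β) (X ω))
          (Finset.mem_univ ⟨α (X ω), SimpleFunc.mem_range_self _ _⟩)
    _ ≤ ∫ ω in (T.comp Z hZ) ⁻¹' {t}, Ψ t (Y ω) ∂P :=
        icx_set P X Y Z hZ hicx (Ψ t) (hconv t) (hmono t ht') (hint t X hX hXi)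
          (hint t Y hY hYi) (T ⁻¹' {t}) (T.measurableSet_fiber _)
    _ ≤ _ := by
        refine setIntegral_mono_on (hint t Y hY hYi).integrableOn hHm.integrableOn hmeas ?_
        intro ω hω
        have : T (Z ω) = t := hω
        rw [← this]
        refine Finset.sup'_le _ _ fun β _ => ?_
        obtain ⟨x', hx'⟩ := SimpleFunc.mem_range.1 β.2
        change affL (β.1 (Z ω)) (Y ω) ≤ _
        rw [← hx']
        exact hle _ _ _


lemma exists_functional {d : ℕ} {Ω S : Type} [MeasurableSpace Ω] (P : Measure Ω)
    [IsProbabilityMeasure P] [MeasurableSpace S]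
    (X Y : Ω → Euc d) (Z : Ω → S)
    (hX : Measurable X) (hY : Measurable Y) (hZ : Measurable Z)
    (hXi : Integrable X P) (hYi : Integrable Y P)
    (hicx : CondICXLe P (MeasurableSpace.comap Z inferInstance) X Y) :
    ∃ l : (Euc d × (Euc d × S) → ℝ) →ₗ[ℝ] ℝ,
      (∀ h H, Integrable H (P.map (fun ω => (Y ω, Z ω))) → (∀ x w, |h (x, w)| ≤ H w) →
        |l h| ≤ ∫ w, H w ∂(P.map (fun ω => (Y ω, Z ω)))) ∧
      (∀ h H, Integrable H (P.map (fun ω => (Y ω, Z ω))) → (∀ x w, |h (x, w)| ≤ H w) →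
        (∀ p, 0 ≤ h p) → 0 ≤ l h) ∧
      (∀ H, Integrable H (P.map (fun ω => (Y ω, Z ω))) →
        l (fun p => H p.2) = ∫ w, H w ∂(P.map (fun ω => (Y ω, Z ω)))) ∧
      (∀ A B, MeasurableSet A → MeasurableSet B → ∀ v : ℝ × (Fin d → ℝ), (∀ j, 0 ≤ v.2 j) →
        l (Set.indicator {p | p.1 ∈ A ∧ p.2.2 ∈ B} (fun p => - affL v p.2.1)) ≤
          ∫ ω in X ⁻¹' A ∩ Z ⁻¹' B, - affL v (X ω) ∂P) := by
  classical
  set Q := P.map (fun ω => (Y ω, Z ω)) with hQ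
  have hYint : ∀ v : ℝ × (Fin d → ℝ), Integrable (fun w : Euc d × S => affL v w.1) Q := by
    intro v
    exact (integrable_map_measure ((affL_measurable v).comp measurable_fst).aestronglyMeasurable
      (hY.prodMk hZ).aemeasurable).2 (affL_integrable hYi v)
  let U : Submodule ℝ (Euc d × (Euc d × S) → ℝ) :=
    { carrier := {h | ∃ H, Integrable H Q ∧ ∀ x w, |h (x, w)| ≤ H w}
      zero_mem' := ⟨0, integrable_zero _ _ _, by simp⟩
      add_mem' := by
        rintro h h' ⟨H, hH, hb⟩ ⟨H', hH', hb'⟩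
        exact ⟨H + H', hH.add hH', fun x w => (abs_add_le _ _).trans (add_le_add (hb x w) (hb' x w))⟩
      smul_mem' := by
        rintro c h ⟨H, hH, hb⟩
        refine ⟨fun w => |c| * H w, hH.const_mul _, fun x w => ?_⟩
        simp only [Pi.smul_apply, smul_eq_mul, abs_mul]
        gcongr
        exact hb x w }
  let Adm : (Euc d × (Euc d × S) → ℝ) → ℝ → Prop := fun h r =>
    ∃ (α : SimpleFunc (Euc d) (SimpleFunc S (ℝ × (Fin d → ℝ)))) (H : Euc d × S → ℝ),
      (∀ x z j, 0 ≤ (α x z).2 j) ∧ Integrable H Q ∧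
      (∀ x w, h (x, w) ≤ H w - affL (α x w.2) w.1) ∧
      r = ∫ w, H w ∂Q - ∫ ω, affL (α (X ω) (Z ω)) (X ω) ∂P
  have simple0 : ∀ h H, Integrable H Q → (∀ x w, h (x, w) ≤ H w) → Adm h (∫ w, H w ∂Q) := by
    intro h H hH hb
    refine ⟨0, H, ?_, hH, ?_, ?_⟩
    · intro x z j; simp
    · intro x w; simpa [affL_zero] using hb x w
    · simp [affL_zero]
  have hE : ∃ l : (Euc d × (Euc d × S) → ℝ) →ₗ[ℝ] ℝ, ∀ h ∈ U, ∀ r, Adm h r → l h ≤ r := by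
    refine hahn_banach_adm U Adm ?_ ?_ ?_ ?_
    · rintro h h' _ _ ⟨α, H, h1, h2, h3, rfl⟩ ⟨α', H', h1', h2', h3', rfl⟩
      refine ⟨α + α', H + H', ?_, h2.add h2', ?_, ?_⟩
      · intro x z j
        simpa using add_nonneg (h1 x z j) (h1' x z j)
      · intro x w
        simp only [SimpleFunc.add_apply, Pi.add_apply, affL_add]
        linarith [h3 x w, h3' x w]
      · simp only [SimpleFunc.add_apply, Pi.add_apply, affL_add]
        rw [integral_add h2 h2', integral_add (affL_simple_integrable hX hZ hXi α)
          (affL_simple_integrable hX hZ hXi α')]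
        ring
    · rintro c hc h _ ⟨α, H, h1, h2, h3, rfl⟩
      refine ⟨c • α, fun w => c * H w, ?_, h2.const_mul c, ?_, ?_⟩
      · intro x z j
        simpa using mul_nonneg hc.le (h1 x z j)
      · intro x w
        simp only [SimpleFunc.smul_apply, Pi.smul_apply, affL_smul, smul_eq_mul]
        nlinarith [h3 x w]
      · simp only [SimpleFunc.smul_apply, affL_smul]
        rw [integral_const_mul, integral_const_mul]
        ring
    · rintro _ ⟨α, H, h1, h2, h3, rfl⟩
      have := key_ineq P X Y Z hX hY hZ hXi hYi hicx α h1 H h2 (fun x y z => by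
        have := h3 x (y, z)
        simp at this
        linarith)
      linarith
    · rintro h ⟨H, hH, hb⟩
      exact ⟨_, simple0 h H hH fun x w => (le_abs_self _).trans (hb x w)⟩
  obtain ⟨l, hl⟩ := hE
  have ub : ∀ h H H', Integrable H Q → Integrable H' Q → (∀ x w, |h (x, w)| ≤ H w) →
      (∀ x w, h (x, w) ≤ H' w) → l h ≤ ∫ w, H' w ∂Q := fun h H H' hH hH' hb hb' =>
    hl h ⟨H, hH, hb⟩ _ (simple0 h H' hH' hb')
  have negb : ∀ (h : Euc d × (Euc d × S) → ℝ) (H : Euc d × S → ℝ), (∀ x w, |h (x, w)| ≤ H w) → (∀ x w, |(-h) (x, w)| ≤ H w) := by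
    intro h H hb x w
    simpa using hb x w
  have p1 : ∀ h H, Integrable H Q → (∀ x w, |h (x, w)| ≤ H w) → |l h| ≤ ∫ w, H w ∂Q := by
    intro h H hH hb
    have e1 := ub h H H hH hH hb fun x w => (le_abs_self _).trans (hb x w)
    have e2 := ub (-h) H H hH hH (negb h H hb) fun x w => (le_abs_self _).trans (negb h H hb x w)
    rw [map_neg] at e2
    exact abs_le.2 ⟨by linarith, e1⟩
  refine ⟨l, p1, ?_, ?_, ?_⟩
  · intro h H hH hb hn
    have e2 := ub (-h) H 0 hH (integrable_zero _ _ _) (negb h H hb) (by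
      intro x w; simpa using hn (x, w))
    rw [map_neg] at e2
    simp at e2
    linarith
  · intro H hH
    have e1 := ub (fun p => H p.2) (fun w => |H w|) H hH.abs hH (fun x w => le_rfl)
      (fun x w => le_rfl)
    have e2 := ub (-(fun p => H p.2)) (fun w => |H w|) (-H) hH.abs hH.neg (fun x w => by simp)
      (fun x w => le_rfl)
    rw [map_neg] at e2
    simp only [Pi.neg_apply, integral_neg] at e2
    linarith
  · intro A B hA hB v hv
    let α : SimpleFunc (Euc d) (SimpleFunc S (ℝ × (Fin d → ℝ))) :=
      SimpleFunc.piecewise A hA (SimpleFunc.const _ (SimpleFunc.piecewise B hB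
        (SimpleFunc.const _ v) 0)) 0
    have hα : ∀ x z, α x z = if x ∈ A ∧ z ∈ B then v else 0 := by
      intro x z
      by_cases hx : x ∈ A <;> by_cases hz : z ∈ B <;> simp [α, hx, hz]
    refine hl _ ⟨fun w => |affL v w.1|, (hYint v).abs, ?_⟩ _ ⟨α, 0, ?_, integrable_zero _ _ _, ?_, ?_⟩
    · intro x w
      by_cases hp : x ∈ A ∧ w.2 ∈ B
      · rw [Set.indicator_of_mem (by exact hp)]; simp
      · rw [Set.indicator_of_notMem (by exact hp)]; simp
    · intro x z j
      rw [hα]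
      split_ifs
      · exact hv j
      · simp
    · intro x w
      rw [hα]
      by_cases hp : x ∈ A ∧ w.2 ∈ B
      · rw [Set.indicator_of_mem (by exact hp), if_pos hp]; simp
      · rw [Set.indicator_of_notMem (by exact hp), if_neg hp]; simp [affL_zero]
    · rw [integral_neg, ← integral_indicator ((hX hA).inter (hZ hB))]
      simp only [Pi.zero_apply, integral_zero, zero_sub]
      congr 2
      ext ω
      rw [hα]
      by_cases hp : X ω ∈ A ∧ Z ω ∈ B
      · rw [Set.indicator_of_mem (by exact hp), if_pos hp]
      · rw [Set.indicator_of_notMem (by exact hp), if_neg hp, affL_zero]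


lemma func_repr {E W : Type*} [MeasurableSpace E] [MeasurableSpace W] (Q : Measure W)
    [IsProbabilityMeasure Q] (l : (E × W → ℝ) →ₗ[ℝ] ℝ)
    (p1 : ∀ h H, Integrable H Q → (∀ x w, |h (x, w)| ≤ H w) → |l h| ≤ ∫ w, H w ∂Q)
    (π : Measure (E × W)) (hπ : π.map Prod.snd = Q)
    (hrect : ∀ A D, MeasurableSet A → MeasurableSet D →
      π.real (A ×ˢ D) = l (Set.indicator (A ×ˢ D) (fun _ => 1)))
    (A : Set E) (hA : MeasurableSet A) (H : W → ℝ) (hH : Integrable H Q) :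
    ∫ p in Prod.fst ⁻¹' A, H p.2 ∂π =
      l (Set.indicator (Prod.fst ⁻¹' A) (fun p => H p.2)) := by
  have hint : ∀ g : W → ℝ, Integrable g Q → Integrable (fun p : E × W => g p.2) π := by
    intro g hg
    rw [← hπ] at hg
    exact hg.comp_measurable measurable_snd
  have : IsProbabilityMeasure π := by
    refine ⟨?_⟩
    have : Q Set.univ = 1 := measure_univ
    rw [← hπ, Measure.map_apply measurable_snd MeasurableSet.univ] at this
    simpa using this
  have hmA : MeasurableSet (Prod.fst ⁻¹' A : Set (E × W)) := measurable_fst hA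
  have simp_case : ∀ g : SimpleFunc W ℝ, ∫ p in Prod.fst ⁻¹' A, g p.2 ∂π =
      l (Set.indicator (Prod.fst ⁻¹' A) (fun p => g p.2)) := by
    intro g
    induction g using SimpleFunc.induction with
    | @const c s hs =>
      have e1 : (Set.indicator (Prod.fst ⁻¹' A) (fun p : E × W =>
          (SimpleFunc.piecewise s hs (SimpleFunc.const W c) (SimpleFunc.const W 0)) p.2)) =
          c • Set.indicator (A ×ˢ s) (fun _ => 1) := by
        ext p
        by_cases h1 : p.1 ∈ A <;> by_cases h2 : p.2 ∈ s <;> simp [Set.indicator, h1, h2]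
      rw [← integral_indicator hmA, e1, map_smul, ← hrect A s hA hs]
      simp only [Pi.smul_apply]
      rw [integral_smul, integral_indicator_const _ (hA.prod hs)]
      simp
    | @add f g _ hf hg =>
      have i1 := hint f (SimpleFunc.integrable_of_isFiniteMeasure f)
      have i2 := hint g (SimpleFunc.integrable_of_isFiniteMeasure g)
      have e1 : (Set.indicator (Prod.fst ⁻¹' A) (fun p : E × W => (f + g) p.2)) =
          Set.indicator (Prod.fst ⁻¹' A) (fun p => f p.2) +
          Set.indicator (Prod.fst ⁻¹' A) (fun p => g p.2) := by
        rw [← Set.indicator_add']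
        rfl
      rw [e1, map_add, ← hf, ← hg, ← integral_add i1.integrableOn i2.integrableOn]
      rfl
  refine eq_of_forall_dist_le fun ε hε => ?_
  obtain ⟨g, hg, -⟩ := (memLp_one_iff_integrable.2 hH).exists_simpleFunc_eLpNorm_sub_lt
    (by simp) (ε := ENNReal.ofReal (ε / 2)) (by simpa using hε)
  have hgi : Integrable (⇑g) Q := SimpleFunc.integrable_of_isFiniteMeasure g
  have hd : ∫ w, |H w - g w| ∂Q ≤ ε / 2 := by
    have : ∫ w, ‖(H - ⇑g) w‖ ∂Q = (eLpNorm (H - ⇑g) 1 Q).toReal := by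
      rw [eLpNorm_one_eq_lintegral_enorm, integral_norm_eq_lintegral_enorm (hH.sub hgi).1]
    simp only [Pi.sub_apply, Real.norm_eq_abs] at this
    rw [this]
    exact ENNReal.toReal_le_of_le_ofReal (by linarith) hg.le
  have habs : Integrable (fun w => |H w - g w|) Q := (hH.sub hgi).abs
  have b1 : |∫ p in Prod.fst ⁻¹' A, H p.2 ∂π - ∫ p in Prod.fst ⁻¹' A, g p.2 ∂π| ≤ ε / 2 := by
    rw [← integral_sub (hint H hH).integrableOn (hint g hgi).integrableOn]
    calc _ ≤ ∫ p in Prod.fst ⁻¹' A, |H p.2 - g p.2| ∂π := abs_integral_le_integral_abs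
      _ ≤ ∫ p, |H p.2 - g p.2| ∂π := setIntegral_le_integral (hint _ habs)
          (Eventually.of_forall fun p => abs_nonneg _)
      _ = ∫ w, |H w - g w| ∂Q := by
          rw [← hπ, integral_map measurable_snd.aemeasurable (by rw [hπ]; exact habs.1)]
      _ ≤ _ := hd
  have b2 : |l (Set.indicator (Prod.fst ⁻¹' A) (fun p => H p.2)) -
      l (Set.indicator (Prod.fst ⁻¹' A) (fun p => g p.2))| ≤ ε / 2 := by
    rw [← map_sub, ← Set.indicator_sub']
    refine (p1 _ _ habs ?_).trans hd
    intro x w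
    by_cases hx : x ∈ A <;> simp [Set.indicator, hx]
  rw [Real.dist_eq]
  rw [simp_case g] at b1
  rw [abs_le] at *
  constructor <;> linarith [b1.1, b1.2, b2.1, b2.2]


lemma exists_coupling {d : ℕ} {Ω S : Type} [MeasurableSpace Ω] (P : Measure Ω)
    [IsProbabilityMeasure P] [MeasurableSpace S]
    (X Y : Ω → Euc d) (Z : Ω → S)
    (hX : Measurable X) (hY : Measurable Y) (hZ : Measurable Z)
    (hXi : Integrable X P) (hYi : Integrable Y P)
    (hicx : CondICXLe P (MeasurableSpace.comap Z inferInstance) X Y) :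
    ∃ π : Measure (Euc d × (Euc d × S)), IsProbabilityMeasure π ∧
      π.map Prod.snd = P.map (fun ω => (Y ω, Z ω)) ∧
      π.map (fun p => (p.1, p.2.2)) = P.map (fun ω => (X ω, Z ω)) ∧
      ∀ A B, MeasurableSet A → MeasurableSet B → ∀ j,
        ∫ ω in X ⁻¹' A ∩ Z ⁻¹' B, X ω j ∂P ≤
          ∫ p in {p : Euc d × (Euc d × S) | p.1 ∈ A ∧ p.2.2 ∈ B}, p.2.1 j ∂π := by
  classical
  obtain ⟨l, p1, p2, p3, p4⟩ := exists_functional P X Y Z hX hY hZ hXi hYi hicx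
  set Q := P.map (fun ω => (Y ω, Z ω)) with hQ
  have : IsProbabilityMeasure Q := Measure.isProbabilityMeasure_map (hY.prodMk hZ).aemeasurable
  have : IsProbabilityMeasure (P.map X) := Measure.isProbabilityMeasure_map hX.aemeasurable
  have hbd : ∀ (C : Set (Euc d × (Euc d × S))) x w,
      |Set.indicator C (fun _ => (1:ℝ)) (x, w)| ≤ (fun _ : Euc d × S => (1:ℝ)) w := by
    intro C x w
    by_cases h : (x, w) ∈ C <;> simp [Set.indicator, h]
  have hXZ : ∀ A B, MeasurableSet A → MeasurableSet B →
      l (Set.indicator {p | p.1 ∈ A ∧ p.2.2 ∈ B} (fun _ => 1)) =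
        P.real (X ⁻¹' A ∩ Z ⁻¹' B) := by
    intro A B hA hB
    have e1 := p4 A B hA hB (1, 0) (by simp)
    have e2 := p4 A B hA hB (-1, 0) (by simp)
    simp only [affL, Pi.zero_apply, zero_mul, Finset.sum_const_zero, zero_sub, neg_neg,
      integral_const, smul_eq_mul, mul_one, mul_neg, measureReal_restrict_apply_univ] at e1 e2
    have e3 : Set.indicator {p : Euc d × (Euc d × S) | p.1 ∈ A ∧ p.2.2 ∈ B} (fun _ => (-1:ℝ)) =
        - Set.indicator {p : Euc d × (Euc d × S) | p.1 ∈ A ∧ p.2.2 ∈ B} (fun _ => (1:ℝ)) := by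
      rw [← Set.indicator_neg']
      rfl
    rw [e3, map_neg] at e2
    linarith
  obtain ⟨π, hπ⟩ := bimeasure_exists Q (P.map X)
    (fun A D => l (Set.indicator (A ×ˢ D) (fun _ => 1)))
    (fun A D => p2 _ (fun _ => 1) (integrable_const _) (hbd _)
      (fun p => Set.indicator_nonneg (fun _ _ => zero_le_one) p))
    (fun A A' D hd => by
      rw [← map_add, Set.union_prod, Set.indicator_union_of_disjoint]
      · rfl
      · exact Set.disjoint_prod.2 (Or.inl hd))
    (fun A D D' hd => by
      rw [← map_add, Set.prod_union, Set.indicator_union_of_disjoint]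
      · rfl
      · exact Set.disjoint_prod.2 (Or.inr hd))
    (fun D hD => by
      have := p3 (D.indicator (fun _ => 1)) ((integrable_const _).indicator hD)
      rw [integral_indicator_const _ hD, smul_eq_mul, mul_one] at this
      rw [← this]
      congr 1
      ext p
      by_cases h : p.2 ∈ D <;> simp [Set.indicator, h])
    (fun A hA => by
      have := hXZ A Set.univ hA MeasurableSet.univ
      rw [map_measureReal_apply hX hA]
      simp only [Set.preimage_univ, Set.inter_univ] at this
      rw [← this]
      congr 2)
  have hnn : ∀ A D, 0 ≤ l (Set.indicator (A ×ˢ D) (fun _ => 1)) :=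
    fun A D => p2 _ (fun _ => 1) (integrable_const _) (hbd _)
      (fun p => Set.indicator_nonneg (fun _ _ => zero_le_one) p)
  have hrect : ∀ A D, MeasurableSet A → MeasurableSet D →
      π.real (A ×ˢ D) = l (Set.indicator (A ×ˢ D) (fun _ => 1)) := by
    intro A D hA hD
    rw [measureReal_def, hπ A D hA hD, ENNReal.toReal_ofReal (hnn A D)]
  have hsnd : π.map Prod.snd = Q := by
    ext D hD
    rw [Measure.map_apply measurable_snd hD]
    have e : (Prod.snd ⁻¹' D : Set (Euc d × (Euc d × S))) = Set.univ ×ˢ D := by ext; simp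
    rw [e, hπ _ _ MeasurableSet.univ hD]
    have := p3 (D.indicator (fun _ => 1)) ((integrable_const _).indicator hD)
    rw [integral_indicator_const _ hD, smul_eq_mul, mul_one] at this
    have e2 : l (Set.indicator (Set.univ ×ˢ D) (fun _ => 1)) = Q.real D := by
      rw [← this]
      congr 1
      ext p
      by_cases h : p.2 ∈ D <;> simp [Set.indicator, h]
    rw [e2]
    simp
  have hprob : IsProbabilityMeasure π := by
    refine ⟨?_⟩
    have : Q Set.univ = 1 := measure_univ
    rw [← hsnd, Measure.map_apply measurable_snd MeasurableSet.univ] at this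
    simpa using this
  have hm13 : Measurable (fun p : Euc d × (Euc d × S) => (p.1, p.2.2)) := by fun_prop
  have hset : ∀ (A : Set (Euc d)) (B : Set S),
      {p : Euc d × (Euc d × S) | p.1 ∈ A ∧ p.2.2 ∈ B} = A ×ˢ (Set.univ ×ˢ B) := by
    intro A B; ext; simp
  refine ⟨π, hprob, hsnd, ?_, ?_⟩
  · have : IsProbabilityMeasure (π.map (fun p => (p.1, p.2.2))) :=
      Measure.isProbabilityMeasure_map hm13.aemeasurable
    refine Measure.ext_prod fun {A B} hA hB => ?_
    rw [Measure.map_apply hm13 (hA.prod hB), Measure.map_apply (hX.prodMk hZ) (hA.prod hB)]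
    have e : (fun p : Euc d × (Euc d × S) => (p.1, p.2.2)) ⁻¹' (A ×ˢ B) =
      A ×ˢ (Set.univ ×ˢ B) := by ext; simp
    rw [e, hπ _ _ hA (MeasurableSet.univ.prod hB), ← hset, hXZ A B hA hB]
    simp [Set.mk_preimage_prod]
  · intro A B hA hB j
    have hYj : Integrable (fun w : Euc d × S => w.1 j) Q := by
      refine (integrable_map_measure ?_ (hY.prodMk hZ).aemeasurable).2 (coord_integrable hYi j)
      exact Measurable.aestronglyMeasurable (by fun_prop)
    have hmB : MeasurableSet (Prod.snd ⁻¹' B : Set (Euc d × S)) := measurable_snd hB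
    have e1 := func_repr Q l p1 π hsnd hrect A hA _ (hYj.indicator hmB)
    have e2 := p4 A B hA hB (0, Pi.single j 1) (fun i => by
      by_cases h : i = j
      · subst h; simp
      · simp [h])
    have aff : ∀ y : Euc d, affL ((0 : ℝ), Pi.single j 1) y = y j := by
      intro y
      simp [affL, Pi.single_apply]
    simp only [aff, integral_neg] at e2
    have e3 : Set.indicator {p : Euc d × (Euc d × S) | p.1 ∈ A ∧ p.2.2 ∈ B}
        (fun p => - p.2.1 j) = - Set.indicator (Prod.fst ⁻¹' A) (fun p =>
          (Prod.snd ⁻¹' B).indicator (fun w : Euc d × S => w.1 j) p.2) := by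
      ext p
      by_cases h1 : p.1 ∈ A <;> by_cases h2 : p.2.2 ∈ B <;> simp [Set.indicator, h1, h2]
    rw [e3, map_neg, ← e1] at e2
    have e4 : ∫ p in {p : Euc d × (Euc d × S) | p.1 ∈ A ∧ p.2.2 ∈ B}, p.2.1 j ∂π =
        ∫ p in Prod.fst ⁻¹' A,
          (Prod.snd ⁻¹' B).indicator (fun w : Euc d × S => w.1 j) p.2 ∂π := by
      rw [← integral_indicator (measurable_fst hA), ← integral_indicator (by
        rw [hset]; exact hA.prod (MeasurableSet.univ.prod hB))]
      congr 1
      ext p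
      by_cases h1 : p.1 ∈ A <;> by_cases h2 : p.2.2 ∈ B <;> simp [Set.indicator, h1, h2]
    rw [e4]
    linarith


lemma condExp_nonneg_of_sets {Ω : Type*} {m m0 : MeasurableSpace Ω} (hm : m ≤ m0)
    (P : Measure Ω) [IsProbabilityMeasure P] (k : Ω → ℝ) (hk : Integrable k P)
    (h : ∀ s, MeasurableSet[m] s → 0 ≤ ∫ ω in s, k ω ∂P) : 0 ≤ᵐ[P] P[k | m] := by
  refine ae_of_ae_trim hm ?_
  refine ae_nonneg_of_forall_setIntegral_nonneg
    (integrable_condExp.trim hm stronglyMeasurable_condExp) fun s hs _ => ?_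
  rw [← setIntegral_trim hm stronglyMeasurable_condExp hs, setIntegral_condExp hm hk hs]
  exact h s hs

lemma condExp_le_of_sets {Ω : Type*} {m m0 : MeasurableSpace Ω} (hm : m ≤ m0)
    (P : Measure Ω) [IsProbabilityMeasure P] (f g : Ω → ℝ) (hf : Integrable f P)
    (hg : Integrable g P)
    (h : ∀ s, MeasurableSet[m] s → ∫ ω in s, f ω ∂P ≤ ∫ ω in s, g ω ∂P) :
    P[f | m] ≤ᵐ[P] P[g | m] := by
  have h1 := condExp_nonneg_of_sets hm P (g - f) (hg.sub hf) (fun s hs => by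
    simp only [Pi.sub_apply]
    rw [integral_sub hg.integrableOn hf.integrableOn]
    linarith [h s hs])
  filter_upwards [h1, condExp_sub hg hf m] with ω h1 h2
  rw [h2] at h1
  simpa using h1

lemma sets_of_rect {Ω E S : Type*} [MeasurableSpace Ω] [MeasurableSpace E] [MeasurableSpace S]
    (P : Measure Ω) [IsProbabilityMeasure P] (V : Ω → E × S) (hV : Measurable V)
    (k : Ω → ℝ) (hk : Integrable k P)
    (h : ∀ A B, MeasurableSet A → MeasurableSet B → 0 ≤ ∫ ω in V ⁻¹' (A ×ˢ B), k ω ∂P)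
    (C : Set (E × S)) (hC : MeasurableSet C) : 0 ≤ ∫ ω in V ⁻¹' C, k ω ∂P := by
  have f1 : IsFiniteMeasure (P.withDensity fun ω => ENNReal.ofReal (k ω)) :=
    isFiniteMeasure_withDensity_ofReal hk.2
  have f2 : IsFiniteMeasure (P.withDensity fun ω => ENNReal.ofReal (-k ω)) :=
    isFiniteMeasure_withDensity_ofReal hk.neg.2
  have fin1 : ∀ s : Set Ω, ∫⁻ ω in s, ENNReal.ofReal (k ω) ∂P ≠ ⊤ := fun s =>
    (hk.integrableOn (s := s)).lintegral_lt_top.ne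
  have fin2 : ∀ s : Set Ω, ∫⁻ ω in s, ENNReal.ofReal (-k ω) ∂P ≠ ⊤ := fun s =>
    (hk.neg.integrableOn (s := s)).lintegral_lt_top.ne
  have key := measure_le_of_rect ((P.withDensity fun ω => ENNReal.ofReal (k ω)).map V)
    ((P.withDensity fun ω => ENNReal.ofReal (-k ω)).map V) (fun A B hA hB => by
      rw [Measure.map_apply hV (hA.prod hB), Measure.map_apply hV (hA.prod hB),
        withDensity_apply _ (hV (hA.prod hB)), withDensity_apply _ (hV (hA.prod hB))]
      have := h A B hA hB
      rw [integral_eq_lintegral_pos_part_sub_lintegral_neg_part hk.integrableOn] at this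
      rw [← ENNReal.toReal_le_toReal (fin2 _) (fin1 _)]
      linarith) C
  rw [Measure.map_apply hV hC, Measure.map_apply hV hC,
    withDensity_apply _ (hV hC), withDensity_apply _ (hV hC),
    ← ENNReal.toReal_le_toReal (fin2 _) (fin1 _)] at key
  rw [integral_eq_lintegral_pos_part_sub_lintegral_neg_part hk.integrableOn]
  linarith

lemma condExp_coord {d : ℕ} {Ω : Type*} {m m0 : MeasurableSpace Ω}
    (P : Measure Ω) [IsProbabilityMeasure P] (hm : m ≤ m0) (Y : Ω → Euc d) (hY : Integrable Y P)
    (j : Fin d) : P[(fun ω => Y ω j) | m] =ᵐ[P] fun ω => (P[Y | m]) ω j :=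
  ((EuclideanSpace.proj (𝕜 := ℝ) j : Euc d →L[ℝ] ℝ).comp_condExp_comm hY).symm

lemma forward {d : ℕ} {Ω S : Type} [MeasurableSpace Ω] (P : Measure Ω)
    [IsProbabilityMeasure P] [MeasurableSpace S]
    (X Y : Ω → Euc d) (Z : Ω → S)
    (hX : Measurable X) (hY : Measurable Y) (hZ : Measurable Z)
    (hXi : Integrable X P) (hYi : Integrable Y P)
    (hicx : CondICXLe P (MeasurableSpace.comap Z inferInstance) X Y) :
    ∃ (Ω' : Type) (_ : MeasurableSpace Ω') (P' : Measure Ω'),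
        IsProbabilityMeasure P' ∧
        ∃ (X' Y' : Ω' → Euc d) (Z' : Ω' → S),
          Measurable X' ∧ Measurable Y' ∧ Measurable Z' ∧
          P'.map (fun ω => (X' ω, Z' ω)) = P.map (fun ω => (X ω, Z ω)) ∧
          P'.map (fun ω => (Y' ω, Z' ω)) = P.map (fun ω => (Y ω, Z ω)) ∧
          (∀ᵐ ω ∂P', ∀ i,
            X' ω i ≤
              (P'[Y' | MeasurableSpace.comap (fun ω => (X' ω, Z' ω)) inferInstance]) ω i) := by
  obtain ⟨π, hprob, h1, h2, h3⟩ := exists_coupling P X Y Z hX hY hZ hXi hYi hicx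
  refine ⟨Euc d × (Euc d × S), inferInstance, π, hprob, fun p => p.1, fun p => p.2.1,
    fun p => p.2.2, by fun_prop, by fun_prop, by fun_prop, h2, h1, ?_⟩
  have hV : Measurable (fun p : Euc d × (Euc d × S) => (p.1, p.2.2)) := by fun_prop
  have hXi' : Integrable (fun p : Euc d × (Euc d × S) => p.1) π := by
    have : Integrable (fun w : Euc d × S => w.1) (π.map (fun p => (p.1, p.2.2))) := by
      rw [h2]
      exact (integrable_map_measure measurable_fst.aestronglyMeasurable
        (hX.prodMk hZ).aemeasurable).2 hXi
    exact this.comp_measurable hV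
  have hYi' : Integrable (fun p : Euc d × (Euc d × S) => p.2.1) π := by
    have : Integrable (fun w : Euc d × S => w.1) (π.map Prod.snd) := by
      rw [h1]
      exact (integrable_map_measure measurable_fst.aestronglyMeasurable
        (hY.prodMk hZ).aemeasurable).2 hYi
    exact this.comp_measurable measurable_snd
  refine ae_all_iff.2 fun j => ?_
  have hXj := coord_integrable hXi' j
  have hYj := coord_integrable hYi' j
  have hmono := condExp_le_of_sets hV.comap_le π _ _ hXj hYj (by
    rintro _ ⟨C, hC, rfl⟩
    have := sets_of_rect π _ hV _ (hYj.sub hXj) (fun A B hA hB => by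
      simp only [Pi.sub_apply]
      rw [integral_sub hYj.integrableOn hXj.integrableOn]
      have e := h3 A B hA hB j
      have e2 : ∫ ω in X ⁻¹' A ∩ Z ⁻¹' B, X ω j ∂P =
          ∫ p in (fun p : Euc d × (Euc d × S) => (p.1, p.2.2)) ⁻¹' (A ×ˢ B), p.1 j ∂π := by
        have hj : Measurable (fun w : Euc d × S => w.1 j) := by fun_prop
        have a1 := setIntegral_map (μ := π) (g := fun p : Euc d × (Euc d × S) => (p.1, p.2.2))
          (f := fun w : Euc d × S => w.1 j)
          (hA.prod hB) hj.aestronglyMeasurable hV.aemeasurable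
        have a2 := setIntegral_map (μ := P) (g := fun ω => (X ω, Z ω))
          (f := fun w : Euc d × S => w.1 j)
          (hA.prod hB) hj.aestronglyMeasurable (hX.prodMk hZ).aemeasurable
        rw [h2] at a1
        exact a2.symm.trans a1
      rw [e2] at e
      exact sub_nonneg.2 e) C hC
    simp only [Pi.sub_apply] at this
    rw [integral_sub hYj.integrableOn hXj.integrableOn] at this
    linarith)
  have hXm : π[(fun p : Euc d × (Euc d × S) => p.1 j) | MeasurableSpace.comap
      (fun p : Euc d × (Euc d × S) => (p.1, p.2.2)) inferInstance] = fun p => p.1 j := by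
    refine condExp_of_stronglyMeasurable hV.comap_le ?_ hXj
    have hj : Measurable (fun w : Euc d × S => w.1 j) := by fun_prop
    exact (hj.comp (comap_measurable
      (fun p : Euc d × (Euc d × S) => (p.1, p.2.2)))).stronglyMeasurable
  rw [hXm] at hmono
  filter_upwards [hmono, condExp_coord π hV.comap_le _ hYi' j] with p a1 a2
  rw [← a2]
  exact a1

lemma backward {d : ℕ} {Ω S Ω' : Type} [MeasurableSpace Ω] (P : Measure Ω)
    [IsProbabilityMeasure P] [MeasurableSpace S]
    (X Y : Ω → Euc d) (Z : Ω → S)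
    (hX : Measurable X) (hY : Measurable Y) (hZ : Measurable Z)
    (hYi : Integrable Y P)
    [MeasurableSpace Ω'] (P' : Measure Ω') [IsProbabilityMeasure P']
    (X' Y' : Ω' → Euc d) (Z' : Ω' → S)
    (hX' : Measurable X') (hY' : Measurable Y') (hZ' : Measurable Z')
    (h1 : P'.map (fun ω => (X' ω, Z' ω)) = P.map (fun ω => (X ω, Z ω)))
    (h2 : P'.map (fun ω => (Y' ω, Z' ω)) = P.map (fun ω => (Y ω, Z ω)))
    (h3 : ∀ᵐ ω ∂P', ∀ i, X' ω i ≤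
        (P'[Y' | MeasurableSpace.comap (fun ω => (X' ω, Z' ω)) inferInstance]) ω i) :
    CondICXLe P (MeasurableSpace.comap Z inferInstance) X Y := by
  intro φ hφ hmono hφX hφY
  have hφc : Continuous φ := by
    rw [← continuousOn_univ]
    exact hφ.continuousOn isOpen_univ
  have hφm : Measurable φ := hφc.measurable
  have tr : ∀ (W : Ω → Euc d) (W' : Ω' → Euc d), Measurable W → Measurable W' →
      P'.map (fun ω => (W' ω, Z' ω)) = P.map (fun ω => (W ω, Z ω)) →
      ∀ {F : Type} [NormedAddCommGroup F] [NormedSpace ℝ F] (f : Euc d → F),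
      StronglyMeasurable f → Integrable (fun ω => f (W ω)) P →
      Integrable (fun ω => f (W' ω)) P' ∧
      ∀ B, MeasurableSet B → ∫ ω in Z' ⁻¹' B, f (W' ω) ∂P' = ∫ ω in Z ⁻¹' B, f (W ω) ∂P := by
    intro W W' hW hW' hlaw F _ _ f hf hfi
    have hf1 : StronglyMeasurable (fun w : Euc d × S => f w.1) := hf.comp_measurable measurable_fst
    have hmm := (hW.prodMk hZ)
    have hmm' := (hW'.prodMk hZ')
    constructor
    · have : Integrable (fun w : Euc d × S => f w.1) (P'.map (fun ω => (W' ω, Z' ω))) := by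
        rw [hlaw]
        exact (integrable_map_measure hf1.aestronglyMeasurable hmm.aemeasurable).2 hfi
      exact this.comp_measurable hmm'
    · intro B hB
      have a1 := setIntegral_map (μ := P') (g := fun ω => (W' ω, Z' ω))
        (f := fun w : Euc d × S => f w.1) (measurable_snd hB : MeasurableSet (Prod.snd ⁻¹' B))
        hf1.aestronglyMeasurable hmm'.aemeasurable
      have a2 := setIntegral_map (μ := P) (g := fun ω => (W ω, Z ω))
        (f := fun w : Euc d × S => f w.1) (measurable_snd hB : MeasurableSet (Prod.snd ⁻¹' B))
        hf1.aestronglyMeasurable hmm.aemeasurable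
      rw [hlaw] at a1
      exact a1.symm.trans a2
  obtain ⟨iX, eX⟩ := tr X X' hX hX' h1 φ hφm.stronglyMeasurable hφX
  obtain ⟨iY, eY⟩ := tr Y Y' hY hY' h2 φ hφm.stronglyMeasurable hφY
  obtain ⟨hYi', -⟩ := tr Y Y' hY hY' h2 (fun y => y) stronglyMeasurable_id hYi
  have hV : Measurable (fun ω => (X' ω, Z' ω)) := hX'.prodMk hZ'
  refine condExp_le_of_sets hZ.comap_le P _ _ hφX hφY ?_
  rintro _ ⟨B, hB, rfl⟩
  rw [← eX B hB, ← eY B hB]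
  have hs : MeasurableSet[MeasurableSpace.comap (fun ω => (X' ω, Z' ω)) inferInstance]
      (Z' ⁻¹' B) := ⟨Prod.snd ⁻¹' B, measurable_snd hB, rfl⟩
  rw [← setIntegral_condExp hV.comap_le iY hs]
  refine setIntegral_mono_ae iX.integrableOn integrable_condExp.integrableOn ?_
  filter_upwards [h3, ConvexOn.map_condExp_le_of_finiteDimensional hV.comap_le hφ hYi' iY]
    with ω a1 a2
  exact (hmono _ _ a1).trans a2


/-- Conditional Strassen theorem (increasing convex order): X | Z ≤icx Y | Z iff
there is a Z-conditional coupling (X̂, Ŷ, Ẑ) with X̂ ≤ E(Ŷ | σ(X̂, Ẑ))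
coordinatewise a.s. -/
theorem conditional_strassen_icx
    (d : ℕ) (hd : 1 ≤ d) {Ω : Type} [MeasurableSpace Ω] (P : Measure Ω)
    [IsProbabilityMeasure P] {S : Type} [MeasurableSpace S]
    (X Y : Ω → Euc d) (Z : Ω → S)
    (hX : Measurable X) (hY : Measurable Y) (hZ : Measurable Z)
    (hXi : Integrable X P) (hYi : Integrable Y P) :
    CondICXLe P (MeasurableSpace.comap Z inferInstance) X Y ↔
      ∃ (Ω' : Type) (_ : MeasurableSpace Ω') (P' : Measure Ω'),
        IsProbabilityMeasure P' ∧
        ∃ (X' Y' : Ω' → Euc d) (Z' : Ω' → S),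
          Measurable X' ∧ Measurable Y' ∧ Measurable Z' ∧
          P'.map (fun ω => (X' ω, Z' ω)) = P.map (fun ω => (X ω, Z ω)) ∧
          P'.map (fun ω => (Y' ω, Z' ω)) = P.map (fun ω => (Y ω, Z ω)) ∧
          (∀ᵐ ω ∂P', ∀ i,
            X' ω i ≤
              (P'[Y' | MeasurableSpace.comap (fun ω => (X' ω, Z' ω)) inferInstance]) ω i) := by
  constructor
  · exact forward P X Y Z hX hY hZ hXi hYi
  · rintro ⟨Ω', mΩ', P', hP', X', Y', Z', hX', hY', hZ', h1, h2, h3⟩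
    exact backward P X Y Z hX hY hZ hYi P' X' Y' Z' hX' hY' hZ' h1 h2 h3
end
end

section
/- There exist countable families C of convex functions ℝ^d → ℝ and C⁺ of increasing convex functions ℝ^d → ℝ, each of whose members is Lipschitz, such that for all integrable random vectors X, Y in ℝ^d: X ≤cx Y if and only if E φ(X) ≤ E φ(Y) for all φ ∈ C, and X ≤icx Y if and only if E φ(X) ≤ E φ(Y) for all φ ∈ C⁺. -/
open MeasureTheory ProbabilityTheory Filter

noncomputable section

def CXLe2 {d : ℕ} {Ω Ω' : Type} {mΩ : MeasurableSpace Ω} {mΩ' : MeasurableSpace Ω'}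
    (P : Measure Ω) (P' : Measure Ω') (X : Ω → Euc d) (Y : Ω' → Euc d) : Prop :=
  ∀ φ : Euc d → ℝ, ConvexOn ℝ Set.univ φ →
    Integrable (fun ω => φ (X ω)) P → Integrable (fun ω => φ (Y ω)) P' →
    ∫ ω, φ (X ω) ∂P ≤ ∫ ω, φ (Y ω) ∂P'

def ICXLe2 {d : ℕ} {Ω Ω' : Type} {mΩ : MeasurableSpace Ω} {mΩ' : MeasurableSpace Ω'}
    (P : Measure Ω) (P' : Measure Ω') (X : Ω → Euc d) (Y : Ω' → Euc d) : Prop :=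
  ∀ φ : Euc d → ℝ, ConvexOn ℝ Set.univ φ → CoordMono φ →
    Integrable (fun ω => φ (X ω)) P → Integrable (fun ω => φ (Y ω)) P' →
    ∫ ω, φ (X ω) ∂P ≤ ∫ ω, φ (Y ω) ∂P'

theorem aux_dense {d : ℕ} (Q : (Euc d → ℝ) → Prop) :
    ∃ C : Set (Euc d → ℝ), C.Countable ∧
      (∀ φ ∈ C, ConvexOn ℝ Set.univ φ ∧ Q φ ∧ ∃ K : NNReal, LipschitzWith K φ) ∧
      ∀ φ : Euc d → ℝ, ConvexOn ℝ Set.univ φ → Q φ → (∃ K : NNReal, LipschitzWith K φ) →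
        ∃ (n : ℕ) (u : ℕ → Euc d → ℝ), (∀ k, u k ∈ C) ∧ (∀ k, LipschitzWith n (u k)) ∧
          ∀ x, Tendsto (fun k => u k x) atTop (nhds (φ x)) := by
  have hsc : SecondCountableTopology C(Euc d, ℝ) := inferInstance
  have h : ∀ n : ℕ, ∃ D : Set {f : C(Euc d, ℝ) // ConvexOn ℝ Set.univ (f : Euc d → ℝ) ∧
      Q f ∧ LipschitzWith n f}, D.Countable ∧ Dense D :=
    fun n => by
      have := (Topology.IsEmbedding.subtypeVal (p := fun f : C(Euc d, ℝ) =>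
        ConvexOn ℝ Set.univ (f : Euc d → ℝ) ∧ Q f ∧ LipschitzWith n f)).secondCountableTopology
      exact TopologicalSpace.exists_countable_dense _
  choose D hDc hDd using h
  refine ⟨⋃ n, (fun f => ((f.1 : C(Euc d, ℝ)) : Euc d → ℝ)) '' D n,
    Set.countable_iUnion fun n => (hDc n).image _, ?_, ?_⟩
  · intro φ hφ
    obtain ⟨n, f, hf, rfl⟩ := Set.mem_iUnion.1 hφ
    exact ⟨f.2.1, f.2.2.1, _, f.2.2.2⟩
  · rintro φ hc hQ ⟨K, hK⟩
    obtain ⟨n, hn⟩ := exists_nat_ge K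
    have hK' : LipschitzWith n φ := hK.weaken hn
    let f : {f : C(Euc d, ℝ) // ConvexOn ℝ Set.univ (f : Euc d → ℝ) ∧
      Q f ∧ LipschitzWith n f} := ⟨⟨φ, hK.continuous⟩, hc, hQ, hK'⟩
    obtain ⟨v, hv, hvt⟩ := mem_closure_iff_seq_limit.1 (hDd n f)
    refine ⟨n, fun k => v k, fun k => Set.mem_iUnion.2 ⟨n, v k, hv k, rfl⟩,
      fun k => (v k).2.2.2, fun x => ?_⟩
    have h1 : Continuous fun g : {f : C(Euc d, ℝ) // ConvexOn ℝ Set.univ (f : Euc d → ℝ) ∧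
      Q f ∧ LipschitzWith n f} => g.1 x :=
      (continuous_eval_const x).comp continuous_subtype_val
    exact (h1.tendsto f).comp hvt

theorem aux_int {d : ℕ} {Ω : Type} {mΩ : MeasurableSpace Ω} (P : Measure Ω)
    [IsProbabilityMeasure P] (X : Ω → Euc d) (hX : Integrable X P) (φ : Euc d → ℝ)
    (n : ℕ) (u : ℕ → Euc d → ℝ) (hu : ∀ k, LipschitzWith n (u k))
    (hl : ∀ x, Tendsto (fun k => u k x) atTop (nhds (φ x))) :
    Tendsto (fun k => ∫ ω, u k (X ω) ∂P) atTop (nhds (∫ ω, φ (X ω) ∂P)) := by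
  obtain ⟨M, hM⟩ := (hl 0).norm.bddAbove_range
  refine tendsto_integral_of_dominated_convergence (fun ω => n * ‖X ω‖ + M) ?_ ?_ ?_ ?_
  · exact fun k => (hu k).continuous.comp_aestronglyMeasurable hX.1
  · exact (hX.norm.const_mul _).add (integrable_const _)
  · refine fun k => ae_of_all _ fun ω => ?_
    have h1 := (hu k).dist_le_mul (X ω) 0
    rw [dist_zero_right, Real.dist_eq] at h1
    have h2 : ‖u k 0‖ ≤ M := hM ⟨k, rfl⟩
    rw [Real.norm_eq_abs] at *
    have h3 := abs_sub_abs_le_abs_sub (u k (X ω)) (u k 0)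
    simp only [NNReal.coe_natCast] at h1
    linarith
  · exact ae_of_all _ fun ω => hl _

theorem aux_approx {d : ℕ} (Q : (Euc d → ℝ) → Prop)
    (hQs : ∀ f g, Q f → Q g → Q (f ⊔ g))
    (hQa : ∀ φ, Q φ → ∀ (l : Euc d →L[ℝ] ℝ) (c : ℝ), ⇑l + Function.const (Euc d) c ≤ φ →
      Q (⇑l + Function.const (Euc d) c))
    (φ : Euc d → ℝ) (hc : ConvexOn ℝ Set.univ φ) (hQ : Q φ) :
    ∃ u : ℕ → Euc d → ℝ, (∀ k, ConvexOn ℝ Set.univ (u k) ∧ Q (u k) ∧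
        ∃ K : NNReal, LipschitzWith K (u k)) ∧ (∀ k x, u 0 x ≤ u k x ∧ u k x ≤ φ x) ∧
      ∀ x, Tendsto (fun k => u k x) atTop (nhds (φ x)) := by
  have hcont : Continuous φ := continuousOn_univ.1 (hc.continuousOn isOpen_univ)
  obtain ⟨l, c, hle, hsup⟩ := hc.real_univ_sSup_of_nat_affine_eq hcont.lowerSemicontinuous
  let a : ℕ → Euc d → ℝ := fun i => ⇑(l i) + Function.const (Euc d) (c i)
  have hbd : BddAbove (Set.range a) := ⟨φ, by rintro _ ⟨i, rfl⟩; exact hle i⟩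
  have hau : ∀ k, partialSups a k ≤ φ := fun k => partialSups_le a k φ fun i _ => hle i
  refine ⟨fun k => partialSups a k, fun k => ?_, fun k x => ⟨?_, hau k x⟩, fun x => ?_⟩
  · have ha : ∀ i, ConvexOn ℝ Set.univ (a i) ∧ Q (a i) ∧
        ∃ K : NNReal, LipschitzWith K (a i) := by
      intro i
      refine ⟨((l i).toLinearMap.convexOn convex_univ).add (convexOn_const _ convex_univ),
        hQa φ hQ _ _ (hle i), _, (l i).lipschitz.add (LipschitzWith.const _)⟩
    induction k with
    | zero => simpa using ha 0
    | succ k ih =>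
      simp only [partialSups_add_one]
      obtain ⟨h1, h2, K, h3⟩ := ih
      obtain ⟨g1, g2, K', g3⟩ := ha (k+1)
      exact ⟨h1.sup g1, hQs _ _ h2 g2, _, h3.max g3⟩
  · exact (partialSups a).monotone (Nat.zero_le k) x
  · have h1 : φ x = ⨆ k, partialSups a k x := by
      have : (⨆ k, partialSups a k) = φ := (ciSup_partialSups_eq hbd).trans hsup
      rw [← this, iSup_apply]
    rw [h1]
    exact tendsto_atTop_ciSup (fun i j hij => (partialSups a).monotone hij x)
      ⟨φ x, by rintro _ ⟨k, rfl⟩; exact hau k x⟩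

theorem aux_int2 {d : ℕ} {Ω : Type} {mΩ : MeasurableSpace Ω} (P : Measure Ω)
    [IsProbabilityMeasure P] (X : Ω → Euc d) (hX : Integrable X P) (φ : Euc d → ℝ)
    (hφ : Integrable (fun ω => φ (X ω)) P)
    (u : ℕ → Euc d → ℝ) (hu : ∀ k, ∃ K : NNReal, LipschitzWith K (u k))
    (hb : ∀ k x, u 0 x ≤ u k x ∧ u k x ≤ φ x)
    (hl : ∀ x, Tendsto (fun k => u k x) atTop (nhds (φ x))) :
    Tendsto (fun k => ∫ ω, u k (X ω) ∂P) atTop (nhds (∫ ω, φ (X ω) ∂P)) := by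
  have hm : ∀ k, AEStronglyMeasurable (fun ω => u k (X ω)) P := fun k =>
    (hu k).choose_spec.continuous.comp_aestronglyMeasurable hX.1
  have h0 : Integrable (fun ω => u 0 (X ω)) P := by
    obtain ⟨K, hK⟩ := hu 0
    refine Integrable.mono' (g := fun ω => K * ‖X ω‖ + |u 0 0|)
      ((hX.norm.const_mul _).add (integrable_const _)) (hm 0) (ae_of_all _ fun ω => ?_)
    have h1 := hK.dist_le_mul (X ω) 0
    rw [dist_zero_right, Real.dist_eq] at h1
    rw [Real.norm_eq_abs]
    have h3 := abs_sub_abs_le_abs_sub (u 0 (X ω)) (u 0 0)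
    linarith
  refine tendsto_integral_of_dominated_convergence
    (fun ω => ‖u 0 (X ω)‖ + ‖φ (X ω)‖) hm (h0.norm.add hφ.norm) ?_ ?_
  · refine fun k => ae_of_all _ fun ω => ?_
    obtain ⟨h1, h2⟩ := hb k (X ω)
    simp only [Real.norm_eq_abs]
    rw [abs_le]
    constructor
    · linarith [neg_abs_le (u 0 (X ω)), abs_nonneg (φ (X ω))]
    · linarith [le_abs_self (φ (X ω)), abs_nonneg (u 0 (X ω))]
  · exact ae_of_all _ fun ω => hl _

theorem aux_lip_int {d : ℕ} {Ω : Type} {mΩ : MeasurableSpace Ω} (P : Measure Ω)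
    [IsProbabilityMeasure P] (X : Ω → Euc d) (hX : Integrable X P) (φ : Euc d → ℝ)
    (hφ : ∃ K : NNReal, LipschitzWith K φ) : Integrable (fun ω => φ (X ω)) P := by
  obtain ⟨K, hK⟩ := hφ
  refine Integrable.mono' (g := fun ω => K * ‖X ω‖ + |φ 0|)
    ((hX.norm.const_mul _).add (integrable_const _))
    (hK.continuous.comp_aestronglyMeasurable hX.1) (ae_of_all _ fun ω => ?_)
  have h1 := hK.dist_le_mul (X ω) 0
  rw [dist_zero_right, Real.dist_eq] at h1
  rw [Real.norm_eq_abs]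
  have h3 := abs_sub_abs_le_abs_sub (φ (X ω)) (φ 0)
  linarith

theorem aux_main {d : ℕ} (Q : (Euc d → ℝ) → Prop)
    (hQs : ∀ f g, Q f → Q g → Q (f ⊔ g))
    (hQa : ∀ φ, Q φ → ∀ (l : Euc d →L[ℝ] ℝ) (c : ℝ), ⇑l + Function.const (Euc d) c ≤ φ →
      Q (⇑l + Function.const (Euc d) c)) :
    ∃ C : Set (Euc d → ℝ), C.Countable ∧
      (∀ φ ∈ C, ConvexOn ℝ Set.univ φ ∧ Q φ ∧ ∃ K : NNReal, LipschitzWith K φ) ∧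
      ∀ (Ω Ω' : Type) (mΩ : MeasurableSpace Ω) (mΩ' : MeasurableSpace Ω')
          (P : Measure Ω) (P' : Measure Ω'),
        IsProbabilityMeasure P → IsProbabilityMeasure P' →
        ∀ (X : Ω → Euc d) (Y : Ω' → Euc d), Integrable X P → Integrable Y P' →
          ((∀ φ : Euc d → ℝ, ConvexOn ℝ Set.univ φ → Q φ →
            Integrable (fun ω => φ (X ω)) P → Integrable (fun ω => φ (Y ω)) P' →
            ∫ ω, φ (X ω) ∂P ≤ ∫ ω, φ (Y ω) ∂P') ↔
            ∀ φ ∈ C, ∫ ω, φ (X ω) ∂P ≤ ∫ ω, φ (Y ω) ∂P') := by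
  obtain ⟨C, hC, hCp, hCd⟩ := aux_dense Q
  refine ⟨C, hC, hCp, ?_⟩
  intro Ω Ω' mΩ mΩ' P P' hP hP' X Y hX hY
  constructor
  · intro h φ hφ
    obtain ⟨h1, h2, h3⟩ := hCp φ hφ
    exact h φ h1 h2 (aux_lip_int P X hX φ h3) (aux_lip_int P' Y hY φ h3)
  · intro h φ hc hQ hi hi'
    obtain ⟨u, hu, hb, hl⟩ := aux_approx Q hQs hQa φ hc hQ
    refine le_of_tendsto_of_tendsto' (aux_int2 P X hX φ hi u (fun k => (hu k).2.2) hb hl)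
      (aux_int2 P' Y hY φ hi' u (fun k => (hu k).2.2) hb hl) fun k => ?_
    obtain ⟨n, v, hv, hvn, hvl⟩ := hCd (u k) (hu k).1 (hu k).2.1 (hu k).2.2
    exact le_of_tendsto_of_tendsto' (aux_int P X hX _ n v hvn hvl)
      (aux_int P' Y hY _ n v hvn hvl) fun j => h _ (hv j)

theorem aux_mono {d : ℕ} (φ : Euc d → ℝ) (hφ : CoordMono φ) (l : Euc d →L[ℝ] ℝ) (c : ℝ)
    (h : ⇑l + Function.const (Euc d) c ≤ φ) : CoordMono (⇑l + Function.const (Euc d) c) := by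
  intro x y hxy
  simp only [Pi.add_apply, Function.const_apply, add_le_add_iff_right]
  by_contra! hlt
  -- moving along `x - y` decreases `φ` but increases `l`
  obtain ⟨n, hn⟩ := exists_nat_gt ((φ 0 - c) / (l x - l y))
  have hpos : 0 < l x - l y := by linarith
  rw [div_lt_iff₀ hpos] at hn
  have h1 : φ ((n : ℝ) • (x - y)) ≤ φ 0 := by
    apply hφ
    intro i
    have := hxy i
    simp only [PiLp.smul_apply, PiLp.sub_apply, smul_eq_mul, PiLp.zero_apply]
    exact mul_nonpos_of_nonneg_of_nonpos (Nat.cast_nonneg n) (by linarith)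
  have h2 := h ((n : ℝ) • (x - y))
  simp only [Pi.add_apply, Function.const_apply, map_smul, map_sub, smul_eq_mul] at h2
  linarith

/-- There are countable families of Lipschitz (increasing) convex functions which
characterise the (increasing) convex order of integrable random vectors. -/
theorem countable_char_convex_orders (d : ℕ) (hd : 1 ≤ d) :
    ∃ C Cplus : Set (Euc d → ℝ),
      C.Countable ∧ Cplus.Countable ∧
      (∀ φ ∈ C, ConvexOn ℝ Set.univ φ ∧ ∃ K : NNReal, LipschitzWith K φ) ∧
      (∀ φ ∈ Cplus, ConvexOn ℝ Set.univ φ ∧ CoordMono φ ∧ ∃ K : NNReal, LipschitzWith K φ) ∧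
      (∀ (Ω Ω' : Type) (mΩ : MeasurableSpace Ω) (mΩ' : MeasurableSpace Ω')
          (P : Measure Ω) (P' : Measure Ω'),
        IsProbabilityMeasure P → IsProbabilityMeasure P' →
        ∀ (X : Ω → Euc d) (Y : Ω' → Euc d),
          Measurable X → Measurable Y → Integrable X P → Integrable Y P' →
          (CXLe2 P P' X Y ↔ ∀ φ ∈ C, ∫ ω, φ (X ω) ∂P ≤ ∫ ω, φ (Y ω) ∂P') ∧
          (ICXLe2 P P' X Y ↔ ∀ φ ∈ Cplus, ∫ ω, φ (X ω) ∂P ≤ ∫ ω, φ (Y ω) ∂P')) := by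
  obtain ⟨C, h1, h2, h3⟩ := aux_main (d := d) (fun _ => True) (fun _ _ _ _ => trivial)
    (fun _ _ _ _ _ => trivial)
  obtain ⟨C', h1', h2', h3'⟩ := aux_main (d := d) CoordMono
    (fun f g hf hg x y hxy => sup_le_sup (hf x y hxy) (hg x y hxy)) aux_mono
  refine ⟨C, C', h1, h1', fun φ hφ => ⟨(h2 φ hφ).1, (h2 φ hφ).2.2⟩, h2', ?_⟩
  intro Ω Ω' mΩ mΩ' P P' hP hP' X Y _ _ hX hY
  refine ⟨?_, h3' Ω Ω' mΩ mΩ' P P' hP hP' X Y hX hY⟩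
  rw [← h3 Ω Ω' mΩ mΩ' P P' hP hP' X Y hX hY]
  exact ⟨fun h φ hc _ => h φ hc, fun h φ hc => h φ hc trivial⟩
end
end

section
/- Let X and Y be integrable real-valued random variables. Then X ≤cx Y if and only if E|X − t| ≤ E|Y − t| for all t ∈ ℝ, and X ≤icx Y if and only if E(X − t)₊ ≤ E(Y − t)₊ for all t ∈ ℝ, where (x)₊ = max{0, x}. -/
open MeasureTheory

noncomputable section

def CXLeReal {Ω : Type} {mΩ : MeasurableSpace Ω} (P : Measure Ω) (X Y : Ω → ℝ) : Prop :=
  ∀ φ : ℝ → ℝ, ConvexOn ℝ Set.univ φ →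
    Integrable (fun ω => φ (X ω)) P → Integrable (fun ω => φ (Y ω)) P →
    ∫ ω, φ (X ω) ∂P ≤ ∫ ω, φ (Y ω) ∂P

def ICXLeReal {Ω : Type} {mΩ : MeasurableSpace Ω} (P : Measure Ω) (X Y : Ω → ℝ) : Prop :=
  ∀ φ : ℝ → ℝ, ConvexOn ℝ Set.univ φ → Monotone φ →
    Integrable (fun ω => φ (X ω)) P → Integrable (fun ω => φ (Y ω)) P →
    ∫ ω, φ (X ω) ∂P ≤ ∫ ω, φ (Y ω) ∂P

lemma exists_stieltjes (φ : ℝ → ℝ) (hφ : ConvexOn ℝ Set.univ φ) :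
    ∃ S : StieltjesFunction ℝ, ∀ x y : ℝ, ∫ s in x..y, S s = φ y - φ x := by
  set F : ℝ → ℝ := fun x => derivWithin φ (Set.Ioi x) x with hF
  have hmono : Monotone F := by
    have h := hφ.monotoneOn_rightDeriv
    rw [interior_univ] at h
    exact monotoneOn_univ.1 h
  have hcont : Continuous φ := by
    have := hφ.continuousOn isOpen_univ
    exact continuousOn_univ.1 this
  refine ⟨hmono.stieltjesFunction, fun x y => ?_⟩
  have h1 : ∫ s in x..y, F s = φ y - φ x := by
    apply intervalIntegral.integral_eq_sub_of_hasDeriv_right hcont.continuousOn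
    · intro z _
      exact hφ.hasDerivWithinAt_rightDeriv_of_mem_interior (by simp)
    · exact hmono.intervalIntegrable
  rw [← h1]
  apply intervalIntegral.integral_congr_ae
  filter_upwards [hmono.countable_not_continuousAt.ae_notMem volume] with z hz _
  rw [hmono.stieltjesFunction_eq]
  have hz' : ContinuousAt F z := by simpa using hz
  exact hmono.continuousWithinAt_Ioi_iff_rightLim_eq.1 hz'.continuousWithinAt

lemma tangent_le (φ : ℝ → ℝ) (S : StieltjesFunction ℝ)
    (hS : ∀ x y : ℝ, ∫ s in x..y, S s = φ y - φ x) (x y : ℝ) :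
    φ x + S x * (y - x) ≤ φ y := by
  rcases le_total x y with h | h
  · have := intervalIntegral.integral_mono_on (μ := volume) (f := fun _ => S x) (g := S) h
      intervalIntegrable_const S.mono.intervalIntegrable (fun z hz => S.mono hz.1)
    rw [hS, intervalIntegral.integral_const, smul_eq_mul] at this
    linarith
  · have := intervalIntegral.integral_mono_on (μ := volume) (f := S) (g := fun _ => S x) h
      S.mono.intervalIntegrable intervalIntegrable_const (fun z hz => S.mono hz.2)
    rw [hS, intervalIntegral.integral_const, smul_eq_mul] at this
    linarith

/-- the part of `φ` above `a` -/
def upperPart (φ : ℝ → ℝ) (S : StieltjesFunction ℝ) (a x : ℝ) : ℝ :=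
  φ (max x a) - φ a - S a * max (x - a) 0

lemma upperPart_nonneg (φ : ℝ → ℝ) (S : StieltjesFunction ℝ)
    (hS : ∀ x y : ℝ, ∫ s in x..y, S s = φ y - φ x) (a x : ℝ) : 0 ≤ upperPart φ S a x := by
  unfold upperPart
  have := tangent_le φ S hS a (max x a)
  have h2 : max x a - a = max (x - a) 0 := by rw [← sub_self a, max_sub_sub_right]
  rw [h2] at this
  linarith

lemma upperPart_eq (φ : ℝ → ℝ) (S : StieltjesFunction ℝ)
    (hS : ∀ x y : ℝ, ∫ s in x..y, S s = φ y - φ x) (a x : ℝ) :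
    ENNReal.ofReal (upperPart φ S a x)
      = ∫⁻ t in Set.Ioi a, ENNReal.ofReal (x - t) ∂S.measure := by
  rcases le_total x a with h | h
  · have h0 : upperPart φ S a x = 0 := by
      simp [upperPart, max_eq_right h, max_eq_right (sub_nonpos.2 h)]
    rw [h0, ENNReal.ofReal_zero, eq_comm]
    apply setLIntegral_eq_zero measurableSet_Ioi
    intro t ht
    simp only [Set.mem_Ioi] at ht
    simp only [Pi.zero_apply, ENNReal.ofReal_eq_zero]
    linarith
  · have e1 : upperPart φ S a x = ∫ s in a..x, (S s - S a) := by
      rw [intervalIntegral.integral_sub S.mono.intervalIntegrable intervalIntegrable_const, hS]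
      simp [upperPart, max_eq_left h, max_eq_left (sub_nonneg.2 h)]
      ring
    have hint : IntervalIntegrable (fun s => S s - S a) volume a x :=
      (S.mono.intervalIntegrable).sub intervalIntegrable_const
    rw [e1, intervalIntegral.integral_of_le h, ofReal_integral_eq_lintegral_ofReal
      ((intervalIntegrable_iff_integrableOn_Ioc_of_le h).1 hint)]
    swap
    · filter_upwards [ae_restrict_mem measurableSet_Ioc] with s hs
      simpa using S.mono hs.1.le
    have hA : MeasurableSet {p : ℝ × ℝ | a < p.2 ∧ p.2 ≤ p.1 ∧ p.1 ≤ x} := by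
      apply MeasurableSet.inter
      · exact measurableSet_lt measurable_const measurable_snd
      apply MeasurableSet.inter
      · exact measurableSet_le measurable_snd measurable_fst
      · exact measurableSet_le measurable_fst measurable_const
    set A := {p : ℝ × ℝ | a < p.2 ∧ p.2 ≤ p.1 ∧ p.1 ≤ x} with hAdef
    have hswap : ∫⁻ s, ∫⁻ t, A.indicator 1 (s, t) ∂S.measure ∂volume
        = ∫⁻ t, ∫⁻ s, A.indicator (1 : ℝ × ℝ → ENNReal) (s, t) ∂volume ∂S.measure :=
      lintegral_lintegral_swap ((measurable_one.indicator hA).aemeasurable)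
    have hl : ∫⁻ s in Set.Ioc a x, ENNReal.ofReal (S s - S a)
        = ∫⁻ s, ∫⁻ t, A.indicator (1 : ℝ × ℝ → ENNReal) (s, t) ∂S.measure ∂volume := by
      rw [← lintegral_indicator measurableSet_Ioc]
      apply lintegral_congr
      intro s
      by_cases hs : s ∈ Set.Ioc a x
      · rw [Set.indicator_of_mem hs, ← S.measure_Ioc, ← lintegral_indicator_one measurableSet_Ioc]
        apply lintegral_congr
        intro t
        by_cases ht : t ∈ Set.Ioc a s
        · rw [Set.indicator_of_mem ht, Set.indicator_of_mem]
          · rfl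
          · exact ⟨ht.1, ht.2, hs.2⟩
        · rw [Set.indicator_of_notMem ht, Set.indicator_of_notMem]
          exact fun h' => ht ⟨h'.1, h'.2.1⟩
      · rw [Set.indicator_of_notMem hs, eq_comm]
        rw [← lintegral_zero (μ := S.measure)]
        apply lintegral_congr
        intro t
        rw [Set.indicator_of_notMem]
        exact fun h' => hs ⟨h'.1.trans_le h'.2.1, h'.2.2⟩
    have hr : ∫⁻ t in Set.Ioi a, ENNReal.ofReal (x - t) ∂S.measure
        = ∫⁻ t, ∫⁻ s, A.indicator (1 : ℝ × ℝ → ENNReal) (s, t) ∂volume ∂S.measure := by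
      rw [← lintegral_indicator measurableSet_Ioi]
      apply lintegral_congr
      intro t
      by_cases ht : t ∈ Set.Ioi a
      · rw [Set.indicator_of_mem ht, ← Real.volume_Icc, ← lintegral_indicator_one measurableSet_Icc]
        apply lintegral_congr
        intro s
        by_cases hs : s ∈ Set.Icc t x
        · rw [Set.indicator_of_mem hs, Set.indicator_of_mem]
          · rfl
          · exact ⟨ht, hs.1, hs.2⟩
        · rw [Set.indicator_of_notMem hs, Set.indicator_of_notMem]
          exact fun h' => hs ⟨h'.2.1, h'.2.2⟩
      · rw [Set.indicator_of_notMem ht, eq_comm]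
        rw [← lintegral_zero (μ := (volume : Measure ℝ))]
        apply lintegral_congr
        intro s
        rw [Set.indicator_of_notMem]
        exact fun h' => ht h'.1
    rw [hl, hr, hswap]

lemma integrable_pos {Ω : Type} {mΩ : MeasurableSpace Ω} (P : Measure Ω) [IsProbabilityMeasure P]
    (X : Ω → ℝ) (hXi : Integrable X P) (t : ℝ) : Integrable (fun ω => max (X ω - t) 0) P :=
  (hXi.sub (integrable_const t)).pos_part

lemma integrable_max {Ω : Type} {mΩ : MeasurableSpace Ω} (P : Measure Ω) [IsProbabilityMeasure P]
    (φ : ℝ → ℝ) (hφ : Continuous φ)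
    (X : Ω → ℝ) (hX : Measurable X) (h : Integrable (fun ω => φ (X ω)) P) (a : ℝ) :
    Integrable (fun ω => φ (max (X ω) a)) P := by
  refine (h.abs.add (integrable_const |φ a|)).mono'
    (hφ.measurable.comp (hX.max measurable_const)).aestronglyMeasurable ?_
  filter_upwards with ω
  simp only [Real.norm_eq_abs, Pi.add_apply]
  rcases le_total (X ω) a with h | h
  · rw [max_eq_right h]; linarith [abs_nonneg (φ (X ω))]
  · rw [max_eq_left h]; linarith [abs_nonneg (φ a)]

lemma integrable_upperPart {Ω : Type} {mΩ : MeasurableSpace Ω} (P : Measure Ω)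
    [IsProbabilityMeasure P] (φ : ℝ → ℝ) (hφ : Continuous φ) (S : StieltjesFunction ℝ)
    (X : Ω → ℝ) (hX : Measurable X) (hXi : Integrable X P)
    (h : Integrable (fun ω => φ (X ω)) P) (a : ℝ) :
    Integrable (fun ω => upperPart φ S a (X ω)) P :=
  ((integrable_max P φ hφ X hX h a).sub (integrable_const (φ a))).sub
    ((integrable_pos P X hXi a).const_mul (S a))

lemma lintegral_upperPart {Ω : Type} {mΩ : MeasurableSpace Ω} (P : Measure Ω)
    [IsProbabilityMeasure P] (φ : ℝ → ℝ) (S : StieltjesFunction ℝ)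
    (hS : ∀ x y : ℝ, ∫ s in x..y, S s = φ y - φ x)
    (X : Ω → ℝ) (hX : Measurable X) (hXi : Integrable X P) (a : ℝ) :
    ∫⁻ ω, ENNReal.ofReal (upperPart φ S a (X ω)) ∂P
      = ∫⁻ t in Set.Ioi a, ENNReal.ofReal (∫ ω, max (X ω - t) 0 ∂P) ∂S.measure := by
  simp_rw [upperPart_eq φ S hS]
  rw [lintegral_lintegral_swap]
  · apply lintegral_congr
    intro t
    rw [ofReal_integral_eq_lintegral_ofReal (integrable_pos P X hXi t)]
    · apply lintegral_congr
      intro ω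
      rw [ENNReal.ofReal_max]
      simp
    · filter_upwards with ω
      simp
  · apply Measurable.aemeasurable
    unfold Function.uncurry
    fun_prop

lemma integral_upperPart_le {Ω : Type} {mΩ : MeasurableSpace Ω} (P : Measure Ω)
    [IsProbabilityMeasure P] (φ : ℝ → ℝ) (hφ : Continuous φ) (S : StieltjesFunction ℝ)
    (hS : ∀ x y : ℝ, ∫ s in x..y, S s = φ y - φ x)
    (X Y : Ω → ℝ) (hX : Measurable X) (hXi : Integrable X P)
    (hY : Measurable Y) (hYi : Integrable Y P)
    (hφX : Integrable (fun ω => φ (X ω)) P) (hφY : Integrable (fun ω => φ (Y ω)) P)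
    (h : ∀ t : ℝ, ∫ ω, max (X ω - t) 0 ∂P ≤ ∫ ω, max (Y ω - t) 0 ∂P) (a : ℝ) :
    ∫ ω, upperPart φ S a (X ω) ∂P ≤ ∫ ω, upperPart φ S a (Y ω) ∂P := by
  have hnY : 0 ≤ ∫ ω, upperPart φ S a (Y ω) ∂P :=
    integral_nonneg fun ω => upperPart_nonneg φ S hS a _
  rw [← ENNReal.ofReal_le_ofReal_iff hnY,
    ofReal_integral_eq_lintegral_ofReal (integrable_upperPart P φ hφ S X hX hXi hφX a)
      (Filter.Eventually.of_forall fun ω => upperPart_nonneg φ S hS a _),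
    ofReal_integral_eq_lintegral_ofReal (integrable_upperPart P φ hφ S Y hY hYi hφY a)
      (Filter.Eventually.of_forall fun ω => upperPart_nonneg φ S hS a _),
    lintegral_upperPart P φ S hS X hX hXi, lintegral_upperPart P φ S hS Y hY hYi]
  exact lintegral_mono fun t => ENNReal.ofReal_le_ofReal (h t)

lemma tendsto_of_eventually_nat (f : ℕ → ℝ) (x c : ℝ) (h : ∀ n : ℕ, -(n : ℝ) ≤ x → f n = c) :
    Filter.Tendsto f Filter.atTop (nhds c) := by
  apply tendsto_const_nhds.congr'
  obtain ⟨N, hN⟩ := exists_nat_ge (-x)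
  filter_upwards [Filter.eventually_ge_atTop N] with n hn
  have : (N : ℝ) ≤ n := by exact_mod_cast hn
  exact (h n (by linarith)).symm

lemma tendsto_icx {Ω : Type} {mΩ : MeasurableSpace Ω} (P : Measure Ω)
    [IsProbabilityMeasure P] (φ : ℝ → ℝ) (hφ : Continuous φ) (hm : Monotone φ)
    (X : Ω → ℝ) (hX : Measurable X) (hφX : Integrable (fun ω => φ (X ω)) P) :
    Filter.Tendsto (fun n : ℕ => ∫ ω, φ (max (X ω) (-(n : ℝ))) ∂P) Filter.atTop
      (nhds (∫ ω, φ (X ω) ∂P)) := by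
  apply tendsto_integral_of_dominated_convergence (fun ω => |φ (X ω)| + |φ 0|)
  · exact fun n => (integrable_max P φ hφ X hX hφX _).aestronglyMeasurable
  · exact hφX.abs.add (integrable_const _)
  · intro n
    filter_upwards with ω
    have h1 : φ (X ω) ≤ φ (max (X ω) (-(n : ℝ))) := hm (le_max_left _ _)
    have h2 : φ (max (X ω) (-(n : ℝ))) ≤ max (φ (X ω)) (φ 0) := by
      rw [← hm.map_max]
      apply hm
      exact max_le_max le_rfl (by simp)
    have h3 : max (φ (X ω)) (φ 0) ≤ |φ (X ω)| + |φ 0| :=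
      max_le (by linarith [le_abs_self (φ (X ω)), abs_nonneg (φ 0)])
        (by linarith [le_abs_self (φ 0), abs_nonneg (φ (X ω))])
    rw [Real.norm_eq_abs, abs_le]
    constructor
    · linarith [neg_abs_le (φ (X ω)), abs_nonneg (φ 0)]
    · linarith
  · filter_upwards with ω
    apply tendsto_of_eventually_nat _ (X ω)
    intro n hn
    rw [max_eq_left hn]

lemma tendsto_cx {Ω : Type} {mΩ : MeasurableSpace Ω} (P : Measure Ω)
    [IsProbabilityMeasure P] (φ : ℝ → ℝ) (hφ : Continuous φ) (S : StieltjesFunction ℝ)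
    (hS : ∀ x y : ℝ, ∫ s in x..y, S s = φ y - φ x)
    (X : Ω → ℝ) (hX : Measurable X) (hXi : Integrable X P)
    (hφX : Integrable (fun ω => φ (X ω)) P) :
    Filter.Tendsto (fun n : ℕ => ∫ ω, (φ (-(n : ℝ)) + S (-(n : ℝ)) * (X ω - (-(n : ℝ)))
        + upperPart φ S (-(n : ℝ)) (X ω)) ∂P) Filter.atTop
      (nhds (∫ ω, φ (X ω) ∂P)) := by
  apply tendsto_integral_of_dominated_convergence
    (fun ω => |φ (X ω)| + (|φ 0| + |S 0| * |X ω|))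
  · intro n
    exact (((integrable_const _).add ((hXi.sub (integrable_const _)).const_mul _)).add
      (integrable_upperPart P φ hφ S X hX hXi hφX _)).aestronglyMeasurable
  · exact hφX.abs.add ((integrable_const _).add (hXi.abs.const_mul _))
  · intro n
    filter_upwards with ω
    generalize X ω = x
    have hn : -(n : ℝ) ≤ 0 := by simp
    generalize -(n : ℝ) = a at hn
    have b1 := abs_nonneg (φ 0)
    have b2 := mul_nonneg (abs_nonneg (S 0)) (abs_nonneg x)
    have b3 := neg_abs_le (φ 0)
    have b4 := neg_abs_le (S 0 * x)
    have b5 := neg_abs_le (φ x)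
    have b6 := le_abs_self (φ x)
    have b7 := abs_nonneg (φ x)
    rw [abs_mul] at b4
    rw [Real.norm_eq_abs]
    unfold upperPart
    rcases le_total x a with h | h
    · rw [max_eq_right h, max_eq_right (sub_nonpos.2 h), abs_le]
      have t1 := tangent_le φ S hS a x
      have t2 := tangent_le φ S hS 0 a
      have t3 : S a ≤ S 0 := S.mono hn
      have t4 : S 0 * (x - a) ≤ S a * (x - a) :=
        mul_le_mul_of_nonpos_right t3 (sub_nonpos.2 h)
      constructor <;> nlinarith
    · rw [max_eq_left h, max_eq_left (sub_nonneg.2 h), abs_le]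
      constructor <;> linarith
  · filter_upwards with ω
    apply tendsto_of_eventually_nat _ (X ω)
    intro n hn
    unfold upperPart
    rw [max_eq_left hn, max_eq_left (sub_nonneg.2 hn)]
    ring

lemma tendsto_abs_mean {Ω : Type} {mΩ : MeasurableSpace Ω} (P : Measure Ω)
    [IsProbabilityMeasure P] (X : Ω → ℝ) (hXi : Integrable X P) :
    Filter.Tendsto (fun n : ℕ => ∫ ω, (|X ω - (-(n : ℝ))| - n) ∂P) Filter.atTop
      (nhds (∫ ω, X ω ∂P)) := by
  apply tendsto_integral_of_dominated_convergence (fun ω => |X ω|)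
  · intro n
    exact ((hXi.sub (integrable_const _)).abs.sub (integrable_const _)).aestronglyMeasurable
  · exact hXi.abs
  · intro n
    filter_upwards with ω
    have hn : (0 : ℝ) ≤ n := by simp
    rw [Real.norm_eq_abs]
    have := abs_abs_sub_abs_le (X ω - (-(n : ℝ))) n
    rw [abs_of_nonneg hn] at this
    simpa using this
  · filter_upwards with ω
    apply tendsto_of_eventually_nat _ (X ω)
    intro n hn
    rw [abs_of_nonneg (by linarith)]
    ring

lemma mean_le {Ω : Type} {mΩ : MeasurableSpace Ω} (P : Measure Ω)
    [IsProbabilityMeasure P] (X Y : Ω → ℝ) (hXi : Integrable X P) (hYi : Integrable Y P)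
    (h : ∀ t : ℝ, ∫ ω, |X ω - t| ∂P ≤ ∫ ω, |Y ω - t| ∂P) :
    ∫ ω, X ω ∂P ≤ ∫ ω, Y ω ∂P := by
  refine le_of_tendsto_of_tendsto' (tendsto_abs_mean P X hXi) (tendsto_abs_mean P Y hYi) ?_
  intro n
  have h1 : Integrable (fun ω => |X ω - (-(n : ℝ))|) P := (hXi.sub (integrable_const _)).abs
  have h2 : Integrable (fun ω => |Y ω - (-(n : ℝ))|) P := (hYi.sub (integrable_const _)).abs
  rw [integral_sub h1 (integrable_const _), integral_sub h2 (integrable_const _)]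
  exact sub_le_sub_right (h _) _

lemma mean_eq {Ω : Type} {mΩ : MeasurableSpace Ω} (P : Measure Ω)
    [IsProbabilityMeasure P] (X Y : Ω → ℝ) (hXi : Integrable X P) (hYi : Integrable Y P)
    (h : ∀ t : ℝ, ∫ ω, |X ω - t| ∂P ≤ ∫ ω, |Y ω - t| ∂P) :
    ∫ ω, X ω ∂P = ∫ ω, Y ω ∂P := by
  apply le_antisymm (mean_le P X Y hXi hYi h)
  have := mean_le P (fun ω => - X ω) (fun ω => - Y ω) hXi.neg hYi.neg (fun t => by
    have := h (-t)
    have e : ∀ x : ℝ, |-x - t| = |x - -t| := fun x => by rw [← abs_neg]; congr 1; ring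
    simpa only [e] using this)
  rw [integral_neg, integral_neg] at this
  linarith

lemma integral_pos_eq {Ω : Type} {mΩ : MeasurableSpace Ω} (P : Measure Ω)
    [IsProbabilityMeasure P] (X : Ω → ℝ) (hXi : Integrable X P) (t : ℝ) :
    ∫ ω, max (X ω - t) 0 ∂P = (∫ ω, |X ω - t| ∂P + (∫ ω, X ω ∂P - t)) / 2 := by
  have e : ∀ ω, max (X ω - t) 0 = (|X ω - t| + (X ω - t)) / 2 := by
    intro ω
    rcases le_total (X ω - t) 0 with h | h
    · rw [max_eq_right h, abs_of_nonpos h]; ring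
    · rw [max_eq_left h, abs_of_nonneg h]; ring
  simp_rw [e]
  have hi : Integrable (fun ω => X ω - t) P := hXi.sub (integrable_const _)
  rw [integral_div, integral_add hi.abs hi, integral_sub hXi (integrable_const _)]
  simp

lemma integral_cx_approx {Ω : Type} {mΩ : MeasurableSpace Ω} (P : Measure Ω)
    [IsProbabilityMeasure P] (φ : ℝ → ℝ) (hφ : Continuous φ) (S : StieltjesFunction ℝ)
    (X : Ω → ℝ) (hX : Measurable X) (hXi : Integrable X P)
    (hφX : Integrable (fun ω => φ (X ω)) P) (a : ℝ) :
    ∫ ω, (φ a + S a * (X ω - a) + upperPart φ S a (X ω)) ∂P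
      = φ a + S a * (∫ ω, X ω ∂P - a) + ∫ ω, upperPart φ S a (X ω) ∂P := by
  have hi : Integrable (fun ω => X ω - a) P := hXi.sub (integrable_const _)
  have hj : Integrable (fun ω => φ a + S a * (X ω - a)) P :=
    (integrable_const _).add (hi.const_mul _)
  rw [integral_add hj
      (integrable_upperPart P φ hφ S X hX hXi hφX _),
    integral_add (integrable_const _) (hi.const_mul _), integral_const_mul,
    integral_sub hXi (integrable_const _)]
  simp

lemma integral_icx_approx {Ω : Type} {mΩ : MeasurableSpace Ω} (P : Measure Ω)
    [IsProbabilityMeasure P] (φ : ℝ → ℝ) (hφ : Continuous φ) (S : StieltjesFunction ℝ)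
    (X : Ω → ℝ) (hX : Measurable X) (hXi : Integrable X P)
    (hφX : Integrable (fun ω => φ (X ω)) P) (a : ℝ) :
    ∫ ω, φ (max (X ω) a) ∂P
      = φ a + S a * (∫ ω, max (X ω - a) 0 ∂P) + ∫ ω, upperPart φ S a (X ω) ∂P := by
  have hi := integrable_pos P X hXi a
  have e : ∀ ω, φ (max (X ω) a) = φ a + S a * max (X ω - a) 0 + upperPart φ S a (X ω) := by
    intro ω
    unfold upperPart
    ring
  simp_rw [e]
  have hj : Integrable (fun ω => φ a + S a * max (X ω - a) 0) P :=
    (integrable_const _).add (hi.const_mul _)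
  rw [integral_add hj
      (integrable_upperPart P φ hφ S X hX hXi hφX _),
    integral_add (integrable_const _) (hi.const_mul _), integral_const_mul]
  simp

lemma convex_sub_const (t : ℝ) : ConvexOn ℝ Set.univ (fun x : ℝ => x - t) :=
  (convexOn_id convex_univ).sub (concaveOn_const t convex_univ)

/-- One-dimensional characterisation of the convex and increasing convex orders via
the test functions x ↦ |x − t| and x ↦ (x − t)₊. -/
theorem univariate_order_characterisation
    {Ω : Type} {mΩ : MeasurableSpace Ω} (P : Measure Ω) [IsProbabilityMeasure P]
    (X Y : Ω → ℝ) (hX : Measurable X) (hY : Measurable Y)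
    (hXi : Integrable X P) (hYi : Integrable Y P) :
    (CXLeReal P X Y ↔
      ∀ t : ℝ, ∫ ω, |X ω - t| ∂P ≤ ∫ ω, |Y ω - t| ∂P) ∧
    (ICXLeReal P X Y ↔
      ∀ t : ℝ, ∫ ω, max (X ω - t) 0 ∂P ≤ ∫ ω, max (Y ω - t) 0 ∂P) := by
  refine ⟨⟨fun h t => ?_, fun h φ hc hφX hφY => ?_⟩, ⟨fun h t => ?_, fun h φ hc hm hφX hφY => ?_⟩⟩
  · refine h (fun x => |x - t|) ?_ (hXi.sub (integrable_const _)).abs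
      (hYi.sub (integrable_const _)).abs
    refine ((convex_sub_const t).sup ((concaveOn_id convex_univ).sub (convexOn_const t convex_univ)).neg).congr fun x _ => ?_
    simp [abs_eq_max_neg]
  · have hφ : Continuous φ := continuousOn_univ.1 (hc.continuousOn isOpen_univ)
    obtain ⟨S, hS⟩ := exists_stieltjes φ hc
    have hmean := mean_eq P X Y hXi hYi h
    have hpos : ∀ t : ℝ, ∫ ω, max (X ω - t) 0 ∂P ≤ ∫ ω, max (Y ω - t) 0 ∂P := by
      intro t
      rw [integral_pos_eq P X hXi, integral_pos_eq P Y hYi, hmean]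
      linarith [h t]
    refine le_of_tendsto_of_tendsto' (tendsto_cx P φ hφ S hS X hX hXi hφX)
      (tendsto_cx P φ hφ S hS Y hY hYi hφY) fun n => ?_
    rw [integral_cx_approx P φ hφ S X hX hXi hφX, integral_cx_approx P φ hφ S Y hY hYi hφY, hmean]
    linarith [integral_upperPart_le P φ hφ S hS X Y hX hXi hY hYi hφX hφY hpos (-(n : ℝ))]
  · refine h (fun x => max (x - t) 0) ?_ ?_ (integrable_pos P X hXi t) (integrable_pos P Y hYi t)
    · exact (convex_sub_const t).sup (convexOn_const 0 convex_univ)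
    · intro x y hxy
      exact max_le_max (sub_le_sub_right hxy t) le_rfl
  · have hφ : Continuous φ := continuousOn_univ.1 (hc.continuousOn isOpen_univ)
    obtain ⟨S, hS⟩ := exists_stieltjes φ hc
    refine le_of_tendsto_of_tendsto' (tendsto_icx P φ hφ hm X hX hφX)
      (tendsto_icx P φ hφ hm Y hY hφY) fun n => ?_
    rw [integral_icx_approx P φ hφ S X hX hXi hφX, integral_icx_approx P φ hφ S Y hY hYi hφY]
    have hS0 : 0 ≤ S (-(n : ℝ)) := by
      have t1 := tangent_le φ S hS (-(n : ℝ)) (-(n : ℝ) - 1)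
      have t2 : φ (-(n : ℝ) - 1) ≤ φ (-(n : ℝ)) := hm (by linarith)
      linarith
    linarith [integral_upperPart_le P φ hφ S hS X Y hX hXi hY hYi hφX hφY h (-(n : ℝ)),
      mul_le_mul_of_nonneg_left (h (-(n : ℝ))) hS0]
end
end

section
/- Let (Ω, A, P) be a probability space, X, Y : Ω → ℝ^d integrable random vectors, Z : Ω → S a random element in a measurable space S with law μ, and let K and L be regular conditional distributions of X and of Y given Z, respectively. Then X | Z ≤cx Y | Z if and only if K_θ ≤cx L_θ for μ-almost every θ ∈ S, and X | Z ≤icx Y | Z if and only if K_θ ≤icx L_θ for μ-almost every θ ∈ S. -/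
open MeasureTheory ProbabilityTheory Filter

noncomputable section

/-- A regular conditional distribution of X given Z. -/
def IsRCD {d : ℕ} {Ω : Type} {mΩ : MeasurableSpace Ω} (P : Measure Ω)
    {S : Type} [MeasurableSpace S] (X : Ω → Euc d) (Z : Ω → S)
    (K : Kernel S (Euc d)) : Prop :=
  ∀ A : Set S, MeasurableSet A → ∀ B : Set (Euc d), MeasurableSet B →
    P (Z ⁻¹' A ∩ X ⁻¹' B) = ∫⁻ θ in A, K θ B ∂(P.map Z)

open scoped Topology

/-- The affine function with linear part `p.1` and constant part `p.2`. -/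
def affFun {d : ℕ} (p : (Euc d →L[ℝ] ℝ) × ℝ) : Euc d → ℝ := fun x => p.1 x + p.2

/-- The maximum of finitely many affine functions. -/
def maxAff {d n : ℕ} (p : Fin (n + 1) → (Euc d →L[ℝ] ℝ) × ℝ) : Euc d → ℝ :=
  Finset.univ.sup' Finset.univ_nonempty (fun k => affFun (p k))

lemma maxAff_apply {d n : ℕ} (p : Fin (n + 1) → (Euc d →L[ℝ] ℝ) × ℝ) (x : Euc d) :
    maxAff p x = Finset.univ.sup' Finset.univ_nonempty (fun k => affFun (p k) x) := by
  simp [maxAff, Finset.sup'_apply]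

lemma maxAff_mem {d n : ℕ} (p : Fin (n + 1) → (Euc d →L[ℝ] ℝ) × ℝ) (x : Euc d) :
    ∃ k, maxAff p x = affFun (p k) x := by
  rw [maxAff_apply]
  obtain ⟨k, _, hk⟩ := Finset.exists_mem_eq_sup' Finset.univ_nonempty
    (fun k => affFun (p k) x)
  exact ⟨k, hk⟩

lemma le_maxAff {d n : ℕ} (p : Fin (n + 1) → (Euc d →L[ℝ] ℝ) × ℝ) (x : Euc d)
    (k : Fin (n + 1)) : affFun (p k) x ≤ maxAff p x := by
  rw [maxAff_apply]
  exact Finset.le_sup' (fun k => affFun (p k) x) (Finset.mem_univ k)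

lemma abs_affFun_le {d : ℕ} (p : (Euc d →L[ℝ] ℝ) × ℝ) (x : Euc d) :
    |affFun p x| ≤ ‖p‖ * (‖x‖ + 1) := by
  have h1 : |p.1 x| ≤ ‖p.1‖ * ‖x‖ := p.1.le_opNorm x
  have h2 : ‖p.1‖ ≤ ‖p‖ := norm_fst_le p
  have h3 : |p.2| ≤ ‖p‖ := norm_snd_le p
  have h4 := abs_add_le (p.1 x) p.2
  have h5 := mul_le_mul_of_nonneg_right h2 (norm_nonneg x)
  unfold affFun
  linarith

lemma abs_maxAff_le {d n : ℕ} (p : Fin (n + 1) → (Euc d →L[ℝ] ℝ) × ℝ) (x : Euc d) :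
    |maxAff p x| ≤ ‖p‖ * (‖x‖ + 1) := by
  obtain ⟨k, hk⟩ := maxAff_mem p x
  rw [hk]
  refine (abs_affFun_le _ _).trans ?_
  exact mul_le_mul_of_nonneg_right (norm_le_pi_norm p k) (by positivity)

lemma continuous_affFun {d : ℕ} (p : (Euc d →L[ℝ] ℝ) × ℝ) : Continuous (affFun p) := by
  unfold affFun; fun_prop

lemma continuous_maxAff {d n : ℕ} (p : Fin (n + 1) → (Euc d →L[ℝ] ℝ) × ℝ) :
    Continuous (maxAff p) :=
  Continuous.finset_sup' _ (fun k _ => continuous_affFun (p k))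

lemma convexOn_affFun {d : ℕ} (p : (Euc d →L[ℝ] ℝ) × ℝ) : ConvexOn ℝ Set.univ (affFun p) :=
  (p.1.toLinearMap.convexOn convex_univ).add_const p.2

lemma convexOn_maxAff {d n : ℕ} (p : Fin (n + 1) → (Euc d →L[ℝ] ℝ) × ℝ) :
    ConvexOn ℝ Set.univ (maxAff p) :=
  Finset.sup'_induction (p := fun f : Euc d → ℝ => ConvexOn ℝ Set.univ f) _ _
    (fun _ h1 _ h2 => h1.sup h2) (fun k _ => convexOn_affFun (p k))

lemma continuous_convex {d : ℕ} {φ : Euc d → ℝ} (h : ConvexOn ℝ Set.univ φ) : Continuous φ :=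
  continuousOn_univ.1 (h.continuousOn isOpen_univ)

lemma integrable_bound {d : ℕ} (μ : Measure (Euc d)) [IsProbabilityMeasure μ]
    (hμ : Integrable (fun x => x) μ) (c : ℝ) : Integrable (fun x => c * (‖x‖ + 1)) μ :=
  (hμ.norm.add (integrable_const 1)).const_mul c

lemma integrable_maxAff {d n : ℕ} (μ : Measure (Euc d)) [IsProbabilityMeasure μ]
    (hμ : Integrable (fun x => x) μ) (p : Fin (n + 1) → (Euc d →L[ℝ] ℝ) × ℝ) :
    Integrable (maxAff p) μ :=
  (integrable_bound μ hμ ‖p‖).mono' (continuous_maxAff p).aestronglyMeasurable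
    (ae_of_all _ fun x => abs_maxAff_le p x)

lemma continuous_integral_maxAff {d n : ℕ} (μ : Measure (Euc d)) [IsProbabilityMeasure μ]
    (hμ : Integrable (fun x => x) μ) :
    Continuous (fun p : Fin (n + 1) → (Euc d →L[ℝ] ℝ) × ℝ => ∫ x, maxAff p x ∂μ) := by
  rw [continuous_iff_continuousAt]
  intro p0
  refine continuousAt_of_dominated (bound := fun x => (‖p0‖ + 1) * (‖x‖ + 1))
    (Eventually.of_forall fun p => (continuous_maxAff p).aestronglyMeasurable) ?_
    (integrable_bound μ hμ _) (ae_of_all _ fun x => ?_)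
  · have : ∀ᶠ p : Fin (n + 1) → (Euc d →L[ℝ] ℝ) × ℝ in 𝓝 p0, ‖p‖ < ‖p0‖ + 1 :=
      continuous_norm.continuousAt.eventually (Iio_mem_nhds (by simp))
    filter_upwards [this] with p hp
    refine ae_of_all _ fun x => (abs_maxAff_le p x).trans ?_
    exact mul_le_mul_of_nonneg_right hp.le (by positivity)
  · simp only [maxAff_apply]
    refine Continuous.continuousAt ?_
    refine Continuous.finset_sup'_apply _ (fun k _ => ?_)
    unfold affFun
    fun_prop

/-- Deterministic core: the order for maxima of affine functions implies the order. -/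
lemma core {d : ℕ} (Q : (Euc d → ℝ) → Prop)
    (hQmin : ∀ φ p, Q φ → affFun p ≤ φ → Q (affFun p))
    (μ ν : Measure (Euc d)) [IsProbabilityMeasure μ] [IsProbabilityMeasure ν]
    (hμ : Integrable (fun x => x) μ) (hν : Integrable (fun x => x) ν)
    (H : ∀ n (p : Fin (n + 1) → (Euc d →L[ℝ] ℝ) × ℝ), (∀ k, Q (affFun (p k))) →
      ∫ x, maxAff p x ∂μ ≤ ∫ x, maxAff p x ∂ν)
    (φ : Euc d → ℝ) (hφ : ConvexOn ℝ Set.univ φ) (hQ : Q φ)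
    (h1 : Integrable φ μ) (h2 : Integrable φ ν) : ∫ x, φ x ∂μ ≤ ∫ x, φ x ∂ν := by
  obtain ⟨l, c, hle, hsup⟩ := hφ.univ_sSup_of_nat_affine_eq (𝕜 := ℝ)
    (continuous_convex hφ).lowerSemicontinuous
  let q : ℕ → (Euc d →L[ℝ] ℝ) × ℝ := fun i => (l i, c i)
  have hle' : ∀ i, affFun (q i) ≤ φ := fun i x => hle i x
  have hsup' : ∀ x, ⨆ i, affFun (q i) x = φ x := fun x => by
    have := congrFun hsup x
    rw [iSup_apply] at this
    exact this
  let g : ℕ → Euc d → ℝ := fun n => maxAff (fun k : Fin (n + 1) => q k)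
  have hgle : ∀ n x, g n x ≤ φ x := fun n x => by
    obtain ⟨k, hk⟩ := maxAff_mem (fun k : Fin (n + 1) => q k) x
    exact hk.trans_le (hle' _ x)
  have hg0 : ∀ n x, affFun (q 0) x ≤ g n x := fun n x =>
    le_maxAff (fun k : Fin (n + 1) => q k) x 0
  have hlim : ∀ x, Tendsto (fun n => g n x) atTop (𝓝 (φ x)) := fun x => by
    refine tendsto_order.2 ⟨fun a ha => ?_, fun a ha =>
      Eventually.of_forall fun n => (hgle n x).trans_lt ha⟩
    rw [← hsup' x] at ha
    obtain ⟨i, hi⟩ := exists_lt_of_lt_ciSup ha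
    filter_upwards [eventually_ge_atTop i] with n hn
    exact hi.trans_le (le_maxAff (fun k : Fin (n + 1) => q k) x ⟨i, by omega⟩)
  have key : ∀ (m : Measure (Euc d)) [IsProbabilityMeasure m], Integrable (fun x => x) m →
      Integrable φ m → Tendsto (fun n => ∫ x, g n x ∂m) atTop (𝓝 (∫ x, φ x ∂m)) := by
    intro m _ hm hφm
    refine tendsto_integral_of_dominated_convergence
      (fun x => ‖q 0‖ * (‖x‖ + 1) + |φ x|)
      (fun n => (continuous_maxAff _).aestronglyMeasurable)
      ((integrable_bound m hm _).add hφm.abs)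
      (fun n => ae_of_all _ fun x => ?_) (ae_of_all _ hlim)
    have a1 := abs_le.1 (abs_affFun_le (q 0) x)
    have a2 := hgle n x
    have a3 := hg0 n x
    have a4 := le_abs_self (φ x)
    have a5 := abs_nonneg (φ x)
    have a6 : 0 ≤ ‖q 0‖ * (‖x‖ + 1) := by positivity
    rw [Real.norm_eq_abs, abs_le]
    constructor <;> linarith [a1.1]
  exact le_of_tendsto_of_tendsto' (key μ hμ h1) (key ν hν h2)
    (fun n => H n _ fun k => hQmin φ _ hQ (hle' _))

lemma rcd_map {d : ℕ} {Ω : Type} {mΩ : MeasurableSpace Ω} (P : Measure Ω)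
    [IsProbabilityMeasure P] {S : Type} [MeasurableSpace S]
    (X : Ω → Euc d) (Z : Ω → S) (hX : Measurable X) (hZ : Measurable Z)
    (K : Kernel S (Euc d)) [IsMarkovKernel K] (hK : IsRCD P X Z K) :
    P.map (fun ω => (Z ω, X ω)) = P.map Z ⊗ₘ K := by
  have : IsFiniteMeasure (P.map (fun ω => (Z ω, X ω))) := inferInstance
  have : IsProbabilityMeasure (P.map Z) := Measure.isProbabilityMeasure_map hZ.aemeasurable
  refine Measure.ext_prod fun {s t} hs ht => ?_
  rw [Measure.map_apply (hZ.prodMk hX) (hs.prod ht), Measure.compProd_apply_prod hs ht,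
    ← hK s hs t ht]
  rfl

lemma rcd_integrable {d : ℕ} {Ω : Type} {mΩ : MeasurableSpace Ω} (P : Measure Ω)
    [IsProbabilityMeasure P] {S : Type} [MeasurableSpace S]
    (X : Ω → Euc d) (Z : Ω → S) (hX : Measurable X) (hZ : Measurable Z)
    (K : Kernel S (Euc d)) [IsMarkovKernel K] (hK : IsRCD P X Z K)
    {F : Type} [NormedAddCommGroup F] [SecondCountableTopology F]
    (φ : Euc d → F) (hφ : Continuous φ) (hi : Integrable (fun ω => φ (X ω)) P) :
    ∀ᵐ θ ∂(P.map Z), Integrable φ (K θ) := by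
  have : IsProbabilityMeasure (P.map Z) := Measure.isProbabilityMeasure_map hZ.aemeasurable
  have hc : Continuous φ := hφ
  have hsm : StronglyMeasurable (fun q : S × Euc d => φ q.2) :=
    hc.stronglyMeasurable.comp_measurable measurable_snd
  have h : Integrable (fun q : S × Euc d => φ q.2) (P.map Z ⊗ₘ K) := by
    rw [← rcd_map P X Z hX hZ K hK,
      integrable_map_measure hsm.aestronglyMeasurable (hZ.prodMk hX).aemeasurable]
    exact hi
  exact ((Measure.integrable_compProd_iff hsm.aestronglyMeasurable).1 h).1

lemma rcd_condExp {d : ℕ} {Ω : Type} {mΩ : MeasurableSpace Ω} (P : Measure Ω)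
    [IsProbabilityMeasure P] {S : Type} [MeasurableSpace S]
    (X : Ω → Euc d) (Z : Ω → S) (hX : Measurable X) (hZ : Measurable Z)
    (K : Kernel S (Euc d)) [IsMarkovKernel K] (hK : IsRCD P X Z K)
    (φ : Euc d → ℝ) (hφ : Continuous φ) (hi : Integrable (fun ω => φ (X ω)) P) :
    P[(fun ω => φ (X ω)) | MeasurableSpace.comap Z inferInstance] =ᵐ[P]
      fun ω => ∫ x, φ x ∂(K (Z ω)) := by
  have h1 := condExp_ae_eq_integral_condDistrib (μ := P) hZ hX.aemeasurable
    hφ.stronglyMeasurable hi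
  have h2 := condDistrib_ae_eq_of_measure_eq_compProd (μ := P) Z hX.aemeasurable
    (rcd_map P X Z hX hZ K hK)
  filter_upwards [h1, ae_of_ae_map hZ.aemeasurable h2] with ω a b
  rw [a, b]

/-- The characterisation for a general class `Q` of test functions. -/
lemma general {d : ℕ} (Q : (Euc d → ℝ) → Prop)
    (hQmin : ∀ φ p, Q φ → affFun p ≤ φ → Q (affFun p))
    (hQsup : ∀ f, Q f → ∀ g, Q g → Q (f ⊔ g))
    {Ω : Type} {mΩ : MeasurableSpace Ω} (P : Measure Ω)
    [IsProbabilityMeasure P] {S : Type} [MeasurableSpace S]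
    (X Y : Ω → Euc d) (Z : Ω → S)
    (hX : Measurable X) (hY : Measurable Y) (hZ : Measurable Z)
    (hXi : Integrable X P) (hYi : Integrable Y P)
    (K L : Kernel S (Euc d)) [IsMarkovKernel K] [IsMarkovKernel L]
    (hK : IsRCD P X Z K) (hL : IsRCD P Y Z L) :
    (∀ φ : Euc d → ℝ, ConvexOn ℝ Set.univ φ → Q φ →
      Integrable (fun ω => φ (X ω)) P → Integrable (fun ω => φ (Y ω)) P →
      P[(fun ω => φ (X ω)) | MeasurableSpace.comap Z inferInstance] ≤ᵐ[P]
        P[(fun ω => φ (Y ω)) | MeasurableSpace.comap Z inferInstance]) ↔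
    ∀ᵐ θ ∂(P.map Z), ∀ φ : Euc d → ℝ, ConvexOn ℝ Set.univ φ → Q φ →
      Integrable φ (K θ) → Integrable φ (L θ) → ∫ x, φ x ∂(K θ) ≤ ∫ x, φ x ∂(L θ) := by
  constructor
  · intro H
    have hint : ∀ (W : Ω → Euc d), Measurable W → Integrable W P → ∀ n
        (p : Fin (n + 1) → (Euc d →L[ℝ] ℝ) × ℝ), Integrable (fun ω => maxAff p (W ω)) P := by
      intro W hW hWi n p
      refine Integrable.mono' ((hWi.norm.add (integrable_const 1)).const_mul ‖p‖)
        ((continuous_maxAff p).measurable.comp hW).aestronglyMeasurable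
        (ae_of_all _ fun ω => abs_maxAff_le p (W ω))
    have hone : ∀ n (p : Fin (n + 1) → (Euc d →L[ℝ] ℝ) × ℝ), (∀ k, Q (affFun (p k))) →
        ∀ᵐ θ ∂(P.map Z), ∫ x, maxAff p x ∂(K θ) ≤ ∫ x, maxAff p x ∂(L θ) := by
      intro n p hp
      have hc := continuous_maxAff p
      have hQp : Q (maxAff p) := Finset.sup'_induction (p := Q) _ _ hQsup (fun k _ => hp k)
      have hm : MeasurableSet {θ | ∫ x, maxAff p x ∂(K θ) ≤ ∫ x, maxAff p x ∂(L θ)} :=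
        measurableSet_le
          (hc.stronglyMeasurable.integral_kernel (κ := K)).measurable
          (hc.stronglyMeasurable.integral_kernel (κ := L)).measurable
      rw [ae_map_iff hZ.aemeasurable hm]
      have hXp := hint X hX hXi n p
      have hYp := hint Y hY hYi n p
      filter_upwards [H _ (convexOn_maxAff p) hQp hXp hYp,
        rcd_condExp P X Z hX hZ K hK _ hc hXp, rcd_condExp P Y Z hY hZ L hL _ hc hYp]
        with ω a b c
      rw [b, c] at a
      exact a
    have hall : ∀ᵐ θ ∂(P.map Z), ∀ n, ∃ D : Set {p : Fin (n + 1) → (Euc d →L[ℝ] ℝ) × ℝ //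
        ∀ k, Q (affFun (p k))}, Dense D ∧ ∀ p ∈ D,
        ∫ x, maxAff p.1 x ∂(K θ) ≤ ∫ x, maxAff p.1 x ∂(L θ) := by
      rw [ae_all_iff]
      intro n
      obtain ⟨D, hDc, hDd⟩ := TopologicalSpace.exists_countable_dense
        {p : Fin (n + 1) → (Euc d →L[ℝ] ℝ) × ℝ // ∀ k, Q (affFun (p k))}
      have := (ae_ball_iff hDc).2 (fun p _ => hone n p.1 p.2)
      filter_upwards [this] with θ hθ
      exact ⟨D, hDd, hθ⟩
    filter_upwards [hall, rcd_integrable P X Z hX hZ K hK (fun x => x) continuous_id hXi,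
      rcd_integrable P Y Z hY hZ L hL (fun x => x) continuous_id hYi] with θ hθ hKi hLi
    intro φ hφ hQφ h1 h2
    refine core Q hQmin (K θ) (L θ) hKi hLi (fun n p hp => ?_) φ hφ hQφ h1 h2
    obtain ⟨D, hDd, hD⟩ := hθ n
    have hcl : IsClosed {p : {p : Fin (n + 1) → (Euc d →L[ℝ] ℝ) × ℝ //
        ∀ k, Q (affFun (p k))} |
        ∫ x, maxAff p.1 x ∂(K θ) ≤ ∫ x, maxAff p.1 x ∂(L θ)} :=
      isClosed_le ((continuous_integral_maxAff (K θ) hKi).comp continuous_subtype_val)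
        ((continuous_integral_maxAff (L θ) hLi).comp continuous_subtype_val)
    exact hcl.closure_subset_iff.2 hD (hDd ⟨p, hp⟩)
  · intro H φ hφ hQφ hXp hYp
    have hc := continuous_convex hφ
    filter_upwards [ae_of_ae_map hZ.aemeasurable H,
      rcd_condExp P X Z hX hZ K hK _ hc hXp, rcd_condExp P Y Z hY hZ L hL _ hc hYp,
      ae_of_ae_map hZ.aemeasurable (rcd_integrable P X Z hX hZ K hK φ hc hXp),
      ae_of_ae_map hZ.aemeasurable (rcd_integrable P Y Z hY hZ L hL φ hc hYp)]
      with ω a b c e f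
    rw [b, c]
    exact a φ hφ hQφ e f

lemma coordMono_minorant {d : ℕ} (φ : Euc d → ℝ) (p : (Euc d →L[ℝ] ℝ) × ℝ)
    (hφ : CoordMono φ) (hle : affFun p ≤ φ) : CoordMono (affFun p) := by
  intro x y hxy
  by_contra! hlt
  have hv : 0 < p.1 (x - y) := by
    rw [map_sub]
    unfold affFun at hlt
    linarith
  obtain ⟨n, hn⟩ := exists_nat_gt ((φ 0 - p.2) / p.1 (x - y))
  rw [div_lt_iff₀ hv] at hn
  have h1 := hle ((n : ℝ) • (x - y))
  have h2 : φ ((n : ℝ) • (x - y)) ≤ φ 0 := by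
    refine hφ _ _ fun i => ?_
    have : x i - y i ≤ 0 := sub_nonpos.2 (hxy i)
    simpa using mul_nonpos_of_nonneg_of_nonpos (Nat.cast_nonneg n) this
  simp only [affFun, map_smul, smul_eq_mul] at h1
  linarith

/-- Conditional convex orders are characterised by the corresponding orders of
regular conditional distributions. -/
theorem conditional_order_via_rcd
    (d : ℕ) (hd : 1 ≤ d) {Ω : Type} {mΩ : MeasurableSpace Ω} (P : Measure Ω)
    [IsProbabilityMeasure P] {S : Type} [MeasurableSpace S]
    (X Y : Ω → Euc d) (Z : Ω → S)
    (hX : Measurable X) (hY : Measurable Y) (hZ : Measurable Z)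
    (hXi : Integrable X P) (hYi : Integrable Y P)
    (K L : Kernel S (Euc d)) [IsMarkovKernel K] [IsMarkovKernel L]
    (hK : IsRCD P X Z K) (hL : IsRCD P Y Z L) :
    (CondCXLe P (MeasurableSpace.comap Z inferInstance) X Y ↔
      ∀ᵐ θ ∂(P.map Z), ConvexOrder (K θ) (L θ)) ∧
    (CondICXLe P (MeasurableSpace.comap Z inferInstance) X Y ↔
      ∀ᵐ θ ∂(P.map Z), IncConvexOrder (K θ) (L θ)) := by
  constructor
  · have h := general (fun _ : Euc d → ℝ => True) (fun _ _ _ _ => trivial)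
      (fun _ _ _ _ => trivial) P X Y Z hX hY hZ hXi hYi K L hK hL
    simpa only [CondCXLe, ConvexOrder, true_imp_iff] using h
  · exact general CoordMono coordMono_minorant
      (fun f hf g hg x y hxy => sup_le_sup (hf x y hxy) (hg x y hxy))
      P X Y Z hX hY hZ hXi hYi K L hK hL
end
end

section
/- Let S and S' be Polish spaces and let f : S → S' be a Borel measurable map such that the fiber f⁻¹({y}) is compact for every y ∈ S'. Then for every closed set A ⊂ S, the image f(A) is a Borel subset of S'. -/
open Set Topology MeasureTheory

/-- A sequence of sets which can be enlarged to Borel sets with empty intersection. -/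
def SeqSep {X : Type*} [MeasurableSpace X] (A : ℕ → Set X) : Prop :=
  ∃ B : ℕ → Set X, (∀ n, A n ⊆ B n) ∧ (∀ n, MeasurableSet (B n)) ∧ ⋂ n, B n = ∅

theorem SeqSep.of_two {X : Type*} [MeasurableSpace X] {A : ℕ → Set X} {i j : ℕ}
    {U V : Set X} (hU : MeasurableSet U) (hV : MeasurableSet V) (hd : Disjoint U V)
    (hi : A i ⊆ U) (hj : A j ⊆ V) : SeqSep A := by
  classical
  refine ⟨fun n => (if n = i then U else univ) ∩ (if n = j then V else univ), ?_, ?_, ?_⟩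
  · intro n x hx
    constructor
    · split_ifs with h
      · subst h; exact hi hx
      · trivial
    · split_ifs with h
      · subst h; exact hj hx
      · trivial
  · intro n
    refine MeasurableSet.inter ?_ ?_ <;> split_ifs <;> simp [hU, hV]
  · rw [eq_empty_iff_forall_notMem]
    intro x hx
    rw [mem_iInter] at hx
    have h1 := (hx i).1
    have h2 := (hx j).2
    simp only [if_true] at h1 h2
    exact disjoint_left.1 hd h1 h2

theorem SeqSep.of_split {X Y : Type*} [MeasurableSpace X] (f : ℕ → Y → X) (C : ℕ → Set Y)
    (n : ℕ) (g : Y → ℕ)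
    (h : ∀ v, SeqSep (fun k => f k '' (Function.update C n (C n ∩ g ⁻¹' {v}) k))) :
    SeqSep (fun k => f k '' (C k)) := by
  classical
  choose B hAB hB hemp using h
  refine ⟨fun k => if k = n then ⋃ v, B v k else ⋂ v, B v k, ?_, ?_, ?_⟩
  · rintro k _ ⟨y, hy, rfl⟩
    dsimp only
    split_ifs with hk
    · subst hk
      refine mem_iUnion.2 ⟨g y, hAB (g y) k ⟨y, ?_, rfl⟩⟩
      simp [hy]
    · refine mem_iInter.2 fun v => hAB v k ⟨y, ?_, rfl⟩
      simpa [Function.update_of_ne hk] using hy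
  · intro k
    dsimp only
    split_ifs
    · exact MeasurableSet.iUnion fun v => hB v k
    · exact MeasurableSet.iInter fun v => hB v k
  · rw [eq_empty_iff_forall_notMem]
    intro x hx
    rw [mem_iInter] at hx
    have h1 := hx n
    simp only [if_true] at h1
    obtain ⟨v, hv⟩ := mem_iUnion.1 h1
    have : x ∈ ⋂ k, B v k := by
      refine mem_iInter.2 fun k => ?_
      by_cases hk : k = n
      · subst hk; exact hv
      · have := hx k
        simp only [if_neg hk] at this
        exact mem_iInter.1 this v
    rw [hemp v] at this
    exact this

/-- Novikov's separation theorem for continuous images of the Baire space. -/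
theorem seqSep_range {X : Type*} [TopologicalSpace X] [T2Space X] [MeasurableSpace X]
    [OpensMeasurableSpace X] (f : ℕ → (ℕ → ℕ) → X) (hf : ∀ n, Continuous (f n))
    (hemp : ⋂ n, range (f n) = ∅) : SeqSep (fun n => range (f n)) := by
  classical
  by_contra hcon
  let T := {C : ℕ → Set (ℕ → ℕ) // ¬ SeqSep (fun k => f k '' (C k))}
  have step : ∀ (C : T) (k : ℕ), ∃ v, ¬ SeqSep (fun i => f i ''
      (Function.update C.1 k.unpair.1 (C.1 k.unpair.1 ∩ (fun y => y k.unpair.2) ⁻¹' {v}) i)) := by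
    intro C k
    by_contra! h
    exact C.2 (SeqSep.of_split f C.1 _ _ h)
  choose v hv using step
  let C : ℕ → T := fun k => Nat.rec (motive := fun _ => T)
    ⟨fun _ => univ, by simpa using hcon⟩ (fun k D => ⟨_, hv D k⟩) k
  have hCs : ∀ k, (C (k+1)).1 = Function.update (C k).1 k.unpair.1
    ((C k).1 k.unpair.1 ∩ (fun y => y k.unpair.2) ⁻¹' {v (C k) k}) := fun k => rfl
  have hanti : ∀ i, Antitone (fun k => (C k).1 i) := by
    intro i
    refine antitone_nat_of_succ_le fun k => ?_
    rw [hCs]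
    by_cases h : i = k.unpair.1
    · subst h; simp
    · simp [Function.update_of_ne h]
  let α : ℕ → ℕ → ℕ := fun n m => v (C (Nat.pair n m)) (Nat.pair n m)
  have hα : ∀ n m, ∀ y ∈ (C (Nat.pair n m + 1)).1 n, y m = α n m := by
    intro n m y hy
    rw [hCs] at hy
    simp only [Nat.unpair_pair, Function.update_self] at hy
    exact hy.2
  have hev : ∀ n (U : Set X), IsOpen U → f n (α n) ∈ U → ∃ K, ∀ k ≥ K,
      f n '' (C k).1 n ⊆ U := by
    intro n U hU hmem
    have hn : f n ⁻¹' U ∈ 𝓝 (α n) := (hf n).continuousAt.preimage_mem_nhds (hU.mem_nhds hmem)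
    rw [nhds_pi, Filter.mem_pi] at hn
    obtain ⟨I, hI, t, ht, hsub⟩ := hn
    obtain ⟨K, hK⟩ := (hI.image (fun m => Nat.pair n m + 1)).bddAbove
    refine ⟨K, ?_⟩
    rintro k hk _ ⟨y, hy, rfl⟩
    refine hsub fun m hm => ?_
    have := hα n m y (hanti n ((hK ⟨m, hm, rfl⟩).trans hk) hy)
    rw [this]
    exact mem_of_mem_nhds (ht m)
  by_cases hall : ∀ i, f i (α i) = f 0 (α 0)
  · have : f 0 (α 0) ∈ ⋂ n, range (f n) := mem_iInter.2 fun n => ⟨α n, hall n⟩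
    rw [hemp] at this
    exact this
  · push Not at hall
    obtain ⟨i, hi⟩ := hall
    obtain ⟨U, V, hU, hV, hiU, h0V, hd⟩ := t2_separation hi
    obtain ⟨K, hK⟩ := hev i U hU hiU
    obtain ⟨L, hL⟩ := hev 0 V hV h0V
    exact (C (max K L)).2 (SeqSep.of_two hU.measurableSet hV.measurableSet hd
      (hK _ (le_max_left _ _)) (hL _ (le_max_right _ _)))

theorem seqSep_of_analytic {X : Type*} [TopologicalSpace X] [T2Space X] [MeasurableSpace X]
    [OpensMeasurableSpace X] (A : ℕ → Set X) (hA : ∀ n, AnalyticSet (A n))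
    (hemp : ⋂ n, A n = ∅) : SeqSep A := by
  by_cases h : ∃ n, A n = ∅
  · obtain ⟨n, hn⟩ := h
    exact SeqSep.of_two (i := n) (j := n) MeasurableSet.empty MeasurableSet.univ
      (by simp) hn.subset (subset_univ _)
  · push Not at h
    have : ∀ n, ∃ f : (ℕ → ℕ) → X, Continuous f ∧ range f = A n := by
      intro n
      have := hA n
      rw [AnalyticSet] at this
      exact this.resolve_left (h n).ne_empty
    choose f hf hr using this
    have := seqSep_range f hf (by simpa only [hr] using hemp)
    simpa only [hr] using this

/-- Projection of a Borel set with compact sections, compact second factor. -/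
theorem measurable_proj {Y Q : Type*} [TopologicalSpace Y] [PolishSpace Y] [MeasurableSpace Y]
    [BorelSpace Y] [TopologicalSpace Q] [PolishSpace Q] [CompactSpace Q] [MeasurableSpace Q]
    [BorelSpace Q] (B : Set (Y × Q)) (hB : MeasurableSet B)
    (hc : ∀ y, IsClosed {q | (y, q) ∈ B}) : MeasurableSet (Prod.fst '' B) := by
  classical
  obtain ⟨V, hVb⟩ := TopologicalSpace.exists_seq_basis Q
  have hVo : ∀ n, IsOpen (V n) := fun n => hVb.isOpen ⟨n, rfl⟩
  let P : ℕ → Set Y := fun n => Prod.fst '' (B ∩ Prod.snd ⁻¹' V n)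
  have hP : ∀ n, AnalyticSet (P n) := fun n =>
    (hB.inter ((hVo n).measurableSet.preimage measurable_snd)).analyticSet_image measurable_fst
  -- outside `B`, some basic open set separates the point from the section
  have hex : ∀ p ∉ B, ∃ n, p.1 ∉ P n ∧ p.2 ∈ V n := by
    rintro ⟨y, q⟩ hp
    obtain ⟨_, ⟨n, rfl⟩, hq, hsub⟩ := hVb.exists_subset_of_mem_open
      (show q ∈ {q | (y, q) ∈ B}ᶜ from hp) (hc y).isOpen_compl
    refine ⟨n, ?_, hq⟩
    rintro ⟨⟨z, r⟩, ⟨h1, h2⟩, rfl⟩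
    exact hsub h2 h1
  let A : ℕ → Set (Y × Q) := fun n => ⋃ b : Bool, Bᶜ ∩
    (if b then Prod.fst ⁻¹' P n else Prod.snd ⁻¹' (V n)ᶜ)
  have hAmem : ∀ n p, p ∈ A n ↔ p ∉ B ∧ (p.1 ∈ P n ∨ p.2 ∉ V n) := by
    intro n p
    simp only [A, mem_iUnion, Bool.exists_bool]
    simp
    tauto
  have hA : ∀ n, AnalyticSet (A n) := by
    intro n
    refine AnalyticSet.iUnion fun b => ?_
    cases b
    · simp only [Bool.false_eq_true, if_false]
      exact (hB.compl.inter
        ((hVo n).measurableSet.compl.preimage measurable_snd)).analyticSet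
    · simp only [if_true]
      have := AnalyticSet.iInter (s := fun b : Bool => if b then Bᶜ else Prod.fst ⁻¹' P n)
        (by
          intro b
          cases b
          · exact (hP n).preimage continuous_fst
          · exact hB.compl.analyticSet)
      convert! this using 1
      ext p
      simp [mem_iInter, Bool.forall_bool, and_comm]
  have hAe : ⋂ n, A n = ∅ := by
    rw [eq_empty_iff_forall_notMem]
    intro p hp
    rw [mem_iInter] at hp
    obtain ⟨n, h1, h2⟩ := hex p ((hAmem 0 p).1 (hp 0)).1
    have := ((hAmem n p).1 (hp n)).2
    tauto
  obtain ⟨W, hAW, hW, hWe⟩ := seqSep_of_analytic A hA hAe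
  have hsep : ∀ n, MeasurablySeparable (Prod.fst '' (Bᶜ \ W n)) (P n) := by
    intro n
    refine ((hB.compl.diff (hW n)).analyticSet_image measurable_fst).measurablySeparable (hP n) ?_
    rw [disjoint_left]
    rintro _ ⟨p, ⟨hpB, hpW⟩, rfl⟩ hp
    exact hpW (hAW n ((hAmem n p).2 ⟨hpB, Or.inl hp⟩))
  choose D hD1 hD2 hD3 using hsep
  have hkey : (Prod.fst '' B)ᶜ =
      ⋃ F : {F : Finset ℕ // univ ⊆ ⋃ n ∈ F, V n}, ⋂ n ∈ F.1, D n := by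
    ext y
    simp only [mem_iUnion, mem_iInter]
    constructor
    · intro hy
      have hyB : ∀ q, (y, q) ∉ B := fun q hq => hy ⟨(y, q), hq, rfl⟩
      have hcov : univ ⊆ ⋃ n : {n // y ∈ D n}, V n := by
        intro q _
        have : (y, q) ∉ ⋂ n, W n := by rw [hWe]; exact notMem_empty _
        rw [mem_iInter] at this
        push Not at this
        obtain ⟨n, hn⟩ := this
        have hyD : y ∈ D n := hD1 n ⟨(y, q), ⟨hyB q, hn⟩, rfl⟩
        refine mem_iUnion.2 ⟨⟨n, hyD⟩, ?_⟩
        by_contra hq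
        exact hn (hAW n ((hAmem n _).2 ⟨hyB q, Or.inr hq⟩))
      obtain ⟨t, ht⟩ := isCompact_univ.elim_finite_subcover
        (fun n : {n // y ∈ D n} => V n.1) (fun n => hVo n.1) hcov
      refine ⟨⟨t.image Subtype.val, ?_⟩, ?_⟩
      · intro q hq
        obtain ⟨n, hn, hqn⟩ := mem_iUnion₂.1 (ht hq)
        exact mem_iUnion₂.2 ⟨n.1, Finset.mem_image_of_mem _ hn, hqn⟩
      · intro n hn
        obtain ⟨m, _, rfl⟩ := Finset.mem_image.1 hn
        exact m.2
    · rintro ⟨⟨F, hF⟩, hy⟩ ⟨⟨z, q⟩, hq, rfl⟩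
      obtain ⟨n, hn, hqn⟩ := mem_iUnion₂.1 (hF (mem_univ q))
      exact disjoint_left.1 (hD2 n) ⟨(z, q), ⟨hq, hqn⟩, rfl⟩ (hy n hn)
  rw [← MeasurableSet.compl_iff, hkey]
  exact MeasurableSet.iUnion fun F => F.1.measurableSet_biInter fun n _ => hD3 n

/-- A Borel map between Polish spaces with compact fibers maps closed sets to
Borel sets. -/
theorem borel_image_of_closed_of_compact_fibers
    {S S' : Type} [TopologicalSpace S] [PolishSpace S]
    [MeasurableSpace S] [BorelSpace S]
    [TopologicalSpace S'] [PolishSpace S']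
    [MeasurableSpace S'] [BorelSpace S']
    (f : S → S') (hf : Measurable f)
    (hfib : ∀ y : S', IsCompact (f ⁻¹' {y})) :
    ∀ A : Set S, IsClosed A → MeasurableSet (f '' A) := by
  intro A hA
  obtain ⟨e, he⟩ : ∃ e : S → ℕ → unitInterval, IsEmbedding e := by
    let := TopologicalSpace.metrizableSpaceMetric S
    exact Metric.PiNatEmbed.exists_embedding_to_hilbert_cube
  have hg : Measurable (fun x => (f x, e x)) := hf.prodMk he.continuous.measurable
  have hB : MeasurableSet ((fun x => (f x, e x)) '' A) :=
    hA.measurableSet.image_of_measurable_injOn hg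
      (fun x _ y _ hxy => he.injective (congrArg Prod.snd hxy))
  have := measurable_proj _ hB (by
    intro y
    have : {q | (y, q) ∈ (fun x => (f x, e x)) '' A} = e '' (f ⁻¹' {y} ∩ A) := by
      ext q
      simp only [mem_ofPred_eq, mem_image, Prod.mk.injEq, mem_inter_iff, mem_preimage,
        mem_singleton_iff]
      constructor
      · rintro ⟨x, hx, h1, h2⟩
        exact ⟨x, ⟨h1, hx⟩, h2⟩
      · rintro ⟨x, ⟨h1, hx⟩, h2⟩
        exact ⟨x, hx, h1, h2⟩
    rw [this]
    exact (((hfib y).inter_right hA).image he.continuous).isClosed)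
  rwa [image_image] at this
end

section
/- Let S be a measurable space, let P and Q be probability kernels from S to ℝ^d with finite first moments, and let c : ℝ^d × ℝ^d → ℝ ∪ {+∞} be lower semicontinuous and satisfy c(x, y) ≥ −C(1 + ‖x‖ + ‖y‖) for all x, y and some finite constant C. Then there exists a probability kernel γ* from S to ℝ^d × ℝ^d such that for every θ ∈ S, γ*_θ is a coupling of P_θ and Q_θ and ∫ c dγ*_θ ≤ ∫ c dμ for every coupling μ of P_θ and Q_θ (the integrals, taken in (−∞, +∞], are well defined by the lower bound on c and the finite first moments). -/
open MeasureTheory ProbabilityTheory Filter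

noncomputable section

/-- Auxiliary conversion of an extended real to `ℝ≥0∞` (negative values go to 0). -/
def erealToENNReal (x : EReal) : ENNReal :=
  if x = ⊤ then ⊤ else ENNReal.ofReal x.toReal

/-- The transport cost ∫ c dμ, with values in `EReal`.  Under the standing lower
bound `c(x,y) ≥ −C(1 + ‖x‖ + ‖y‖)` and finite first moments of the marginals, the
shifted integrand is nonnegative and this quantity is exactly the well-defined
integral of `c` with values in `(−∞, +∞]`. -/
def ECost {d : ℕ} (c : Euc d × Euc d → EReal) (C : ℝ)
    (μ : Measure (Euc d × Euc d)) : EReal :=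
  ((∫⁻ p, erealToENNReal (c p + ((C * (1 + ‖p.1‖ + ‖p.2‖) : ℝ) : EReal)) ∂μ : ENNReal) : EReal)
    - ((∫ p, C * (1 + ‖p.1‖ + ‖p.2‖) ∂μ : ℝ) : EReal)

open scoped Topology ENNReal NNReal

/-- A closed-valued nonempty multifunction into a topological space, such that the hitting set of
every closed set is measurable. -/
structure ClosedMeas {S Z : Type*} [MeasurableSpace S] [TopologicalSpace Z]
    (K : S → Set Z) : Prop where
  closed : ∀ θ, IsClosed (K θ)
  nonempty : ∀ θ, (K θ).Nonempty
  meas : ∀ F : Set Z, IsClosed F → MeasurableSet {θ | (K θ ∩ F).Nonempty}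

lemma measurable_iInf_of_hit {S Z : Type*} [MeasurableSpace S] [TopologicalSpace Z]
    [CompactSpace Z] {K : S → Set Z} (hK : ClosedMeas K) {F : Set Z} (hF : IsClosed F)
    {h : Z → ℝ≥0∞} (hh : LowerSemicontinuous h) :
    Measurable (fun θ => ⨅ z ∈ K θ ∩ F, h z) := by
  refine measurable_of_Iic fun a => ?_
  by_cases ha : a = ⊤
  · subst ha
    simp
  have : (fun θ => ⨅ z ∈ K θ ∩ F, h z) ⁻¹' Set.Iic a =
      {θ | (K θ ∩ (F ∩ h ⁻¹' Set.Iic a)).Nonempty} := by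
    ext θ
    simp only [Set.mem_preimage, Set.mem_Iic, Set.mem_ofPred_eq]
    constructor
    · intro hle
      have hne : (K θ ∩ F).Nonempty := by
        by_contra hemp
        rw [Set.not_nonempty_iff_eq_empty] at hemp
        rw [hemp] at hle
        simp at hle
        exact ha hle
      obtain ⟨z, hz, hmin⟩ := LowerSemicontinuousOn.exists_isMinOn hne
        ((hK.closed θ).inter hF).isCompact (hh.lowerSemicontinuousOn _)
      refine ⟨z, hz.1, hz.2, ?_⟩
      exact le_trans (le_iInf₂ fun w hw => hmin hw) hle
    · rintro ⟨z, hz1, hz2, hz3⟩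
      exact (iInf₂_le z ⟨hz1, hz2⟩).trans hz3
  rw [this]
  exact hK.meas _ (hF.inter (hh.isClosed_preimage a))

lemma ClosedMeas.argmin {S Z : Type*} [MeasurableSpace S] [TopologicalSpace Z]
    [CompactSpace Z] {K : S → Set Z} (hK : ClosedMeas K)
    {h : Z → ℝ≥0∞} (hh : LowerSemicontinuous h) :
    ClosedMeas (fun θ => {z | z ∈ K θ ∧ h z ≤ ⨅ w ∈ K θ, h w}) where
  closed θ := (hK.closed θ).inter (hh.isClosed_preimage _)
  nonempty θ := by
    obtain ⟨z, hz, hmin⟩ := LowerSemicontinuousOn.exists_isMinOn (hK.nonempty θ)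
        (hK.closed θ).isCompact (hh.lowerSemicontinuousOn _)
    exact ⟨z, hz, le_iInf₂ fun w hw => hmin hw⟩
  meas F hF := by
    have h1 := measurable_iInf_of_hit hK hF hh
    have h2 := measurable_iInf_of_hit hK isClosed_univ hh
    simp only [Set.inter_univ] at h2
    have : {θ | ({z | z ∈ K θ ∧ h z ≤ ⨅ w ∈ K θ, h w} ∩ F).Nonempty} =
        {θ | (K θ ∩ F).Nonempty} ∩
          {θ | (⨅ z ∈ K θ ∩ F, h z) ≤ ⨅ z ∈ K θ, h z} := by
      ext θ
      constructor
      · rintro ⟨z, ⟨hz1, hz2⟩, hz3⟩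
        exact ⟨⟨z, hz1, hz3⟩, le_trans (iInf₂_le (f := fun z _ => h z) z (show z ∈ K θ ∩ F from ⟨hz1, hz3⟩)) hz2⟩
      · rintro ⟨hne, hle⟩
        have hle' : (⨅ z ∈ K θ ∩ F, h z) ≤ ⨅ z ∈ K θ, h z := hle
        obtain ⟨z, hz, hmin⟩ := LowerSemicontinuousOn.exists_isMinOn hne
          ((hK.closed θ).inter hF).isCompact (hh.lowerSemicontinuousOn _)
        have hz' : h z ≤ ⨅ w ∈ K θ ∩ F, h w := le_iInf₂ fun w hw => hmin hw
        exact ⟨z, ⟨hz.1, hz'.trans hle'⟩, hz.2⟩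
    rw [this]
    exact (hK.meas F hF).inter (measurableSet_le h1 h2)

/-- Iterated argmin. -/
def lexArgmin {S Z : Type*} (K : S → Set Z) (h : ℕ → Z → ℝ≥0∞) : ℕ → S → Set Z
  | 0 => K
  | n + 1 => fun θ => {z | z ∈ lexArgmin K h n θ ∧ h n z ≤ ⨅ w ∈ lexArgmin K h n θ, h n w}

lemma ClosedMeas.exists_selection {S Z : Type*} [MeasurableSpace S] [TopologicalSpace Z]
    [CompactSpace Z] {K : S → Set Z} (hK : ClosedMeas K)
    {h : ℕ → Z → ℝ≥0∞} (hh : ∀ n, LowerSemicontinuous (h n)) :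
    ∃ z : S → Z, (∀ θ, z θ ∈ K θ) ∧ (∀ θ, ∀ w ∈ K θ, h 0 (z θ) ≤ h 0 w) ∧
      ∀ n, Measurable (fun θ => h n (z θ)) := by
  have hL : ∀ n, ClosedMeas (lexArgmin K h n) := by
    intro n
    induction n with
    | zero => exact hK
    | succ n ih => exact ih.argmin (hh n)
  have hne : ∀ θ, (⋂ n, lexArgmin K h n θ).Nonempty := fun θ =>
    IsCompact.nonempty_iInter_of_sequence_nonempty_isCompact_isClosed
      (fun n => lexArgmin K h n θ) (fun n z hz => hz.1) (fun n => (hL n).nonempty θ)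
      ((hL 0).closed θ).isCompact (fun n => (hL n).closed θ)
  choose z hz using hne
  simp only [Set.mem_iInter] at hz
  refine ⟨z, fun θ => hz θ 0, fun θ w hw => (hz θ 1).2.trans (iInf₂_le w hw), fun n => ?_⟩
  have : (fun θ => h n (z θ)) = fun θ => ⨅ w ∈ lexArgmin K h n θ, h n w := by
    ext θ
    exact le_antisymm (hz θ (n + 1)).2 (iInf₂_le _ (hz θ n))
  rw [this]
  simpa using measurable_iInf_of_hit (hL n) isClosed_univ (hh n)

lemma exists_open_piSystem (X : Type*) [TopologicalSpace X] [SecondCountableTopology X]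
    [MeasurableSpace X] [BorelSpace X] :
    ∃ U : ℕ → Set X, (∀ n, IsOpen (U n)) ∧ IsPiSystem (Set.range U) ∧
      ‹MeasurableSpace X› = MeasurableSpace.generateFrom (Set.range U) := by
  classical
  let B := TopologicalSpace.countableBasis X
  have hB := TopologicalSpace.isBasis_countableBasis X
  have : Countable B := (TopologicalSpace.countable_countableBasis X).to_subtype
  obtain ⟨e, he⟩ := exists_surjective_nat (Finset B)
  refine ⟨fun n => ⋂ i ∈ e n, (i : Set X), fun n => ?_, ?_, ?_⟩
  · exact isOpen_biInter_finset fun i _ => hB.isOpen i.2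
  · rintro _ ⟨n, rfl⟩ _ ⟨m, rfl⟩ _
    obtain ⟨k, hk⟩ := he (e n ∪ e m)
    refine ⟨k, ?_⟩
    simp only [hk]
    ext x
    simp only [Set.mem_iInter, Finset.mem_union, Set.mem_inter_iff]
    exact ⟨fun h => ⟨fun i hi => h i (Or.inl hi), fun i hi => h i (Or.inr hi)⟩,
      fun h i hi => hi.elim (h.1 i) (h.2 i)⟩
  · apply le_antisymm
    · rw [‹BorelSpace X›.measurable_eq, hB.borel_eq_generateFrom]
      refine MeasurableSpace.generateFrom_mono fun s hs => ?_
      obtain ⟨k, hk⟩ := he {⟨s, hs⟩}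
      exact ⟨k, by simp [hk]⟩
    · refine MeasurableSpace.generateFrom_le ?_
      rintro _ ⟨n, rfl⟩
      exact (isOpen_biInter_finset fun i _ => hB.isOpen i.2).measurableSet

lemma lintegral_layer {X : Type*} [MeasurableSpace X] (μ : Measure X) [SFinite μ]
    {f : X → ℝ≥0∞} (hf : Measurable f) :
    ∫⁻ x, f x ∂μ = ∫⁻ t in Set.Ioi (0 : ℝ), μ {x | ENNReal.ofReal t < f x} := by
  have hm : MeasurableSet {p : X × ℝ | ENNReal.ofReal p.2 < f p.1} :=
    measurableSet_lt (by fun_prop) (by fun_prop)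
  have key : ∀ a : ℝ≥0∞, ∫⁻ t in Set.Ioi (0 : ℝ),
      Set.indicator {t : ℝ | ENNReal.ofReal t < a} (fun _ => 1) t = a := by
    intro a
    have hma : MeasurableSet {t : ℝ | ENNReal.ofReal t < a} :=
      measurableSet_lt (by fun_prop) (by fun_prop)
    rw [lintegral_indicator hma, lintegral_const, one_mul, Measure.restrict_apply .univ,
      Set.univ_inter, Measure.restrict_apply hma]
    by_cases ha : a = ⊤
    · subst ha
      have : {t : ℝ | ENNReal.ofReal t < ⊤} = Set.univ := by ext; simp
      rw [this, Set.univ_inter, Real.volume_Ioi]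
    · have : {t : ℝ | ENNReal.ofReal t < a} ∩ Set.Ioi 0 = Set.Ioo 0 a.toReal := by
        ext t
        simp only [Set.mem_inter_iff, Set.mem_ofPred_eq, Set.mem_Ioi, Set.mem_Ioo]
        constructor
        · rintro ⟨h1, h2⟩
          exact ⟨h2, (ENNReal.ofReal_lt_iff_lt_toReal h2.le ha).1 h1⟩
        · rintro ⟨h1, h2⟩
          exact ⟨(ENNReal.ofReal_lt_iff_lt_toReal h1.le ha).2 h2, h1⟩
      rw [this, Real.volume_Ioo, sub_zero, ENNReal.ofReal_toReal ha]
  calc ∫⁻ x, f x ∂μ = ∫⁻ x, (∫⁻ t in Set.Ioi (0 : ℝ),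
        Set.indicator {p : X × ℝ | ENNReal.ofReal p.2 < f p.1} (fun _ => 1) (x, t)) ∂μ := by
        refine lintegral_congr fun x => ?_
        exact (key (f x)).symm
    _ = ∫⁻ t in Set.Ioi (0 : ℝ), ∫⁻ x,
        Set.indicator {p : X × ℝ | ENNReal.ofReal p.2 < f p.1} (fun _ => 1) (x, t) ∂μ := by
        refine lintegral_lintegral_swap ?_
        exact (measurable_const.indicator hm).aemeasurable
    _ = _ := by
        refine lintegral_congr fun t => ?_
        have hmt : MeasurableSet {x | ENNReal.ofReal t < f x} :=
          measurableSet_lt (by fun_prop) hf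
        have : (fun x => Set.indicator {p : X × ℝ | ENNReal.ofReal p.2 < f p.1}
            (fun _ => (1 : ℝ≥0∞)) (x, t)) = Set.indicator {x | ENNReal.ofReal t < f x} 1 := by
          rfl
        rw [this, lintegral_indicator_one hmt]

lemma lowerSemicontinuous_lintegral {X : Type*} [MetricSpace X] [SecondCountableTopology X]
    [MeasurableSpace X] [BorelSpace X] {f : X → ℝ≥0∞} (hf : LowerSemicontinuous f) :
    LowerSemicontinuous (fun π : ProbabilityMeasure X => ∫⁻ x, f x ∂(π : Measure X)) := by
  rw [lowerSemicontinuous_iff_le_liminf]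
  intro π
  simp_rw [lintegral_layer _ hf.measurable]
  refine le_trans ?_ (lintegral_liminf_le fun π' => ?_)
  · refine lintegral_mono fun t => ?_
    exact ProbabilityMeasure.le_liminf_measure_open_of_tendsto (μs := fun π' => π') tendsto_id
      (hf.isOpen_preimage _)
  · refine Antitone.measurable fun s t hst => measure_mono fun x hx => ?_
    exact lt_of_le_of_lt (ENNReal.ofReal_le_ofReal hst) hx

/-- The compact case. -/
lemma compact_case {S Y : Type*} [MeasurableSpace S] [MetricSpace Y] [CompactSpace Y]
    [MeasurableSpace Y] [BorelSpace Y] (P Q : Kernel S Y) [IsMarkovKernel P] [IsMarkovKernel Q]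
    {f : Y × Y → ℝ≥0∞} (hf : LowerSemicontinuous f) :
    ∃ γ : Kernel S (Y × Y), IsMarkovKernel γ ∧ ∀ θ,
      (γ θ).map Prod.fst = P θ ∧ (γ θ).map Prod.snd = Q θ ∧
      ∀ μ : Measure (Y × Y), IsProbabilityMeasure μ → μ.map Prod.fst = P θ →
        μ.map Prod.snd = Q θ → ∫⁻ p, f p ∂(γ θ) ≤ ∫⁻ p, f p ∂μ := by
  obtain ⟨U, hUo, hUpi, hUgen⟩ := exists_open_piSystem Y
  obtain ⟨V, hVo, hVpi, hVgen⟩ := exists_open_piSystem (Y × Y)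
  let g : ℕ × ℕ → BoundedContinuousFunction Y ℝ≥0 :=
    fun i => (hUo i.1).isClosed_compl.apprSeq i.2
  -- the test functions separate probability measures
  have hsep : ∀ μ ν : Measure Y, IsProbabilityMeasure μ → IsProbabilityMeasure ν →
      (∀ i, ∫⁻ y, g i y ∂μ = ∫⁻ y, g i y ∂ν) → μ = ν := by
    intro μ ν _ _ h
    refine ext_of_generate_finite _ hUgen hUpi ?_ (by simp)
    rintro _ ⟨n, rfl⟩
    have h1 := HasOuterApproxClosed.tendsto_lintegral_apprSeq (hUo n).isClosed_compl μ
    have h2 := HasOuterApproxClosed.tendsto_lintegral_apprSeq (hUo n).isClosed_compl ν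
    have h3 : μ (U n)ᶜ = ν (U n)ᶜ := by
      refine tendsto_nhds_unique h1 ?_
      refine h2.congr fun k => (h (n, k)).symm
    rw [← compl_compl (U n), prob_compl_eq_one_sub (hUo n).isClosed_compl.measurableSet,
      prob_compl_eq_one_sub (hUo n).isClosed_compl.measurableSet, h3]
  let Φ : ProbabilityMeasure (Y × Y) → (ℕ × ℕ → ℝ≥0∞) × (ℕ × ℕ → ℝ≥0∞) := fun π =>
    (fun i => ∫⁻ p, g i p.1 ∂(π : Measure (Y × Y)), fun i => ∫⁻ p, g i p.2 ∂(π : Measure (Y × Y)))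
  have hΦ : Continuous Φ := by
    refine Continuous.prodMk (continuous_pi fun i => ?_) (continuous_pi fun i => ?_)
    · exact ProbabilityMeasure.continuous_lintegral_boundedContinuousFunction
        ((g i).compContinuous ⟨Prod.fst, continuous_fst⟩)
    · exact ProbabilityMeasure.continuous_lintegral_boundedContinuousFunction
        ((g i).compContinuous ⟨Prod.snd, continuous_snd⟩)
  have hgm : ∀ i, Measurable (fun y => (g i y : ℝ≥0∞)) := fun i =>
    (ENNReal.continuous_coe.comp (g i).continuous).measurable
  let Ψ : S → (ℕ × ℕ → ℝ≥0∞) × (ℕ × ℕ → ℝ≥0∞) := fun θ =>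
    (fun i => ∫⁻ y, g i y ∂(P θ), fun i => ∫⁻ y, g i y ∂(Q θ))
  have hΨ : Measurable Ψ := by
    refine Measurable.prodMk (measurable_pi_lambda _ fun i => ?_)
      (measurable_pi_lambda _ fun i => ?_)
    · exact (hgm i).lintegral_kernel
    · exact (hgm i).lintegral_kernel
  have hcoup : ∀ (π : ProbabilityMeasure (Y × Y)) θ, Φ π = Ψ θ ↔
      (π : Measure (Y × Y)).map Prod.fst = P θ ∧ (π : Measure (Y × Y)).map Prod.snd = Q θ := by
    intro π θ
    have e1 : ∀ i, ∫⁻ p, g i p.1 ∂(π : Measure (Y × Y)) =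
        ∫⁻ y, g i y ∂((π : Measure (Y × Y)).map Prod.fst) := fun i =>
      (lintegral_map (hgm i) measurable_fst).symm
    have e2 : ∀ i, ∫⁻ p, g i p.2 ∂(π : Measure (Y × Y)) =
        ∫⁻ y, g i y ∂((π : Measure (Y × Y)).map Prod.snd) := fun i =>
      (lintegral_map (hgm i) measurable_snd).symm
    constructor
    · intro h
      have h1 := congrArg Prod.fst h
      have h2 := congrArg Prod.snd h
      constructor
      · refine hsep _ _ (Measure.isProbabilityMeasure_map (by fun_prop)) inferInstance fun i => ?_
        rw [← e1]
        exact congrFun h1 i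
      · refine hsep _ _ (Measure.isProbabilityMeasure_map (by fun_prop)) inferInstance fun i => ?_
        rw [← e2]
        exact congrFun h2 i
    · rintro ⟨h1, h2⟩
      simp only [Φ, Ψ, e1, e2, h1, h2]
  have hK : ClosedMeas (fun θ => Φ ⁻¹' {Ψ θ}) := by
    refine ⟨fun θ => isClosed_singleton.preimage hΦ, fun θ => ?_, fun F hF => ?_⟩
    · refine ⟨⟨(P θ).prod (Q θ), inferInstance⟩, ?_⟩
      exact (hcoup _ θ).2 ⟨by simp [← Measure.fst.eq_1], by simp [← Measure.snd.eq_1]⟩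
    · have : {θ | (Φ ⁻¹' {Ψ θ} ∩ F).Nonempty} = Ψ ⁻¹' (Φ '' F) := by
        ext θ
        constructor
        · rintro ⟨π, h1, h2⟩
          exact ⟨π, h2, h1⟩
        · rintro ⟨π, h1, h2⟩
          exact ⟨π, h2, h1⟩
      rw [this]
      exact hΨ (hF.isCompact.image hΦ).isClosed.measurableSet
  let h : ℕ → ProbabilityMeasure (Y × Y) → ℝ≥0∞ := fun n => match n with
    | 0 => fun π => ∫⁻ p, f p ∂(π : Measure (Y × Y))
    | n + 1 => fun π => ∫⁻ p, (V n).indicator (fun _ => 1) p ∂(π : Measure (Y × Y))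
  have hh : ∀ n, LowerSemicontinuous (h n) := by
    intro n
    cases n with
    | zero => exact lowerSemicontinuous_lintegral hf
    | succ n =>
      exact lowerSemicontinuous_lintegral ((hVo n).lowerSemicontinuous_indicator zero_le_one)
  obtain ⟨z, hz1, hz2, hz3⟩ := hK.exists_selection hh
  have hmeas : Measurable (fun θ => (z θ : Measure (Y × Y))) := by
    refine Measurable.measure_of_isPiSystem_of_isProbabilityMeasure hVgen hVpi ?_
    rintro _ ⟨n, rfl⟩
    have := hz3 (n + 1)
    have e : (fun θ => (z θ : Measure (Y × Y)) (V n)) = fun θ => h (n + 1) (z θ) := by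
      ext θ
      exact (lintegral_indicator_one (hVo n).measurableSet).symm
    rw [e]
    exact this
  refine ⟨⟨fun θ => (z θ : Measure (Y × Y)), hmeas⟩, ⟨fun θ => (z θ).2⟩, fun θ => ?_⟩
  obtain ⟨c1, c2⟩ := (hcoup _ θ).1 (hz1 θ)
  refine ⟨c1, c2, fun μ hμ m1 m2 => ?_⟩
  exact hz2 θ ⟨μ, hμ⟩ ((hcoup ⟨μ, hμ⟩ θ).2 ⟨m1, m2⟩)

/-- Transfer along an open embedding into a compact space. -/
lemma transfer_case {S E Y : Type*} [MeasurableSpace S] [TopologicalSpace E] [MeasurableSpace E]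
    [BorelSpace E] [SecondCountableTopology E] [MetricSpace Y] [CompactSpace Y]
    [MeasurableSpace Y] [BorelSpace Y] {ι : E → Y} (hι : Topology.IsOpenEmbedding ι)
    (P Q : Kernel S E) [IsMarkovKernel P] [IsMarkovKernel Q]
    {f : E × E → ℝ≥0∞} (hf : LowerSemicontinuous f) :
    ∃ γ : Kernel S (E × E), IsMarkovKernel γ ∧ ∀ θ,
      (γ θ).map Prod.fst = P θ ∧ (γ θ).map Prod.snd = Q θ ∧
      ∀ μ : Measure (E × E), IsProbabilityMeasure μ → μ.map Prod.fst = P θ →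
        μ.map Prod.snd = Q θ → ∫⁻ p, f p ∂(γ θ) ≤ ∫⁻ p, f p ∂μ := by
  let J : E × E → Y × Y := Prod.map ι ι
  have hJ : Topology.IsOpenEmbedding J := hι.prodMap hι
  have hιm : MeasurableEmbedding ι := hι.measurableEmbedding
  have hJm : MeasurableEmbedding J := hJ.measurableEmbedding
  let F : Y × Y → ℝ≥0∞ := Function.extend J f 0
  have hFJ : ∀ p, F (J p) = f p := fun p => hJ.injective.extend_apply _ _ _
  have hF : LowerSemicontinuous F := by
    intro x y hy
    by_cases hx : x ∈ Set.range J
    · obtain ⟨p, rfl⟩ := hx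
      rw [hFJ] at hy
      rw [← hJ.map_nhds_eq, Filter.eventually_map]
      filter_upwards [hf p y hy] with q hq
      rwa [hFJ]
    · have : F x = 0 := Function.extend_apply' _ _ _ hx
      rw [this] at hy
      exact absurd hy not_lt_zero
  have iP : IsMarkovKernel (P.map ι) := Kernel.IsMarkovKernel.map P hιm.measurable
  have iQ : IsMarkovKernel (Q.map ι) := Kernel.IsMarkovKernel.map Q hιm.measurable
  obtain ⟨γ, hγ, H⟩ := compact_case (P.map ι) (Q.map ι) hF
  simp only [Kernel.map_apply _ hιm.measurable] at H
  have hrange : ∀ θ, ∀ᵐ p ∂(γ θ), p ∈ Set.range J := by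
    intro θ
    have key : ∀ (R : Kernel S E), ∀ᵐ y ∂((R θ).map ι), y ∈ Set.range ι := by
      intro R
      refine (ae_map_iff hιm.measurable.aemeasurable hιm.measurableSet_range).2 ?_
      exact Filter.Eventually.of_forall fun x => ⟨x, rfl⟩
    have k1 := key P
    have k2 := key Q
    rw [← (H θ).1] at k1
    rw [← (H θ).2.1] at k2
    filter_upwards [ae_of_ae_map measurable_fst.aemeasurable k1,
      ae_of_ae_map measurable_snd.aemeasurable k2] with p h1 h2
    obtain ⟨a, ha⟩ := h1
    obtain ⟨b, hb⟩ := h2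
    exact ⟨(a, b), Prod.ext ha hb⟩
  have hmapJ : ∀ θ, (γ.comapRight hJm θ).map J = γ θ := by
    intro θ
    rw [Kernel.comapRight_apply, hJm.map_comap]
    exact Measure.restrict_eq_self_of_ae_mem (hrange θ)
  have hinj : ∀ μ ν : Measure E, μ.map ι = ν.map ι → μ = ν := by
    intro μ ν h
    rw [← hιm.comap_map μ, h, hιm.comap_map]
  have hfst : ∀ μ : Measure (E × E), (μ.map J).map Prod.fst = (μ.map Prod.fst).map ι := by
    intro μ
    rw [Measure.map_map measurable_fst hJm.measurable, Measure.map_map hιm.measurable measurable_fst]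
    rfl
  have hsnd : ∀ μ : Measure (E × E), (μ.map J).map Prod.snd = (μ.map Prod.snd).map ι := by
    intro μ
    rw [Measure.map_map measurable_snd hJm.measurable, Measure.map_map hιm.measurable measurable_snd]
    rfl
  have hint : ∀ μ : Measure (E × E), ∫⁻ p, f p ∂μ = ∫⁻ q, F q ∂(μ.map J) := by
    intro μ
    rw [hJm.lintegral_map]
    simp only [hFJ]
  refine ⟨γ.comapRight hJm, ?_, fun θ => ⟨?_, ?_, ?_⟩⟩
  · refine Kernel.IsMarkovKernel.comapRight γ hJm fun θ => ?_
    exact (prob_compl_eq_zero_iff hJm.measurableSet_range).1 (hrange θ)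
  · apply hinj
    rw [← hfst, hmapJ, (H θ).1]
  · apply hinj
    rw [← hsnd, hmapJ, (H θ).2.1]
  · intro μ hμ m1 m2
    rw [hint, hint, hmapJ]
    refine (H θ).2.2 _ (Measure.isProbabilityMeasure_map hJm.measurable.aemeasurable) ?_ ?_
    · rw [hfst, m1]
    · rw [hsnd, m2]

lemma exists_openEmbedding_ball (d : ℕ) :
    ∃ ι : Euc d → Metric.closedBall (0 : Euc d) 1, Topology.IsOpenEmbedding ι := by
  refine ⟨fun x => ⟨Homeomorph.unitBall x, Metric.ball_subset_closedBall
    (Homeomorph.unitBall x).2⟩, ?_⟩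
  have h : Topology.IsOpenEmbedding (fun x : Euc d => (Homeomorph.unitBall x : Euc d)) :=
    Metric.isOpen_ball.isOpenEmbedding_subtypeVal.comp Homeomorph.unitBall.isOpenEmbedding
  have hcont : Continuous (fun x : Euc d => (⟨Homeomorph.unitBall x,
      Metric.ball_subset_closedBall (Homeomorph.unitBall x).2⟩ : Metric.closedBall (0 : Euc d) 1)) :=
    h.continuous.subtype_mk _
  refine ⟨Topology.IsEmbedding.of_comp hcont continuous_subtype_val h.isEmbedding, ?_⟩
  convert h.isOpen_range.preimage
    (continuous_subtype_val (p := fun y => y ∈ Metric.closedBall (0 : Euc d) 1)) using 1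
  ext y
  simp [Subtype.ext_iff]

lemma lsc_shift {d : ℕ} {c : Euc d × Euc d → EReal} (hc : LowerSemicontinuous c) (C : ℝ) :
    LowerSemicontinuous (fun p : Euc d × Euc d =>
      erealToENNReal (c p + ((C * (1 + ‖p.1‖ + ‖p.2‖) : ℝ) : EReal))) := by
  have h1 : Continuous (fun p : Euc d × Euc d => ((C * (1 + ‖p.1‖ + ‖p.2‖) : ℝ) : EReal)) :=
    continuous_coe_real_ereal.comp (by fun_prop)
  have h2 : LowerSemicontinuous (fun p : Euc d × Euc d =>
      c p + ((C * (1 + ‖p.1‖ + ‖p.2‖) : ℝ) : EReal)) :=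
    hc.add' h1.lowerSemicontinuous fun p =>
      EReal.continuousAt_add (Or.inr (EReal.coe_ne_bot _)) (Or.inr (EReal.coe_ne_top _))
  exact EReal.continuous_toENNReal.comp_lowerSemicontinuous h2
    (fun _ _ h => EReal.toENNReal_le_toENNReal h)

lemma integral_shift {d : ℕ} (C : ℝ) {μ ν : Measure (Euc d)} (hμ : FiniteFirstMoment μ)
    (hν : FiniteFirstMoment ν) {lam : Measure (Euc d × Euc d)} [IsProbabilityMeasure lam]
    (h : IsCoupling lam μ ν) :
    ∫ p, C * (1 + ‖p.1‖ + ‖p.2‖) ∂lam = C * (1 + ∫ x, ‖x‖ ∂μ + ∫ y, ‖y‖ ∂ν) := by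
  obtain ⟨rfl, rfl⟩ := h
  have i1 : Integrable (fun p : Euc d × Euc d => ‖p.1‖) lam :=
    (Integrable.comp_measurable hμ measurable_fst).norm
  have i2 : Integrable (fun p : Euc d × Euc d => ‖p.2‖) lam :=
    (Integrable.comp_measurable hν measurable_snd).norm
  have i0 : Integrable (fun p : Euc d × Euc d => 1 + ‖p.1‖) lam := (integrable_const 1).add i1
  rw [integral_const_mul, integral_add i0 i2, integral_add (integrable_const 1) i1,
    integral_map measurable_fst.aemeasurable (by fun_prop),
    integral_map measurable_snd.aemeasurable (by fun_prop)]
  simp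

/-- Measurable selection of optimal transport plans: for kernels P, Q with finite
first moments and a lower semicontinuous cost bounded below by −C(1+‖x‖+‖y‖),
there is a kernel of optimal couplings. -/
theorem measurable_optimal_transport
    (d : ℕ) (hd : 1 ≤ d) {S : Type} [MeasurableSpace S]
    (P Q : Kernel S (Euc d)) [IsMarkovKernel P] [IsMarkovKernel Q]
    (hP : ∀ θ, FiniteFirstMoment (P θ)) (hQ : ∀ θ, FiniteFirstMoment (Q θ))
    (c : Euc d × Euc d → EReal) (hc : LowerSemicontinuous c)
    (C : ℝ) (hbound : ∀ p : Euc d × Euc d, ((-(C * (1 + ‖p.1‖ + ‖p.2‖)) : ℝ) : EReal) ≤ c p) :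
    ∃ γ : Kernel S (Euc d × Euc d), IsMarkovKernel γ ∧
      ∀ θ, IsCoupling (γ θ) (P θ) (Q θ) ∧
        ∀ μ' : Measure (Euc d × Euc d), IsProbabilityMeasure μ' →
          IsCoupling μ' (P θ) (Q θ) → ECost c C (γ θ) ≤ ECost c C μ' := by
  obtain ⟨ι, hι⟩ := exists_openEmbedding_ball d
  haveI : CompactSpace (Metric.closedBall (0 : Euc d) 1) :=
    isCompact_iff_compactSpace.1 (isCompact_closedBall _ _)
  obtain ⟨γ, hγ, H⟩ := transfer_case hι P Q (lsc_shift hc C)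
  refine ⟨γ, hγ, fun θ => ?_⟩
  have hco : IsCoupling (γ θ) (P θ) (Q θ) := ⟨(H θ).1, (H θ).2.1⟩
  refine ⟨hco, fun μ' hμ' hco' => ?_⟩
  unfold ECost
  rw [integral_shift C (hP θ) (hQ θ) hco, integral_shift C (hP θ) (hQ θ) hco']
  refine EReal.sub_le_sub ?_ le_rfl
  exact EReal.coe_ennreal_le_coe_ennreal_iff.2 ((H θ).2.2 μ' hμ' hco'.1 hco'.2)
end
end
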